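/- arXiv:1707.08210 — 4 statements merged into one kernel-verified Lean document; each statement's English description precedes it below -/
import Mathlib

section
/- Let (α_k)_{k≥1} be the increasing enumeration of the moduli of the zeros of U₋ on the open ray arg z = π/3, and set ε_k = (√3·α_k/2)³. For every ε > 0 and λ ∈ ℂ, one has W(ε,λ) = 0 and ∂W/∂λ(ε,λ) = 0 if and only if λ = 1/√3 and ε = ε_k for some k ≥ 1; moreover at every such point the second derivative ∂²W/∂λ²(ε_k, 1/√3) is nonzero. In other words, the multiple eigenvalues of the model family T(ε) occur exactly at the parameter values ε_k, always at the knot point λ = 1/√3, and always with algebraic multiplicity exactly 2. -/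
open Complex MeasureTheory Real

noncomputable section

/-- `w` is an entire solution of the Airy equation `w'' = z·w`
with prescribed (real) values of `w` and `w'` at the origin. -/
def IsAiry (w : ℂ → ℂ) (w0 w0' : ℝ) : Prop :=
  Differentiable ℂ w ∧ Differentiable ℂ (deriv w) ∧
  (∀ z : ℂ, deriv (deriv w) z = z * w z) ∧
  w 0 = (w0 : ℂ) ∧ deriv w 0 = (w0' : ℂ)

/-- `Ai` is the standard Airy function of the first kind. -/
def IsAiryAi (Ai : ℂ → ℂ) : Prop :=
  IsAiry Ai ((3 : ℝ) ^ (-(2 : ℝ)/3) / Real.Gamma (2/3))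
    (-((3 : ℝ) ^ (-(1 : ℝ)/3)) / Real.Gamma (1/3))

/-- `Bi` is the standard Airy function of the second kind. -/
def IsAiryBi (Bi : ℂ → ℂ) : Prop :=
  IsAiry Bi ((3 : ℝ) ^ (-(1 : ℝ)/6) / Real.Gamma (2/3))
    ((3 : ℝ) ^ ((1 : ℝ)/6) / Real.Gamma (1/3))

/-- `U₋ = -√3·Ai + Bi`. -/
def Uminus (Ai Bi : ℂ → ℂ) : ℂ → ℂ := fun z => -(Real.sqrt 3 : ℂ) * Ai z + Bi z

/-- `U₊ = √3·Ai + Bi`. -/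
def Uplus (Ai Bi : ℂ → ℂ) : ℂ → ℂ := fun z => (Real.sqrt 3 : ℂ) * Ai z + Bi z

/-- The moduli of the zeros of `U` on the open ray `arg z = π/3`. -/
def rayZeroModuli (U : ℂ → ℂ) : Set ℝ :=
  {r : ℝ | 0 < r ∧ U ((r : ℂ) * Complex.exp ((π/3 : ℝ) * Complex.I)) = 0}

/-- The characteristic determinant `W(ε,λ)` of the model problem
`-ε⁻¹ y'' + i x y = λ y`, `y(-1) = y(1) = 0`. -/
def airyW (Ai Bi : ℂ → ℂ) (ε : ℝ) (lam : ℂ) : ℂ :=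
  Ai ((ε ^ ((1:ℝ)/3) : ℝ) * (lam + Complex.I)) * Bi ((ε ^ ((1:ℝ)/3) : ℝ) * (lam - Complex.I))
  - Ai ((ε ^ ((1:ℝ)/3) : ℝ) * (lam - Complex.I)) * Bi ((ε ^ ((1:ℝ)/3) : ℝ) * (lam + Complex.I))

/-!
Write `W(ε, λ) = Ai p Bi q - Ai q Bi p` with `p, q = ε^(1/3) (λ ± i)`, and `ζ = exp(iπ/3)`. Since
the Wronskian of `Ai` and `Bi` is a nonzero constant, `W = ∂W/∂λ = 0` forces
`(Ai, Bi) q = ± (Ai, Bi) p`. On a vertical line `|Ai|` is symmetric and strictly increasing away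
from the real axis, because the flux `Im (Ai' · conj Ai)` increases to `0` along horizontal lines
in the upper half plane; hence `q = conj p`, i.e. `λ` is real. A solution with two zeros on a
vertical line in the left half plane would contradict the monotonicity of its flux, so `0 ≤ λ`.

The direction of `p` is found from the product `Ai Bi = (U₊² - U₋²) / (4√3)`. Rotation by a cube
root of unity `c` preserves `U₊` and multiplies `U₋` by `c`, so on the ray `arg z = π/3` the product
is determined by real values of `U±` on the negative axis: there it lies in the closed fourth
quadrant, and on the positive axis it is nonnegative. By Phragmén–Lindelöf and the open mapping
theorem its imaginary part is negative in the sector `0 < arg z < π/3`. But `Ai Bi` is real at `p`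
because `(Ai, Bi) (conj p) = ± (Ai, Bi) p`, and the rotation also rules out `arg p > π/3`. So `p` is
on the ray, where the proportionality is equivalent to `U₋ p = 0`. At such a point `∂²W/∂λ²` is a
multiple of `Ai' p Bi' q - Ai' q Bi' p`; if this vanished, `Ai` and `Ai'` would both be real at `p`,
and the flux of `Ai` would vanish there.
-/

open Filter
open scoped Topology ComplexConjugate

/-! ### The Airy equation -/

/-- `u` solves the Airy equation `u'' = z u` on the whole of `𝕜`. The real case describes the
restrictions of the complex solutions to the real axis. -/
structure SolvesAiry {𝕜 : Type*} [NontriviallyNormedField 𝕜] (u : 𝕜 → 𝕜) : Prop where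
  hasDerivAt : ∀ z, HasDerivAt u (deriv u z) z
  hasDerivAt_deriv : ∀ z, HasDerivAt (deriv u) (z * u z) z

/-- The Wronskian `u v' - u' v`. -/
def wronskian {𝕜 : Type*} [NontriviallyNormedField 𝕜] (u v : 𝕜 → 𝕜) (z : 𝕜) : 𝕜 :=
  u z * deriv v z - deriv u z * v z

namespace SolvesAiry

section Field

variable {𝕜 : Type*} [NontriviallyNormedField 𝕜] {u v : 𝕜 → 𝕜}

lemma of_hasDerivAt {u' : 𝕜 → 𝕜} (h : ∀ z, HasDerivAt u (u' z) z)
    (h' : ∀ z, HasDerivAt u' (z * u z) z) : SolvesAiry u := by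
  obtain rfl : deriv u = u' := funext fun z => (h z).deriv
  exact ⟨h, h'⟩

lemma differentiable (hu : SolvesAiry u) : Differentiable 𝕜 u :=
  fun z => (hu.hasDerivAt z).differentiableAt

lemma continuous_deriv (hu : SolvesAiry u) : Continuous (deriv u) :=
  continuous_iff_continuousAt.2 fun z => (hu.hasDerivAt_deriv z).continuousAt

lemma deriv_linComb (hu : SolvesAiry u) (hv : SolvesAiry v) (a b z : 𝕜) :
    deriv (fun z => a * u z + b * v z) z = a * deriv u z + b * deriv v z :=
  (((hu.hasDerivAt z).const_mul a).add ((hv.hasDerivAt z).const_mul b)).deriv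

lemma linComb (hu : SolvesAiry u) (hv : SolvesAiry v) (a b : 𝕜) :
    SolvesAiry fun z => a * u z + b * v z :=
  of_hasDerivAt (fun z => ((hu.hasDerivAt z).const_mul a).add ((hv.hasDerivAt z).const_mul b))
    (fun z => (((hu.hasDerivAt_deriv z).const_mul a).add
      ((hv.hasDerivAt_deriv z).const_mul b)).congr_deriv (by ring))

lemma const_mul (hu : SolvesAiry u) (a : 𝕜) : SolvesAiry fun z => a * u z :=
  of_hasDerivAt (fun z => (hu.hasDerivAt z).const_mul a)
    (fun z => ((hu.hasDerivAt_deriv z).const_mul a).congr_deriv (by ring))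

lemma comp_const_mul (hu : SolvesAiry u) {c : 𝕜} (hc : c ^ 3 = 1) :
    SolvesAiry fun z => u (c * z) :=
  of_hasDerivAt (u' := fun z => c * deriv u (c * z))
    (fun z => ((hu.hasDerivAt (c * z)).comp z ((hasDerivAt_id z).const_mul c)).congr_deriv
      (by ring))
    (fun z => (((hu.hasDerivAt_deriv (c * z)).comp z
      ((hasDerivAt_id z).const_mul c)).const_mul c).congr_deriv
      (by linear_combination z * u (c * z) * hc))

end Field

lemma wronskian_eq {𝕜 : Type*} [RCLike 𝕜] {u v : 𝕜 → 𝕜} (hu : SolvesAiry u) (hv : SolvesAiry v)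
    (z w : 𝕜) : wronskian u v z = wronskian u v w := by
  have hd : ∀ z, HasDerivAt (wronskian u v) 0 z := fun z =>
    (((hu.hasDerivAt z).mul (hv.hasDerivAt_deriv z)).sub
      ((hu.hasDerivAt_deriv z).mul (hv.hasDerivAt z))).congr_deriv (by ring)
  exact is_const_of_deriv_eq_zero (fun z => (hd z).differentiableAt) (fun z => (hd z).deriv) z w

variable {u v : ℂ → ℂ}

lemma hasDerivAt_line (hu : SolvesAiry u) (p c : ℂ) (t : ℝ) :
    HasDerivAt (fun t : ℝ => u (p + t * c)) (c * deriv u (p + t * c)) t :=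
  HasDerivAt.congr_deriv (HasDerivAt.comp_ofReal (e := fun s : ℂ => u (p + s * c))
    ((hu.hasDerivAt _).comp (t : ℂ) (((hasDerivAt_id _).mul_const c).const_add p))) (by ring)

lemma hasDerivAt_deriv_line (hu : SolvesAiry u) (p c : ℂ) (t : ℝ) :
    HasDerivAt (fun t : ℝ => deriv u (p + t * c)) (c * ((p + t * c) * u (p + t * c))) t :=
  HasDerivAt.congr_deriv (HasDerivAt.comp_ofReal (e := fun s : ℂ => deriv u (p + s * c))
    ((hu.hasDerivAt_deriv _).comp (t : ℂ) (((hasDerivAt_id _).mul_const c).const_add p)))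
    (by ring)

lemma norm_add_le (hu : SolvesAiry u) (p c : ℂ) :
    ‖u (p + c)‖ ≤ ‖(u p, deriv u p)‖ * Real.exp (‖c‖ * (1 + ‖p‖ + ‖c‖)) := by
  have hd (t : ℝ) := (hu.hasDerivAt_line p c t).prodMk (hu.hasDerivAt_deriv_line p c t)
  have hbound (t : ℝ) (ht : t ∈ Set.Ico (0 : ℝ) 1) :
      ‖(c * deriv u (p + t * c), c * ((p + t * c) * u (p + t * c)))‖ ≤
        ‖c‖ * (1 + ‖p‖ + ‖c‖) * ‖(u (p + t * c), deriv u (p + t * c))‖ + 0 := by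
    have hline : ‖p + t * c‖ ≤ 1 + ‖p‖ + ‖c‖ := by
      have : ‖(t : ℂ) * c‖ ≤ 1 * ‖c‖ := by
        rw [norm_mul, Complex.norm_of_nonneg ht.1]; gcongr; exact ht.2.le
      linarith [_root_.norm_add_le p (t * c)]
    rw [add_zero, mul_assoc]
    refine max_le ?_ ?_ <;> simp only [norm_mul] <;> gcongr
    · exact (norm_snd_le (u (p + t * c), deriv u (p + t * c))).trans
        (le_mul_of_one_le_left (norm_nonneg _) (by linarith [norm_nonneg p, norm_nonneg c]))
    · exact norm_fst_le (u (p + t * c), deriv u (p + t * c))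
  have key := norm_le_gronwallBound_of_norm_deriv_right_le (δ := ‖(u p, deriv u p)‖)
    (fun t _ => (hd t).continuousAt.continuousWithinAt) (fun t _ => (hd t).hasDerivWithinAt)
    (by simp) hbound 1 (by simp)
  rw [gronwallBound_ε0, Complex.ofReal_one, one_mul, sub_zero, mul_one] at key
  exact (le_max_left _ _).trans key

lemma eq_zero (hu : SolvesAiry u) {p : ℂ} (h : u p = 0) (h' : deriv u p = 0) : u = 0 := by
  funext z
  simpa [h, h'] using hu.norm_add_le p (z - p)

lemma eq_of_init (hu : SolvesAiry u) (hv : SolvesAiry v) {p : ℂ} (h : u p = v p)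
    (h' : deriv u p = deriv v p) : u = v := by
  have hz := (hu.linComb hv 1 (-1)).eq_zero (p := p) (by simp [h])
    (by rw [hu.deriv_linComb hv, h']; ring)
  funext z
  simpa [add_neg_eq_zero] using congrFun hz z

lemma comp_const_mul_eq_mul (hu : SolvesAiry u) (h0 : u 0 = 0) {c : ℂ} (hc : c ^ 3 = 1) (z : ℂ) :
    u (c * z) = c * u z :=
  congrFun ((hu.comp_const_mul hc).eq_of_init (hu.const_mul c) (p := 0) (by simp [h0])
    (by rw [deriv_comp_mul_left, smul_eq_mul, deriv_const_mul_field, mul_zero])) z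

lemma comp_const_mul_eq_self (hu : SolvesAiry u) (h0 : deriv u 0 = 0) {c : ℂ} (hc : c ^ 3 = 1)
    (z : ℂ) : u (c * z) = u z :=
  congrFun ((hu.comp_const_mul hc).eq_of_init hu (p := 0) (by simp)
    (by rw [deriv_comp_mul_left, smul_eq_mul, mul_zero, h0, mul_zero])) z

lemma re_ofReal (hu : SolvesAiry u) : SolvesAiry fun x : ℝ => (u x).re :=
  of_hasDerivAt (fun x => (hu.hasDerivAt x).real_of_complex)
    (fun x => by simpa using (hu.hasDerivAt_deriv x).real_of_complex)

lemma deriv_re_ofReal (hu : SolvesAiry u) (x : ℝ) :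
    deriv (fun x : ℝ => (u x).re) x = (deriv u x).re :=
  (hu.hasDerivAt x).real_of_complex.deriv

end SolvesAiry

namespace IsAiry

variable {u v : ℂ → ℂ} {a b a' b' : ℝ}

lemma solvesAiry (hu : IsAiry u a b) : SolvesAiry u where
  hasDerivAt z := (hu.1 z).hasDerivAt
  hasDerivAt_deriv z := hu.2.2.1 z ▸ (hu.2.1 z).hasDerivAt

lemma apply_zero (hu : IsAiry u a b) : u 0 = a :=
  hu.2.2.2.1

lemma deriv_zero (hu : IsAiry u a b) : deriv u 0 = b :=
  hu.2.2.2.2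

lemma linComb (hu : IsAiry u a b) (hv : IsAiry v a' b') (s t : ℝ) :
    IsAiry (fun z => s * u z + t * v z) (s * a + t * a') (s * b + t * b') := by
  have h := hu.solvesAiry.linComb hv.solvesAiry s t
  refine ⟨h.differentiable, fun z => (h.hasDerivAt_deriv z).differentiableAt,
    fun z => (h.hasDerivAt_deriv z).deriv, ?_, ?_⟩
  · simp [hu.apply_zero, hv.apply_zero]
  · simp [hu.solvesAiry.deriv_linComb hv.solvesAiry, hu.deriv_zero, hv.deriv_zero]

lemma conj_comp_conj (hu : IsAiry u a b) : conj ∘ u ∘ conj = u := by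
  have hd (z : ℂ) : HasDerivAt (conj ∘ u ∘ conj) (conj (deriv u (conj z))) z := by
    simpa using (hu.solvesAiry.hasDerivAt (conj z)).conj_conj
  have hd' (z : ℂ) : HasDerivAt (conj ∘ deriv u ∘ conj) (z * (conj ∘ u ∘ conj) z) z := by
    simpa using (hu.solvesAiry.hasDerivAt_deriv (conj z)).conj_conj
  exact (SolvesAiry.of_hasDerivAt hd hd').eq_of_init hu.solvesAiry (p := 0)
    (by simp [hu.apply_zero]) (by simp [(hd 0).deriv, hu.deriv_zero])

lemma apply_conj (hu : IsAiry u a b) (z : ℂ) : u (conj z) = conj (u z) := by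
  simpa using congrArg conj (congrFun hu.conj_comp_conj z)

lemma deriv_apply_conj (hu : IsAiry u a b) (z : ℂ) : deriv u (conj z) = conj (deriv u z) := by
  have h := (hu.solvesAiry.hasDerivAt (conj z)).conj_conj
  rw [hu.conj_comp_conj, Complex.conj_conj] at h
  rw [h.deriv, Complex.conj_conj]

lemma ofReal_re_apply_ofReal (hu : IsAiry u a b) (x : ℝ) : ((u x).re : ℂ) = u x :=
  Complex.conj_eq_iff_re.1 (by rw [← hu.apply_conj, Complex.conj_ofReal])

end IsAiry

/-! ### Laplace moments of the cubic exponential -/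

/-- The Laplace moments `∫₀^∞ rⁿ exp(-r³/3 - z r) dr`. The moment of order `0` is `π Hi(-z)` for
Scorer's function `Hi`, a solution of the Airy equation with a constant inhomogeneity; this
disappears from a suitable difference of two rotated copies, which represents `Ai`. -/
def airyMoment (n : ℕ) (z : ℂ) : ℂ :=
  ∫ r in Set.Ioi (0 : ℝ), (r : ℂ) ^ n * Complex.exp (-(r : ℂ) ^ 3 / 3 - z * r)

lemma neg_cube_add_mul_le (b : ℝ) {r : ℝ} (hr : 0 < r) :
    -r ^ 3 / 3 + b * r ≤ (|b| + 1) * (3 * (|b| + 1) + 1) - r := by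
  have hb : b * r ≤ |b| * r := mul_le_mul_of_nonneg_right (le_abs_self b) hr.le
  have h0 := abs_nonneg b
  set M := |b| + 1
  suffices M * r ≤ M * (3 * M + 1) + r ^ 3 / 3 by nlinarith
  rcases le_total r (3 * M + 1) with h | h
  · have : 0 ≤ r ^ 3 := by positivity
    nlinarith [mul_le_mul_of_nonneg_left h (show 0 ≤ M by linarith)]
  · have h1 : 3 * M ≤ r ^ 2 := by nlinarith
    nlinarith [mul_le_mul_of_nonneg_right h1 hr.le]

lemma integrableOn_pow_mul_exp_neg_cube (n : ℕ) (b : ℝ) :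
    IntegrableOn (fun r : ℝ => r ^ n * Real.exp (-r ^ 3 / 3 + b * r)) (Set.Ioi 0) := by
  have h := (Real.GammaIntegral_convergent (s := n + 1) (by positivity)).const_mul
    (Real.exp ((|b| + 1) * (3 * (|b| + 1) + 1)))
  refine Integrable.mono' h (by fun_prop) ?_
  filter_upwards [ae_restrict_mem measurableSet_Ioi] with r hr
  rw [Set.mem_Ioi] at hr
  rw [Real.norm_of_nonneg (by positivity), add_sub_cancel_right, Real.rpow_natCast, ← mul_assoc,
    ← Real.exp_add, mul_comm]
  exact mul_le_mul_of_nonneg_right (Real.exp_le_exp.2 (neg_cube_add_mul_le b hr)) (by positivity)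

lemma norm_exp_neg_cube_sub (z : ℂ) (r : ℝ) :
    ‖Complex.exp (-(r : ℂ) ^ 3 / 3 - z * r)‖ = Real.exp (-r ^ 3 / 3 + -z.re * r) := by
  have h : -(r : ℂ) ^ 3 / 3 - z * r = ((-r ^ 3 / 3 : ℝ) : ℂ) - z * r := by push_cast; ring
  rw [Complex.norm_exp, h, Complex.sub_re, Complex.ofReal_re, Complex.re_mul_ofReal, neg_mul,
    sub_eq_add_neg]

lemma norm_airyMoment_integrand (n : ℕ) (z : ℂ) {r : ℝ} (hr : 0 < r) :
    ‖(r : ℂ) ^ n * Complex.exp (-(r : ℂ) ^ 3 / 3 - z * r)‖ =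
      r ^ n * Real.exp (-r ^ 3 / 3 + -z.re * r) := by
  rw [norm_mul, norm_pow, Complex.norm_of_nonneg hr.le, norm_exp_neg_cube_sub]

lemma integrableOn_airyMoment_integrand (n : ℕ) (z : ℂ) :
    IntegrableOn (fun r : ℝ => (r : ℂ) ^ n * Complex.exp (-(r : ℂ) ^ 3 / 3 - z * r))
      (Set.Ioi 0) := by
  refine Integrable.mono' (integrableOn_pow_mul_exp_neg_cube n (-z.re)) (by fun_prop) ?_
  filter_upwards [ae_restrict_mem measurableSet_Ioi] with r hr
  exact (norm_airyMoment_integrand n z hr).le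

lemma hasDerivAt_airyMoment (n : ℕ) (z : ℂ) :
    HasDerivAt (airyMoment n) (-airyMoment (n + 1) z) z := by
  rw [airyMoment, ← integral_neg]
  refine (hasDerivAt_integral_of_dominated_loc_of_deriv_le (𝕜 := ℂ)
    (F' := fun w (r : ℝ) => -((r : ℂ) ^ (n + 1) * Complex.exp (-(r : ℂ) ^ 3 / 3 - w * r)))
    (bound := fun r => r ^ (n + 1) * Real.exp (-r ^ 3 / 3 + (‖z‖ + 1) * r))
    (Metric.ball_mem_nhds z one_pos)
    (Eventually.of_forall fun w => (integrableOn_airyMoment_integrand n w).1)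
    (integrableOn_airyMoment_integrand n z) (integrableOn_airyMoment_integrand (n + 1) z).neg.1
    ?_ (integrableOn_pow_mul_exp_neg_cube (n + 1) _) ?_).2
  · filter_upwards [ae_restrict_mem measurableSet_Ioi] with r hr w hw
    rw [norm_neg, norm_airyMoment_integrand (n + 1) w hr]
    rw [Set.mem_Ioi] at hr
    gcongr
    have hwz := norm_sub_norm_le w z
    rw [Metric.mem_ball, dist_eq_norm] at hw
    linarith [(neg_le_abs _).trans (Complex.abs_re_le_norm w)]
  · refine Eventually.of_forall fun r w _ => ?_
    exact ((((hasDerivAt_id w).mul_const (r : ℂ)).const_sub _).cexp.const_mul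
      ((r : ℂ) ^ n)).congr_deriv (by simp only [id_eq]; ring)

lemma tendsto_exp_neg_cube_sub (z : ℂ) :
    Tendsto (fun r : ℝ => Complex.exp (-(r : ℂ) ^ 3 / 3 - z * r)) atTop (𝓝 0) := by
  have hlim : Tendsto (fun r : ℝ => Real.exp ((|-z.re| + 1) * (3 * (|-z.re| + 1) + 1) - r))
      atTop (𝓝 0) :=
    Real.tendsto_exp_atBot.comp (tendsto_atBot_add_const_left _ _ tendsto_neg_atTop_atBot)
  refine squeeze_zero_norm' ?_ hlim
  filter_upwards [eventually_gt_atTop 0] with r hr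
  rw [norm_exp_neg_cube_sub]
  exact Real.exp_le_exp.2 (neg_cube_add_mul_le _ hr)

lemma airyMoment_two (z : ℂ) : airyMoment 2 z = 1 - z * airyMoment 0 z := by
  have hderiv (r : ℝ) : HasDerivAt (fun r : ℝ => Complex.exp (-(r : ℂ) ^ 3 / 3 - z * r))
      (-((r : ℂ) ^ 2 * Complex.exp (-(r : ℂ) ^ 3 / 3 - z * r)) +
        -z * ((r : ℂ) ^ 0 * Complex.exp (-(r : ℂ) ^ 3 / 3 - z * r))) r := by
    have h : HasDerivAt (fun s : ℂ => -s ^ 3 / 3 - z * s)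
        (-((3 : ℕ) * (r : ℂ) ^ (3 - 1)) / 3 - z * 1) (r : ℂ) :=
      ((hasDerivAt_pow 3 (r : ℂ)).neg.div_const 3).sub ((hasDerivAt_id _).const_mul z)
    exact h.cexp.comp_ofReal.congr_deriv (by push_cast; ring)
  have h2 := (integrableOn_airyMoment_integrand 2 z).neg
  have h0 := (integrableOn_airyMoment_integrand 0 z).const_mul (-z)
  have key := integral_Ioi_of_hasDerivAt_of_tendsto' (fun r _ => hderiv r) (h2.add h0)
    (tendsto_exp_neg_cube_sub z)
  have hsplit := (integral_add h2 h0).symm.trans key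
  simp only [Pi.neg_apply, integral_neg, integral_const_mul] at hsplit
  simp only [Complex.ofReal_zero, mul_zero, sub_zero, Complex.exp_zero, zero_pow three_ne_zero,
    neg_zero, zero_div] at hsplit
  rw [airyMoment, airyMoment]
  linear_combination -hsplit

lemma norm_airyMoment_le (n : ℕ) {z : ℂ} (hz : 0 < z.re) :
    ‖airyMoment n z‖ ≤ (1 / z.re) ^ (n + 1 : ℝ) * Real.Gamma (n + 1) := by
  have h := Real.integral_rpow_mul_exp_neg_mul_Ioi (a := n + 1) (by positivity) hz
  have hpos : 0 < (1 / z.re) ^ (n + 1 : ℝ) * Real.Gamma (n + 1) :=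
    mul_pos (by positivity) (Real.Gamma_pos_of_pos (by positivity))
  rw [← h] at hpos ⊢
  refine norm_integral_le_of_norm_le (Integrable.of_integral_ne_zero hpos.ne') ?_
  filter_upwards [ae_restrict_mem measurableSet_Ioi] with r hr
  rw [norm_airyMoment_integrand n z hr, add_sub_cancel_right, Real.rpow_natCast]
  rw [Set.mem_Ioi] at hr
  gcongr
  linarith [pow_pos hr 3]

lemma tendsto_airyMoment (n : ℕ) : Tendsto (airyMoment n) (comap Complex.re atTop) (𝓝 0) := by
  have hlim : Tendsto (fun x : ℝ => (1 / x) ^ (n + 1 : ℝ) * Real.Gamma (n + 1)) atTop (𝓝 0) := by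
    have h := tendsto_inv_atTop_zero.rpow_const (p := (n + 1 : ℝ)) (Or.inr (by positivity))
    rw [Real.zero_rpow (by positivity)] at h
    simpa [one_div] using h.mul_const (Real.Gamma (n + 1))
  refine squeeze_zero_norm' ?_ (hlim.comp tendsto_comap)
  filter_upwards [tendsto_comap.eventually_gt_atTop 0] with z hz
  exact norm_airyMoment_le n hz

lemma airyMoment_zero_right (n : ℕ) :
    airyMoment n 0 = ((3 : ℝ) ^ ((n + 1 : ℝ) / 3 - 1) * Real.Gamma ((n + 1) / 3) : ℝ) := by
  have h := _root_.integral_rpow_mul_exp_neg_mul_rpow (p := 3) (q := n) (b := 1 / 3) (by norm_num)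
    (by linarith [(Nat.cast_nonneg n : (0 : ℝ) ≤ n)]) (by norm_num)
  have hconst : (1 / 3 : ℝ) ^ (-((n : ℝ) + 1) / 3) * (1 / 3) = 3 ^ ((n + 1 : ℝ) / 3 - 1) := by
    rw [one_div, Real.inv_rpow (by norm_num), ← Real.rpow_neg (by norm_num),
      Real.rpow_sub_one (by norm_num), neg_div, neg_neg, ← div_eq_mul_inv]
  rw [← hconst, ← h, ← integral_complex_ofReal, airyMoment]
  refine setIntegral_congr_fun measurableSet_Ioi fun r _ => ?_
  have hpow : r ^ (3 : ℝ) = r ^ 3 := by exact_mod_cast Real.rpow_natCast r 3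
  simp only [Real.rpow_natCast, hpow]
  push_cast
  ring_nf

lemma hasDerivAt_airyMoment_comp_const_mul (n : ℕ) (c z : ℂ) :
    HasDerivAt (fun z => airyMoment n (c * z)) (-(c * airyMoment (n + 1) (c * z))) z :=
  ((hasDerivAt_airyMoment n (c * z)).comp z ((hasDerivAt_id z).const_mul c)).congr_deriv (by ring)

lemma tendsto_re_const_mul_add_ofReal {c : ℂ} (hc : 0 < c.re) (p : ℂ) :
    Tendsto (fun x : ℝ => c * (p + x)) atTop (comap Complex.re atTop) := by
  refine tendsto_comap_iff.2 ?_
  have h : (Complex.re ∘ fun x : ℝ => c * (p + x)) = fun x : ℝ => (c * p).re + c.re * x := by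
    funext x
    rw [Function.comp_apply, mul_add, Complex.add_re, Complex.re_mul_ofReal]
  rw [h]
  exact tendsto_atTop_add_const_left _ _ (tendsto_id.const_mul_atTop hc)

lemma tendsto_airyMoment_sub {c d : ℂ} (hc : 0 < c.re) (hd : 0 < d.re) (a b : ℂ) (n : ℕ) (p : ℂ) :
    Tendsto (fun x : ℝ => a * airyMoment n (c * (p + x)) - b * airyMoment n (d * (p + x)))
      atTop (𝓝 0) := by
  simpa only [Function.comp_def, mul_zero, sub_zero] using
    (((tendsto_airyMoment n).comp (tendsto_re_const_mul_add_ofReal hc p)).const_mul a).sub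
      (((tendsto_airyMoment n).comp (tendsto_re_const_mul_add_ofReal hd p)).const_mul b)

lemma hasDerivAt_airyMoment_sub (c d z : ℂ) :
    HasDerivAt (fun z => c * airyMoment 0 (c * z) - d * airyMoment 0 (d * z))
      (d ^ 2 * airyMoment 1 (d * z) - c ^ 2 * airyMoment 1 (c * z)) z :=
  (((hasDerivAt_airyMoment_comp_const_mul 0 c z).const_mul c).sub
    ((hasDerivAt_airyMoment_comp_const_mul 0 d z).const_mul d)).congr_deriv (by ring)

lemma solvesAiry_airyMoment_sub {c d : ℂ} (hc : c ^ 3 = -1) (hd : d ^ 3 = -1) :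
    SolvesAiry fun z => c * airyMoment 0 (c * z) - d * airyMoment 0 (d * z) := by
  refine .of_hasDerivAt (hasDerivAt_airyMoment_sub c d) fun z =>
    (((hasDerivAt_airyMoment_comp_const_mul 1 d z).const_mul (d ^ 2)).sub
      ((hasDerivAt_airyMoment_comp_const_mul 1 c z).const_mul (c ^ 2))).congr_deriv ?_
  rw [airyMoment_two, airyMoment_two]
  linear_combination (1 - c * z * airyMoment 0 (c * z)) * hc
    - (1 - d * z * airyMoment 0 (d * z)) * hd

/-! ### The sixth root of unity -/

/-- The primitive sixth root of unity `exp(iπ/3)`, the direction of the ray `arg z = π/3`. -/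
def zetaSix : ℂ := Complex.exp ((π / 3 : ℝ) * I)

local notation "ζ" => zetaSix

lemma zetaSix_eq : ζ = 1 / 2 + Real.sqrt 3 / 2 * I := by
  rw [zetaSix, Complex.exp_mul_I, ← Complex.ofReal_cos, ← Complex.ofReal_sin, Real.cos_pi_div_three,
    Real.sin_pi_div_three]
  push_cast
  ring

lemma sqrt_three_sq : (Real.sqrt 3 : ℂ) ^ 2 = 3 := by
  norm_cast
  simp

lemma sqrt_three_ne_zero : (Real.sqrt 3 : ℂ) ≠ 0 := by
  simp

lemma zetaSix_re : (ζ).re = 1 / 2 := by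
  norm_num [zetaSix_eq]

lemma zetaSix_im : (ζ).im = Real.sqrt 3 / 2 := by
  norm_num [zetaSix_eq]

lemma zetaSix_sq : ζ ^ 2 = ζ - 1 := by
  rw [zetaSix_eq]
  linear_combination (1 / 4 : ℂ) * Real.sqrt 3 ^ 2 * Complex.I_sq - (1 / 4 : ℂ) * sqrt_three_sq

lemma zetaSix_cube : ζ ^ 3 = -1 := by
  linear_combination (ζ + 1) * zetaSix_sq

lemma neg_zetaSix_cube : (-ζ) ^ 3 = 1 := by
  rw [Odd.neg_pow (by decide), zetaSix_cube, neg_neg]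

lemma conj_zetaSix : conj ζ = 1 - ζ := by
  apply Complex.ext <;> norm_num [zetaSix_re, zetaSix_im]

lemma zetaSix_sub_conj : ζ - conj ζ = Real.sqrt 3 * I := by
  rw [conj_zetaSix, zetaSix_eq]
  ring

/-! ### The standard Airy functions -/

lemma sqrt_three_mul_Gamma_mul_Gamma :
    Real.sqrt 3 * (Real.Gamma (1 / 3) * Real.Gamma (2 / 3)) = 2 * π := by
  have h := Real.Gamma_mul_Gamma_one_sub (1 / 3)
  rw [mul_one_div, Real.sin_pi_div_three] at h
  norm_num at h ⊢
  rw [h]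
  field_simp

lemma airyMoment_zero_zero :
    airyMoment 0 0 = (3 ^ (-(2 : ℝ) / 3) * Real.Gamma (1 / 3) : ℝ) := by
  rw [airyMoment_zero_right]
  norm_num

lemma airyMoment_one_zero :
    airyMoment 1 0 = (3 ^ (-(1 : ℝ) / 3) * Real.Gamma (2 / 3) : ℝ) := by
  rw [airyMoment_zero_right]
  norm_num

namespace IsAiryAi

variable {Ai Bi : ℂ → ℂ}

lemma two_pi_mul_I_mul_eq (hAi : IsAiryAi Ai) :
    (fun z => 2 * π * I * Ai z) =
      fun z => ζ * airyMoment 0 (ζ * z) - conj ζ * airyMoment 0 (conj ζ * z) := by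
  have hG1 := (Real.Gamma_pos_of_pos (show (0 : ℝ) < 1 / 3 by norm_num)).ne'
  have hG2 := (Real.Gamma_pos_of_pos (show (0 : ℝ) < 2 / 3 by norm_num)).ne'
  have hconj : conj ζ ^ 3 = -1 := by rw [← map_pow, zetaSix_cube, map_neg, map_one]
  refine ((IsAiry.solvesAiry hAi).const_mul (2 * π * I)).eq_of_init
    (solvesAiry_airyMoment_sub zetaSix_cube hconj) (p := 0) ?_ ?_
  · have h : 2 * π * (3 ^ (-(2 : ℝ) / 3) / Real.Gamma (2 / 3)) =
        Real.sqrt 3 * (3 ^ (-(2 : ℝ) / 3) * Real.Gamma (1 / 3)) := by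
      rw [← sqrt_three_mul_Gamma_mul_Gamma]
      field_simp
    rw [IsAiry.apply_zero hAi, mul_zero, mul_zero, airyMoment_zero_zero, ← sub_mul,
      zetaSix_sub_conj]
    have h' := congrArg ((↑) : ℝ → ℂ) h
    push_cast at h' ⊢
    linear_combination I * h'
  · have h : 2 * π * (-(3 ^ (-(1 : ℝ) / 3)) / Real.Gamma (1 / 3)) =
        -(Real.sqrt 3 * (3 ^ (-(1 : ℝ) / 3) * Real.Gamma (2 / 3))) := by
      rw [← sqrt_three_mul_Gamma_mul_Gamma]
      field_simp
    have hsq : conj ζ ^ 2 - ζ ^ 2 = -(Real.sqrt 3 * I) := by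
      rw [← zetaSix_sub_conj, conj_zetaSix]
      ring
    rw [deriv_const_mul_field, IsAiry.deriv_zero hAi, (hasDerivAt_airyMoment_sub _ _ 0).deriv,
      mul_zero, mul_zero, airyMoment_one_zero, ← sub_mul, hsq]
    have h' := congrArg ((↑) : ℝ → ℂ) h
    push_cast at h' ⊢
    linear_combination I * h'

lemma two_pi_mul_I_mul_deriv_eq (hAi : IsAiryAi Ai) :
    (fun z => 2 * π * I * deriv Ai z) =
      fun z => conj ζ ^ 2 * airyMoment 1 (conj ζ * z) - ζ ^ 2 * airyMoment 1 (ζ * z) := by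
  funext z
  rw [← (hasDerivAt_airyMoment_sub _ _ z).deriv, ← hAi.two_pi_mul_I_mul_eq, deriv_const_mul_field]

lemma tendsto_zero (hAi : IsAiryAi Ai) (p : ℂ) :
    Tendsto (fun x : ℝ => Ai (p + x)) atTop (𝓝 0) := by
  have h := tendsto_airyMoment_sub (c := ζ) (d := conj ζ) (by norm_num [zetaSix_re])
    (by norm_num [zetaSix_re]) ζ (conj ζ) 0 p
  simp only [← funext_iff.1 hAi.two_pi_mul_I_mul_eq] at h
  simpa only [inv_mul_cancel_left₀ Complex.two_pi_I_ne_zero, mul_zero] using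
    h.const_mul (2 * π * I)⁻¹

lemma tendsto_deriv_zero (hAi : IsAiryAi Ai) (p : ℂ) :
    Tendsto (fun x : ℝ => deriv Ai (p + x)) atTop (𝓝 0) := by
  have h := tendsto_airyMoment_sub (c := conj ζ) (d := ζ) (by norm_num [zetaSix_re])
    (by norm_num [zetaSix_re]) (conj ζ ^ 2) (ζ ^ 2) 1 p
  simp only [← funext_iff.1 hAi.two_pi_mul_I_mul_deriv_eq] at h
  simpa only [inv_mul_cancel_left₀ Complex.two_pi_I_ne_zero, mul_zero] using
    h.const_mul (2 * π * I)⁻¹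

lemma wronskian_eq_inv_pi (hAi : IsAiryAi Ai) (hBi : IsAiryBi Bi) (z : ℂ) :
    wronskian Ai Bi z = (π⁻¹ : ℝ) := by
  have hG1 := (Real.Gamma_pos_of_pos (show (0 : ℝ) < 1 / 3 by norm_num)).ne'
  have hG2 := (Real.Gamma_pos_of_pos (show (0 : ℝ) < 2 / 3 by norm_num)).ne'
  have hpow : (3 : ℝ) ^ (-(2 : ℝ) / 3) * 3 ^ ((1 : ℝ) / 6) = (Real.sqrt 3)⁻¹ ∧
      (3 : ℝ) ^ (-(1 : ℝ) / 3) * 3 ^ (-(1 : ℝ) / 6) = (Real.sqrt 3)⁻¹ := by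
    constructor <;> rw [← Real.rpow_add (by norm_num), Real.sqrt_eq_rpow,
      ← Real.rpow_neg (by norm_num)] <;> norm_num
  rw [(IsAiry.solvesAiry hAi).wronskian_eq (IsAiry.solvesAiry hBi) z 0, wronskian,
    IsAiry.apply_zero hAi, IsAiry.apply_zero hBi, IsAiry.deriv_zero hAi, IsAiry.deriv_zero hBi,
    ← Complex.ofReal_mul, ← Complex.ofReal_mul, ← Complex.ofReal_sub]
  congr 1
  calc _ = (3 ^ (-(2 : ℝ) / 3) * 3 ^ ((1 : ℝ) / 6) + 3 ^ (-(1 : ℝ) / 3) * 3 ^ (-(1 : ℝ) / 6)) /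
        (Real.Gamma (1 / 3) * Real.Gamma (2 / 3)) := by field_simp; ring
    _ = 2 / (Real.sqrt 3 * (Real.Gamma (1 / 3) * Real.Gamma (2 / 3))) := by
      rw [hpow.1, hpow.2]; field_simp; ring
    _ = π⁻¹ := by rw [sqrt_three_mul_Gamma_mul_Gamma]; field_simp

lemma wronskian_ne_zero (hAi : IsAiryAi Ai) (hBi : IsAiryBi Bi) (z : ℂ) :
    wronskian Ai Bi z ≠ 0 := by
  rw [hAi.wronskian_eq_inv_pi hBi, Complex.ofReal_ne_zero]
  exact inv_ne_zero Real.pi_ne_zero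

end IsAiryAi

/-! ### The flux -/

/-- The flux `Im (u' ū)` of a solution: half the rate of decrease of `|u|²` in the direction `i`. -/
def airyFlux (u : ℂ → ℂ) (z : ℂ) : ℝ :=
  (deriv u z * conj (u z)).im

namespace SolvesAiry

variable {u : ℂ → ℂ}

lemma hasDerivAt_airyFlux_line (hu : SolvesAiry u) (p c : ℂ) (t : ℝ) :
    HasDerivAt (fun t : ℝ => airyFlux u (p + t * c))
      ((c * (p + t * c)).im * ‖u (p + t * c)‖ ^ 2 - c.im * ‖deriv u (p + t * c)‖ ^ 2) t := by
  have h := (hu.hasDerivAt_deriv_line p c t).mul (hu.hasDerivAt_line p c t).star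
  refine (Complex.imCLM.hasFDerivAt.comp_hasDerivAt t h).congr_deriv ?_
  rw [← Complex.normSq_eq_norm_sq, ← Complex.normSq_eq_norm_sq]
  simp [Complex.normSq_apply]
  ring

lemma hasDerivAt_norm_sq_vertical (hu : SolvesAiry u) (p : ℂ) (t : ℝ) :
    HasDerivAt (fun t : ℝ => ‖u (p + t * I)‖ ^ 2) (-2 * airyFlux u (p + t * I)) t := by
  refine (hu.hasDerivAt_line p I t).norm_sq.congr_deriv ?_
  rw [Complex.inner, airyFlux, mul_assoc, Complex.I_mul_re]
  ring

lemma re_nonneg_of_two_zeros (hu : SolvesAiry u) (hne : u ≠ 0) {p q : ℂ} (hre : p.re = q.re)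
    (him : p.im ≠ q.im) (hp : u p = 0) (hq : u q = 0) : 0 ≤ p.re := by
  by_contra! hneg
  have hanti : StrictAnti fun t : ℝ => airyFlux u (p.re + t * I) := by
    refine strictAnti_of_hasDerivAt_neg (hu.hasDerivAt_airyFlux_line p.re I) fun t => ?_
    have hcoeff : (I * (p.re + t * I)).im = p.re := by simp
    rw [hcoeff, Complex.I_im, one_mul, sub_neg]
    by_cases h : u (p.re + t * I) = 0
    · have h' : deriv u (p.re + t * I) ≠ 0 := fun h' => hne (hu.eq_zero h h')
      rw [h, norm_zero, zero_pow two_ne_zero, mul_zero]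
      positivity
    · exact (mul_neg_of_neg_of_pos hneg (by positivity)).trans_le (sq_nonneg _)
  refine him (hanti.injective ?_)
  rw [Complex.re_add_im, hre, Complex.re_add_im]
  simp [airyFlux, hp, hq]

/-- Along a horizontal line the flux of a solution increases to its limit `0`. -/
lemma airyFlux_neg_of_tendsto_zero (hu : SolvesAiry u) (hne : u ≠ 0) {p : ℂ} (hp : 0 < p.im)
    (h₀ : Tendsto (fun x : ℝ => u (p + x)) atTop (𝓝 0))
    (h₁ : Tendsto (fun x : ℝ => deriv u (p + x)) atTop (𝓝 0)) : airyFlux u p < 0 := by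
  have hderiv (x : ℝ) :
      HasDerivAt (fun x : ℝ => airyFlux u (p + x)) (p.im * ‖u (p + x)‖ ^ 2) x := by
    simpa using hu.hasDerivAt_airyFlux_line p 1 x
  have hmono : Monotone fun x : ℝ => airyFlux u (p + x) :=
    monotone_of_hasDerivAt_nonneg hderiv fun x => by positivity
  have hlim : Tendsto (fun x : ℝ => airyFlux u (p + x)) atTop (𝓝 0) := by
    have h := (Complex.continuous_im.tendsto _).comp (h₁.mul h₀.star)
    rwa [star_zero, mul_zero, Complex.zero_im] at h
  by_contra! hcon
  have hzero (x : ℝ) (hx : 0 ≤ x) : airyFlux u (p + x) = 0 :=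
    le_antisymm (hmono.ge_of_tendsto hlim x) (hcon.trans (by simpa using hmono hx))
  have hu0 (x : ℝ) (hx : 0 < x) : u (p + x) = 0 := by
    have hev : (fun x : ℝ => airyFlux u (p + x)) =ᶠ[𝓝 x] fun _ => 0 :=
      (lt_mem_nhds hx).mono fun y hy => hzero y hy.le
    simpa [hp.ne'] using (hderiv x).unique ((hasDerivAt_const x 0).congr_of_eventuallyEq hev)
  have hev : (fun x : ℝ => u (p + x)) =ᶠ[𝓝 1] fun _ => 0 := (lt_mem_nhds one_pos).mono hu0
  have hu1 : HasDerivAt (fun x : ℝ => u (p + x)) (deriv u (p + (1 : ℝ))) 1 := by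
    simpa using hu.hasDerivAt_line p 1 1
  exact hne (hu.eq_zero (hu0 1 one_pos)
    (hu1.unique ((hasDerivAt_const (1 : ℝ) 0).congr_of_eventuallyEq hev)))

end SolvesAiry

namespace IsAiryAi

variable {Ai Bi : ℂ → ℂ}

lemma ne_zero (hAi : IsAiryAi Ai) : Ai ≠ 0 := by
  rintro rfl
  have h := IsAiry.apply_zero hAi
  have hG := (Real.Gamma_pos_of_pos (show (0 : ℝ) < 2 / 3 by norm_num)).ne'
  have h3 := (Real.rpow_pos_of_pos three_pos (-2 / 3)).ne'
  rw [Pi.zero_apply, eq_comm, Complex.ofReal_eq_zero] at h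
  exact div_ne_zero h3 hG h

lemma airyFlux_neg (hAi : IsAiryAi Ai) {p : ℂ} (hp : 0 < p.im) : airyFlux Ai p < 0 :=
  (IsAiry.solvesAiry hAi).airyFlux_neg_of_tendsto_zero hAi.ne_zero hp (hAi.tendsto_zero p)
    (hAi.tendsto_deriv_zero p)

lemma strictMonoOn_norm_sq (hAi : IsAiryAi Ai) (s : ℝ) :
    StrictMonoOn (fun t : ℝ => ‖Ai (s + t * I)‖ ^ 2) (Set.Ici 0) := by
  have hd := (IsAiry.solvesAiry hAi).hasDerivAt_norm_sq_vertical s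
  refine strictMonoOn_of_hasDerivWithinAt_pos (convex_Ici 0)
    (fun t _ => (hd t).continuousAt.continuousWithinAt) (fun t _ => (hd t).hasDerivWithinAt)
    fun t ht => ?_
  rw [interior_Ici, Set.mem_Ioi] at ht
  linarith [hAi.airyFlux_neg (p := s + t * I) (by simpa using ht)]

lemma norm_apply_re_add_abs_im (hAi : IsAiryAi Ai) (p : ℂ) :
    ‖Ai (p.re + |p.im| * I)‖ = ‖Ai p‖ := by
  rcases abs_choice p.im with h | h <;> rw [h]
  · rw [Complex.re_add_im]
  · have hconj : conj p = p.re + (-p.im : ℝ) * I := by apply Complex.ext <;> simp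
    rw [← hconj, IsAiry.apply_conj hAi, RCLike.norm_conj]

lemma abs_im_eq_of_norm_eq (hAi : IsAiryAi Ai) {p q : ℂ} (hre : p.re = q.re)
    (h : ‖Ai p‖ = ‖Ai q‖) : |p.im| = |q.im| := by
  refine (hAi.strictMonoOn_norm_sq p.re).injOn (Set.mem_Ici.2 (abs_nonneg _))
    (Set.mem_Ici.2 (abs_nonneg _)) ?_
  rw [hAi.norm_apply_re_add_abs_im, h, hre, hAi.norm_apply_re_add_abs_im]

end IsAiryAi

/-! ### Real solutions -/

lemma pos_of_ne_zero_of_pos_zero {f : ℝ → ℝ} (hf : Continuous f) (h0 : 0 < f 0)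
    (hne : ∀ x, 0 ≤ x → f x ≠ 0) {x : ℝ} (hx : 0 ≤ x) : 0 < f x := by
  by_contra! hneg
  obtain ⟨y, hy, hfy⟩ := intermediate_value_Icc' hx hf.continuousOn ⟨hneg, h0.le⟩
  exact hne y hy.1 hfy

lemma le_of_monotoneOn_of_tendsto_atTop {f : ℝ → ℝ} {a l : ℝ} (hf : MonotoneOn f (Set.Ici a))
    (hl : Tendsto f atTop (𝓝 l)) {x : ℝ} (hx : a ≤ x) : f x ≤ l :=
  ge_of_tendsto hl ((eventually_ge_atTop x).mono fun _ hy => hf hx (hx.trans hy) hy)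

namespace SolvesAiry

variable {v : ℝ → ℝ}

/-- On the negative axis the energy `v² - v'² / x` is nondecreasing. -/
lemma exists_sq_le_of_nonpos (hv : SolvesAiry v) : ∃ C, ∀ x ≤ 0, v x ^ 2 ≤ C := by
  have henergy (x : ℝ) (hx : x < 0) : HasDerivAt (fun x => v x ^ 2 - deriv v x ^ 2 / x)
      (deriv v x ^ 2 / x ^ 2) x := by
    refine (((hv.hasDerivAt x).pow 2).sub
      (((hv.hasDerivAt_deriv x).pow 2).div (hasDerivAt_id x) hx.ne)).congr_deriv ?_
    have := hx.ne
    simp only [id_eq, Pi.pow_apply]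
    field_simp
    ring
  have hmono : MonotoneOn (fun x => v x ^ 2 - deriv v x ^ 2 / x) (Set.Iic (-1)) := by
    have hneg (x : ℝ) (hx : x ∈ Set.Iic (-1 : ℝ)) : x < 0 :=
      lt_of_le_of_lt (Set.mem_Iic.1 hx) (by norm_num)
    exact monotoneOn_of_hasDerivWithinAt_nonneg (convex_Iic _)
      (fun x hx => (henergy x (hneg x hx)).continuousAt.continuousWithinAt)
      (fun x hx => (henergy x (hneg x (interior_subset hx))).hasDerivWithinAt)
      fun x _ => by positivity
  obtain ⟨C, hC⟩ := (isCompact_Icc (a := (-1 : ℝ)) (b := 0)).exists_bound_of_continuousOn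
    (hv.differentiable.continuous.pow 2).continuousOn
  refine ⟨max C (v (-1) ^ 2 - deriv v (-1) ^ 2 / (-1)), fun x hx => ?_⟩
  rcases le_total (-1) x with h | h
  · exact ((le_abs_self _).trans (hC x ⟨h, hx⟩)).trans (le_max_left _ _)
  · have hdiv : deriv v x ^ 2 / x ≤ 0 := div_nonpos_of_nonneg_of_nonpos (sq_nonneg _) hx
    have hle : v x ^ 2 - deriv v x ^ 2 / x ≤ v (-1) ^ 2 - deriv v (-1) ^ 2 / (-1) :=
      hmono h Set.self_mem_Iic h
    exact le_max_of_le_right (by linarith)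

lemma monotoneOn_mul_deriv (hv : SolvesAiry v) :
    MonotoneOn (fun x => v x * deriv v x) (Set.Ici 0) := by
  have hd (x : ℝ) : HasDerivAt (fun x => v x * deriv v x) (deriv v x ^ 2 + x * v x ^ 2) x :=
    ((hv.hasDerivAt x).mul (hv.hasDerivAt_deriv x)).congr_deriv (by ring)
  refine monotoneOn_of_hasDerivWithinAt_nonneg (convex_Ici 0)
    (fun x _ => (hd x).continuousAt.continuousWithinAt) (fun x _ => (hd x).hasDerivWithinAt)
    fun x hx => ?_
  rw [interior_Ici, Set.mem_Ioi] at hx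
  positivity

section Dominant

variable {x : ℝ}

lemma mul_deriv_pos (hv : SolvesAiry v) (h0 : 0 < v 0) (h1 : 0 < deriv v 0) (hx : 0 ≤ x) :
    0 < v x * deriv v x :=
  (mul_pos h0 h1).trans_le (hv.monotoneOn_mul_deriv Set.self_mem_Ici hx hx)

lemma pos_of_nonneg (hv : SolvesAiry v) (h0 : 0 < v 0) (h1 : 0 < deriv v 0) (hx : 0 ≤ x) :
    0 < v x :=
  pos_of_ne_zero_of_pos_zero hv.differentiable.continuous h0
    (fun _ hy => left_ne_zero_of_mul (hv.mul_deriv_pos h0 h1 hy).ne') hx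

lemma deriv_pos_of_nonneg (hv : SolvesAiry v) (h0 : 0 < v 0) (h1 : 0 < deriv v 0) (hx : 0 ≤ x) :
    0 < deriv v x :=
  pos_of_ne_zero_of_pos_zero hv.continuous_deriv h1
    (fun _ hy => right_ne_zero_of_mul (hv.mul_deriv_pos h0 h1 hy).ne') hx

lemma le_deriv_add (hv : SolvesAiry v) (h0 : 0 < v 0) (h1 : 0 < deriv v 0) (hx : 0 ≤ x) :
    v x ≤ deriv v x + v 1 := by
  have hv' {y : ℝ} (hy : 0 ≤ y) := hv.deriv_pos_of_nonneg h0 h1 hy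
  rcases le_total x 1 with h | h
  · have hmono : MonotoneOn v (Set.Ici 0) :=
      monotoneOn_of_hasDerivWithinAt_nonneg (convex_Ici 0) hv.differentiable.continuous.continuousOn
        (fun y _ => (hv.hasDerivAt y).hasDerivWithinAt)
        fun y hy => (hv' (interior_subset hy)).le
    linarith [hmono hx (Set.mem_Ici.2 zero_le_one) h, hv' hx]
  · have hd (y : ℝ) : HasDerivAt (fun y => deriv v y ^ 2 - v y ^ 2)
        (2 * (v y * deriv v y) * (y - 1)) y :=
      (((hv.hasDerivAt_deriv y).pow 2).sub ((hv.hasDerivAt y).pow 2)).congr_deriv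
        (by push_cast; ring)
    have hmono : MonotoneOn (fun y => deriv v y ^ 2 - v y ^ 2) (Set.Ici 1) := by
      refine monotoneOn_of_hasDerivWithinAt_nonneg (convex_Ici 1)
        (fun y _ => (hd y).continuousAt.continuousWithinAt) (fun y _ => (hd y).hasDerivWithinAt)
        fun y hy => ?_
      rw [interior_Ici, Set.mem_Ioi] at hy
      have := hv.mul_deriv_pos h0 h1 (zero_le_one.trans hy.le)
      exact mul_nonneg (by positivity) (by linarith)
    have hle := hmono Set.self_mem_Ici h h
    have hv1 := hv.pos_of_nonneg h0 h1 zero_le_one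
    refine abs_le_of_sq_le_sq' ?_ (by linarith [hv' hx]) |>.2
    nlinarith [hv' hx, sq_nonneg (deriv v 1)]

end Dominant

section Recessive

variable {x : ℝ}

lemma nonneg_of_tendsto_zero (hv : SolvesAiry v) (h0 : 0 ≤ v 0) (hlim : Tendsto v atTop (𝓝 0))
    (hlim' : Tendsto (deriv v) atTop (𝓝 0)) (hx : 0 ≤ x) : 0 ≤ v x := by
  have hle {y : ℝ} (hy : 0 ≤ y) : v y * deriv v y ≤ 0 :=
    le_of_monotoneOn_of_tendsto_atTop hv.monotoneOn_mul_deriv (by simpa using hlim.mul hlim') hy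
  have hanti : AntitoneOn (fun y => v y ^ 2) (Set.Ici 0) :=
    antitoneOn_of_hasDerivWithinAt_nonpos (convex_Ici 0)
      (hv.differentiable.continuous.pow 2).continuousOn
      (fun y _ => (((hv.hasDerivAt y).pow 2).congr_deriv
        (by push_cast; ring : _ = 2 * (v y * deriv v y))).hasDerivWithinAt)
      fun y hy => by linarith [hle (interior_subset hy)]
  by_contra! hneg
  obtain ⟨y, hy, hvy⟩ :=
    intermediate_value_Icc' hx hv.differentiable.continuous.continuousOn ⟨hneg.le, h0⟩
  nlinarith [hanti hy.1 hx hy.2]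

lemma deriv_nonpos_of_tendsto_zero (hv : SolvesAiry v) (h0 : 0 ≤ v 0)
    (hlim : Tendsto v atTop (𝓝 0)) (hlim' : Tendsto (deriv v) atTop (𝓝 0)) (hx : 0 ≤ x) :
    deriv v x ≤ 0 := by
  have hmono : MonotoneOn (deriv v) (Set.Ici 0) :=
    monotoneOn_of_hasDerivWithinAt_nonneg (convex_Ici 0) hv.continuous_deriv.continuousOn
      (fun y _ => (hv.hasDerivAt_deriv y).hasDerivWithinAt) fun y hy =>
        have hy : 0 ≤ y := interior_subset hy
        mul_nonneg hy (hv.nonneg_of_tendsto_zero h0 hlim hlim' hy)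
  exact le_of_monotoneOn_of_tendsto_atTop hmono hlim' hx

lemma mul_le_of_tendsto_zero {u : ℝ → ℝ} (hu : SolvesAiry u) (hv : SolvesAiry v) (hu0 : 0 ≤ u 0)
    (hlim : Tendsto u atTop (𝓝 0)) (hlim' : Tendsto (deriv u) atTop (𝓝 0)) (hv0 : 0 < v 0)
    (hv1 : 0 < deriv v 0) (hx : 0 ≤ x) : u x * v x ≤ wronskian u v 0 + u 0 * v 1 := by
  have hu' {y : ℝ} (hy : 0 ≤ y) := hu.deriv_nonpos_of_tendsto_zero hu0 hlim hlim' hy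
  have hanti : AntitoneOn u (Set.Ici 0) :=
    antitoneOn_of_hasDerivWithinAt_nonpos (convex_Ici 0) hu.differentiable.continuous.continuousOn
      (fun y _ => (hu.hasDerivAt y).hasDerivWithinAt) fun y hy => hu' (interior_subset hy)
  calc u x * v x ≤ u x * (deriv v x + v 1) :=
        mul_le_mul_of_nonneg_left (hv.le_deriv_add hv0 hv1 hx)
          (hu.nonneg_of_tendsto_zero hu0 hlim hlim' hx)
    _ = wronskian u v x + deriv u x * v x + u x * v 1 := by rw [wronskian]; ring
    _ ≤ wronskian u v x + 0 + u 0 * v 1 := by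
        gcongr
        · exact mul_nonpos_of_nonpos_of_nonneg (hu' hx) (hv.pos_of_nonneg hv0 hv1 hx).le
        · exact (hv.pos_of_nonneg hv0 hv1 zero_le_one).le
        · exact hanti Set.self_mem_Ici hx hx
    _ = wronskian u v 0 + u 0 * v 1 := by rw [add_zero, hu.wronskian_eq hv x 0]

end Recessive

end SolvesAiry

/-! ### The solutions `U₊` and `U₋` -/

lemma sqrt_three_mul_rpow_neg_two_thirds :
    Real.sqrt 3 * (3 : ℝ) ^ (-(2 : ℝ) / 3) = 3 ^ (-(1 : ℝ) / 6) := by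
  rw [Real.sqrt_eq_rpow, ← Real.rpow_add (by norm_num)]
  norm_num

lemma sqrt_three_mul_rpow_neg_one_third :
    Real.sqrt 3 * (3 : ℝ) ^ (-(1 : ℝ) / 3) = 3 ^ ((1 : ℝ) / 6) := by
  rw [Real.sqrt_eq_rpow, ← Real.rpow_add (by norm_num)]
  norm_num

lemma mul_eq_Uplus_sq_sub_Uminus_sq (Ai Bi : ℂ → ℂ) (z : ℂ) :
    Ai z * Bi z = (Uplus Ai Bi z ^ 2 - Uminus Ai Bi z ^ 2) / (4 * Real.sqrt 3) := by
  have := sqrt_three_ne_zero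
  rw [Uplus, Uminus]
  field_simp
  ring

namespace IsAiryAi

variable {Ai Bi : ℂ → ℂ}

lemma isAiry_Uplus (hAi : IsAiryAi Ai) (hBi : IsAiryBi Bi) :
    IsAiry (Uplus Ai Bi) (2 * (3 ^ (-(1 : ℝ) / 6) / Real.Gamma (2 / 3))) 0 := by
  convert IsAiry.linComb hAi hBi (Real.sqrt 3) 1 using 1
  · funext z
    rw [Uplus, Complex.ofReal_one, one_mul]
  · linear_combination -sqrt_three_mul_rpow_neg_two_thirds / Real.Gamma (2 / 3)
  · linear_combination sqrt_three_mul_rpow_neg_one_third / Real.Gamma (1 / 3)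

lemma isAiry_Uminus (hAi : IsAiryAi Ai) (hBi : IsAiryBi Bi) :
    IsAiry (Uminus Ai Bi) 0 (2 * (3 ^ ((1 : ℝ) / 6) / Real.Gamma (1 / 3))) := by
  convert IsAiry.linComb hAi hBi (-Real.sqrt 3) 1 using 1
  · funext z
    rw [Uminus, Complex.ofReal_one, one_mul, Complex.ofReal_neg]
  · linear_combination sqrt_three_mul_rpow_neg_two_thirds / Real.Gamma (2 / 3)
  · linear_combination -sqrt_three_mul_rpow_neg_one_third / Real.Gamma (1 / 3)

lemma Uplus_mul (hAi : IsAiryAi Ai) (hBi : IsAiryBi Bi) {c : ℂ}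
    (hc : c ^ 3 = 1) (z : ℂ) :
    Uplus Ai Bi (c * z) = Uplus Ai Bi z :=
  have hU := hAi.isAiry_Uplus hBi
  hU.solvesAiry.comp_const_mul_eq_self (by rw [hU.deriv_zero, Complex.ofReal_zero]) hc z

lemma Uminus_mul (hAi : IsAiryAi Ai) (hBi : IsAiryBi Bi) {c : ℂ}
    (hc : c ^ 3 = 1) (z : ℂ) :
    Uminus Ai Bi (c * z) = c * Uminus Ai Bi z :=
  have hU := hAi.isAiry_Uminus hBi
  hU.solvesAiry.comp_const_mul_eq_mul (by rw [hU.apply_zero, Complex.ofReal_zero]) hc z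

lemma mul_apply_neg_zetaSix_mul (hAi : IsAiryAi Ai) (hBi : IsAiryBi Bi) {z : ℂ} {a b : ℝ}
    (ha : Uplus Ai Bi z ^ 2 = a) (hb : Uminus Ai Bi z ^ 2 = b) :
    Ai (-ζ * z) * Bi (-ζ * z) = ⟨(a + b / 2) / (4 * Real.sqrt 3), -(b / 8)⟩ := by
  have h3 := sqrt_three_ne_zero
  rw [mul_eq_Uplus_sq_sub_Uminus_sq, hAi.Uplus_mul hBi neg_zetaSix_cube,
    hAi.Uminus_mul hBi neg_zetaSix_cube, mul_pow, neg_sq,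
    zetaSix_sq, ha, hb, zetaSix_eq, Complex.mk_eq_add_mul_I]
  push_cast
  field_simp
  ring

/-! ### The product `Ai · Bi` on the boundary of the sector `0 < arg z < π / 3` -/

lemma exists_mul_apply_ofReal_mem_Icc (hAi : IsAiryAi Ai) (hBi : IsAiryBi Bi) :
    ∃ C : ℝ, ∀ x : ℝ, 0 ≤ x → ∃ y ∈ Set.Icc 0 C, Ai x * Bi x = (y : ℂ) := by
  have hu := (IsAiry.solvesAiry hAi).re_ofReal
  have hv := (IsAiry.solvesAiry hBi).re_ofReal
  have hlim : Tendsto (fun x : ℝ => (Ai x).re) atTop (𝓝 0) := by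
    simpa [Function.comp_def] using (Complex.continuous_re.tendsto 0).comp (hAi.tendsto_zero 0)
  have hlim' : Tendsto (deriv fun x : ℝ => (Ai x).re) atTop (𝓝 0) := by
    rw [funext (IsAiry.solvesAiry hAi).deriv_re_ofReal]
    simpa [Function.comp_def] using
      (Complex.continuous_re.tendsto 0).comp (hAi.tendsto_deriv_zero 0)
  have hu0 : 0 ≤ (Ai (0 : ℝ)).re := by
    rw [Complex.ofReal_zero, IsAiry.apply_zero hAi, Complex.ofReal_re]
    positivity
  have hv0 : 0 < (Bi (0 : ℝ)).re := by
    rw [Complex.ofReal_zero, IsAiry.apply_zero hBi, Complex.ofReal_re]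
    positivity
  have hv1 : 0 < deriv (fun x : ℝ => (Bi x).re) 0 := by
    rw [(IsAiry.solvesAiry hBi).deriv_re_ofReal, Complex.ofReal_zero, IsAiry.deriv_zero hBi,
      Complex.ofReal_re]
    positivity
  refine ⟨_, fun x hx => ⟨(Ai x).re * (Bi x).re,
    ⟨mul_nonneg (hu.nonneg_of_tendsto_zero hu0 hlim hlim' hx) (hv.pos_of_nonneg hv0 hv1 hx).le,
      hu.mul_le_of_tendsto_zero hv hu0 hlim hlim' hv0 hv1 hx⟩, ?_⟩⟩
  rw [Complex.ofReal_mul, IsAiry.ofReal_re_apply_ofReal hAi, IsAiry.ofReal_re_apply_ofReal hBi]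

end IsAiryAi

lemma IsAiry.exists_sq_apply_neg_mem_Icc {u : ℂ → ℂ} {a b : ℝ} (hu : IsAiry u a b) :
    ∃ C : ℝ, ∀ r : ℝ, 0 ≤ r → ∃ y ∈ Set.Icc 0 C, u (-r) ^ 2 = (y : ℂ) := by
  obtain ⟨C, hC⟩ := hu.solvesAiry.re_ofReal.exists_sq_le_of_nonpos
  refine ⟨C, fun r hr => ⟨_, ⟨sq_nonneg _, hC (-r) (neg_nonpos.2 hr)⟩, ?_⟩⟩
  rw [Complex.ofReal_pow, hu.ofReal_re_apply_ofReal, Complex.ofReal_neg]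

lemma IsAiryAi.exists_mul_apply_ray {Ai Bi : ℂ → ℂ} (hAi : IsAiryAi Ai) (hBi : IsAiryBi Bi) :
    ∃ C, ∀ r : ℝ, 0 ≤ r → ‖Ai (r * ζ) * Bi (r * ζ)‖ ≤ C ∧ 0 ≤ (Ai (r * ζ) * Bi (r * ζ)).re ∧
      (Ai (r * ζ) * Bi (r * ζ)).im ≤ 0 := by
  obtain ⟨C, hC⟩ := (hAi.isAiry_Uplus hBi).exists_sq_apply_neg_mem_Icc
  obtain ⟨D, hD⟩ := (hAi.isAiry_Uminus hBi).exists_sq_apply_neg_mem_Icc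
  refine ⟨(C + D / 2) / (4 * Real.sqrt 3) + D / 8, fun r hr => ?_⟩
  obtain ⟨a, ⟨ha0, haC⟩, ha⟩ := hC r hr
  obtain ⟨b, ⟨hb0, hbD⟩, hb⟩ := hD r hr
  have hre : 0 ≤ (a + b / 2) / (4 * Real.sqrt 3) := by positivity
  have him : -(b / 8) ≤ 0 := by linarith
  have hrot : (r : ℂ) * ζ = -ζ * -r := by ring
  rw [hrot, hAi.mul_apply_neg_zetaSix_mul hBi ha hb]
  refine ⟨(Complex.norm_le_abs_re_add_abs_im _).trans ?_, hre, him⟩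
  rw [abs_of_nonneg hre, abs_of_nonpos him, neg_neg]
  gcongr

/-! ### Phragmén–Lindelöf in a sector -/

lemma exp_eq_of_im {w : ℂ} {θ : ℝ} (hw : w.im = θ) :
    Complex.exp w = (Real.exp w.re : ℝ) * Complex.exp (θ * I) := by
  rw [Complex.ofReal_exp, ← Complex.exp_add, ← hw, Complex.re_add_im]

lemma norm_exp_rpow_le {w : ℂ} {c : ℝ} (hc : 0 ≤ c) :
    ‖Complex.exp w‖ ^ c ≤ Real.exp (c * |w.re|) := by
  rw [Complex.norm_exp, ← Real.exp_mul, mul_comm]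
  gcongr
  exact le_abs_self _

/-- The substitution `z = exp w` turns the sector into the strip `0 < im w < θ`. -/
lemma norm_le_of_norm_le_on_rays {f : ℂ → ℂ} (hf : Differentiable ℂ f) {θ K B C c : ℝ}
    (hθ : θ ≤ π) (hc : 0 ≤ c) (hcθ : c < π / θ)
    (hgrowth : ∀ z, arg z ∈ Set.Ioo 0 θ → ‖f z‖ ≤ K * Real.exp (B * ‖z‖ ^ c))
    (h₀ : ∀ r : ℝ, 0 ≤ r → ‖f r‖ ≤ C)
    (h₁ : ∀ r : ℝ, 0 ≤ r → ‖f (r * Complex.exp (θ * I))‖ ≤ C) {z : ℂ}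
    (hz : arg z ∈ Set.Ioo 0 θ) : ‖f z‖ ≤ C := by
  have hz0 : z ≠ 0 := by
    rintro rfl
    simp at hz
  have hstrip : ‖f (Complex.exp (Complex.log z))‖ ≤ C := by
    refine PhragmenLindelof.horizontal_strip (f := fun w => f (Complex.exp w)) (a := 0) (b := θ)
      (hf.comp Complex.differentiable_exp).diffContOnCl
      ⟨c, by rwa [sub_zero], |B|, Asymptotics.IsBigO.of_bound |K| ?_⟩ (fun w hw => ?_)
      (fun w hw => ?_) (hz.1.le.trans_eq (Complex.log_im z).symm)
      ((Complex.log_im z).trans_le hz.2.le)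
    · refine eventually_inf_principal.2 (Eventually.of_forall fun w hw => ?_)
      have harg : arg (Complex.exp w) = w.im := by
        rw [← Complex.log_im, Complex.log_exp (by linarith [hw.1, Real.pi_pos]) (hw.2.le.trans hθ)]
      rw [Real.norm_eq_abs, Real.abs_exp]
      refine (hgrowth _ (harg ▸ hw)).trans ?_
      gcongr
      · exact le_abs_self K
      · exact le_abs_self B
      · exact norm_exp_rpow_le hc
    · simpa [exp_eq_of_im hw] using h₀ _ (Real.exp_pos w.re).le
    · simpa only [exp_eq_of_im hw] using h₁ _ (Real.exp_pos w.re).le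
  rwa [Complex.exp_log hz0] at hstrip

/-! ### The product `Ai · Bi` in the sector `0 < arg z < π / 3` -/

lemma SolvesAiry.norm_mul_le {u v : ℂ → ℂ} (hu : SolvesAiry u) (hv : SolvesAiry v) (z : ℂ) :
    ‖u z * v z‖ ≤ ‖(u 0, deriv u 0)‖ * ‖(v 0, deriv v 0)‖ * Real.exp 2 *
      Real.exp (4 * ‖z‖ ^ (2 : ℝ)) := by
  have hbound {w : ℂ → ℂ} (hw : SolvesAiry w) :
      ‖w z‖ ≤ ‖(w 0, deriv w 0)‖ * Real.exp (1 + 2 * ‖z‖ ^ 2) := by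
    have h := hw.norm_add_le 0 z
    rw [zero_add, norm_zero, add_zero] at h
    refine h.trans ?_
    gcongr
    nlinarith [sq_nonneg (‖z‖ - 1), sq_nonneg ‖z‖]
  rw [norm_mul, mul_assoc _ (Real.exp 2), ← Real.exp_add, Real.rpow_two]
  refine (mul_le_mul (hbound hu) (hbound hv) (norm_nonneg _) (by positivity)).trans_eq ?_
  rw [mul_mul_mul_comm, ← Real.exp_add]
  ring_nf

/-- `‖exp (c · f z)‖ = exp (re (c · f z))` obeys the Phragmén–Lindelöf principle with bound `1`. -/
lemma re_mul_nonpos_of_re_mul_nonpos_on_rays {f : ℂ → ℂ} (hf : Differentiable ℂ f) {θ M : ℝ}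
    (hθ₀ : 0 < θ) (hθ : θ ≤ π) (hM : ∀ z, arg z ∈ Set.Ioo 0 θ → ‖f z‖ ≤ M) (c : ℂ)
    (h₀ : ∀ r : ℝ, 0 ≤ r → (c * f r).re ≤ 0)
    (h₁ : ∀ r : ℝ, 0 ≤ r → (c * f (r * Complex.exp (θ * I))).re ≤ 0) {z : ℂ}
    (hz : arg z ∈ Set.Ioo 0 θ) : (c * f z).re ≤ 0 := by
  have h := norm_le_of_norm_le_on_rays (f := fun z => Complex.exp (c * f z)) (hf.const_mul c).cexp
    (K := Real.exp (‖c‖ * M)) (B := 0) (C := 1) hθ le_rfl (by positivity) (fun w hw => ?_)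
    (fun r hr => ?_) (fun r hr => ?_) hz
  · rwa [Complex.norm_exp, Real.exp_le_one_iff] at h
  · rw [Complex.norm_exp, zero_mul, Real.exp_zero, mul_one]
    gcongr
    refine (Complex.re_le_norm _).trans ?_
    rw [norm_mul]
    gcongr
    exact hM w hw
  · simpa only [Complex.norm_exp, Real.exp_le_one_iff] using h₀ r hr
  · simpa only [Complex.norm_exp, Real.exp_le_one_iff] using h₁ r hr

/-- Open mapping: a value on the boundary of the half-plane would force `f` to be constant. -/
lemma im_neg_of_forall_im_nonpos {f : ℂ → ℂ} (hf : Differentiable ℂ f)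
    (hconst : ¬ ∃ w, ∀ z, f z = w) {s : Set ℂ} (hs : IsOpen s) (him : ∀ z ∈ s, (f z).im ≤ 0)
    {z : ℂ} (hz : z ∈ s) : (f z).im < 0 := by
  have hopen : IsOpen (f '' s) := by
    rcases AnalyticOnNhd.is_constant_or_isOpen (fun z _ => hf.analyticAt z)
      (isPreconnected_univ (α := ℂ)) with ⟨w, hw⟩ | h
    · exact absurd ⟨w, fun z => hw z trivial⟩ hconst
    · exact h s (Set.subset_univ s) hs
  have hsub : f '' s ⊆ interior {w | w.im ≤ 0} :=
    interior_maximal (Set.image_subset_iff.2 him) hopen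
  rw [Complex.interior_setOfPred_im_le] at hsub
  exact hsub (Set.mem_image_of_mem f hz)

lemma isOpen_setOf_arg_mem_Ioo {θ : ℝ} (hθ : θ ≤ π) : IsOpen {z | arg z ∈ Set.Ioo 0 θ} := by
  have h : {z | arg z ∈ Set.Ioo 0 θ} = Complex.slitPlane ∩ arg ⁻¹' Set.Ioo 0 θ := by
    refine (Set.inter_eq_right.2 fun z hz => ?_).symm
    rw [Complex.mem_slitPlane_iff_arg]
    refine ⟨(hz.2.trans_le hθ).ne, ?_⟩
    rintro rfl
    simp at hz
  rw [h]
  exact Complex.continuousOn_arg.isOpen_inter_preimage Complex.isOpen_slitPlane isOpen_Ioo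

/-- If `u · v` is constant, its second derivative at `0` is `2 u'(0) v'(0) = 0`. -/
lemma SolvesAiry.not_exists_forall_mul_eq {u v : ℂ → ℂ} (hu : SolvesAiry u) (hv : SolvesAiry v)
    (hu0 : deriv u 0 ≠ 0) (hv0 : deriv v 0 ≠ 0) : ¬ ∃ w, ∀ z, u z * v z = w := by
  rintro ⟨w, hw⟩
  have hd (z : ℂ) : deriv u z * v z + u z * deriv v z = 0 :=
    ((hu.hasDerivAt z).mul (hv.hasDerivAt z)).unique
      ((hasDerivAt_const z w).congr_of_eventuallyEq (Eventually.of_forall hw))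
  have hd' := (((hu.hasDerivAt_deriv 0).mul (hv.hasDerivAt 0)).add
    ((hu.hasDerivAt 0).mul (hv.hasDerivAt_deriv 0))).unique
      ((hasDerivAt_const 0 0).congr_of_eventuallyEq (Eventually.of_forall hd))
  have hzero : 2 * (deriv u 0 * deriv v 0) = 0 := by linear_combination hd'
  simp [hu0, hv0] at hzero

namespace IsAiryAi

variable {Ai Bi : ℂ → ℂ}

lemma exists_norm_mul_apply_le (hAi : IsAiryAi Ai) (hBi : IsAiryBi Bi) :
    ∃ C, ∀ z, arg z ∈ Set.Ioo 0 (π / 3) → ‖Ai z * Bi z‖ ≤ C := by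
  obtain ⟨C, hC⟩ := hAi.exists_mul_apply_ofReal_mem_Icc hBi
  obtain ⟨D, hD⟩ := hAi.exists_mul_apply_ray hBi
  have hA := IsAiry.solvesAiry hAi
  have hB := IsAiry.solvesAiry hBi
  refine ⟨max C D, fun z hz => norm_le_of_norm_le_on_rays (f := fun z => Ai z * Bi z)
    (hA.differentiable.mul hB.differentiable) (by linarith [Real.pi_pos]) zero_le_two
    (by rw [div_div_cancel₀ Real.pi_ne_zero]; norm_num) (fun w _ => hA.norm_mul_le hB w)
    (fun r hr => ?_) (fun r hr => (hD r hr).1.trans (le_max_right C D)) hz⟩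
  obtain ⟨y, hy, hyr⟩ := hC r hr
  rw [hyr, Complex.norm_of_nonneg hy.1]
  exact hy.2.trans (le_max_left C D)

lemma re_mul_mul_apply_nonpos (hAi : IsAiryAi Ai) (hBi : IsAiryBi Bi) {c : ℂ}
    (hc : ∀ w : ℂ, 0 ≤ w.re → w.im ≤ 0 → (c * w).re ≤ 0) {z : ℂ}
    (hz : arg z ∈ Set.Ioo 0 (π / 3)) : (c * (Ai z * Bi z)).re ≤ 0 := by
  obtain ⟨C, hC⟩ := hAi.exists_norm_mul_apply_le hBi
  obtain ⟨D, hD⟩ := hAi.exists_mul_apply_ofReal_mem_Icc hBi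
  obtain ⟨E, hE⟩ := hAi.exists_mul_apply_ray hBi
  refine re_mul_nonpos_of_re_mul_nonpos_on_rays (f := fun z => Ai z * Bi z)
    ((IsAiry.solvesAiry hAi).differentiable.mul (IsAiry.solvesAiry hBi).differentiable)
    (by positivity) (by linarith [Real.pi_pos]) hC c (fun r hr => ?_)
    (fun r hr => hc _ (hE r hr).2.1 (hE r hr).2.2) hz
  obtain ⟨y, hy, hyr⟩ := hD r hr
  exact hc _ (by simpa [hyr] using hy.1) (by simp [hyr])

lemma re_mul_apply_nonneg (hAi : IsAiryAi Ai) (hBi : IsAiryBi Bi) {z : ℂ}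
    (hz : arg z ∈ Set.Ioo 0 (π / 3)) : 0 ≤ (Ai z * Bi z).re := by
  have h := hAi.re_mul_mul_apply_nonpos hBi (c := -1) (fun w hw _ => by simpa using hw) hz
  rwa [neg_one_mul, Complex.neg_re, neg_nonpos] at h

lemma im_mul_apply_neg (hAi : IsAiryAi Ai) (hBi : IsAiryBi Bi) {z : ℂ}
    (hz : arg z ∈ Set.Ioo 0 (π / 3)) : (Ai z * Bi z).im < 0 := by
  have hA := IsAiry.solvesAiry hAi
  have hB := IsAiry.solvesAiry hBi
  have hG := Real.Gamma_pos_of_pos (show (0 : ℝ) < 1 / 3 by norm_num)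
  have hA0 : deriv Ai 0 ≠ 0 := by
    rw [IsAiry.deriv_zero hAi, Complex.ofReal_ne_zero]
    exact div_ne_zero (neg_ne_zero.2 (by positivity)) hG.ne'
  have hB0 : deriv Bi 0 ≠ 0 := by
    rw [IsAiry.deriv_zero hBi, Complex.ofReal_ne_zero]
    positivity
  refine im_neg_of_forall_im_nonpos (f := fun z => Ai z * Bi z)
    (hA.differentiable.mul hB.differentiable) (hA.not_exists_forall_mul_eq hB hA0 hB0)
    (isOpen_setOf_arg_mem_Ioo (by linarith [Real.pi_pos])) (fun w hw => ?_) hz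
  simpa using hAi.re_mul_mul_apply_nonpos hBi (c := -I) (fun w _ hw => by simpa using hw) hw

end IsAiryAi

/-! ### Proportional boundary values -/

/-- The determinant of the values of `f` and `g` at two points. For two independent solutions of
`w'' = z w` it vanishes iff a nontrivial combination of them vanishes at both points. -/
def crossDet (f g : ℂ → ℂ) (p q : ℂ) : ℂ :=
  f p * g q - f q * g p

lemma hasDerivAt_crossDet {f g f' g' : ℂ → ℂ} (hf : ∀ z, HasDerivAt f (f' z) z)
    (hg : ∀ z, HasDerivAt g (g' z) z) (m c z : ℂ) :
    HasDerivAt (fun z => crossDet f g (m * (z + c)) (m * (z - c)))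
      (m * (crossDet f' g (m * (z + c)) (m * (z - c))
        + crossDet f g' (m * (z + c)) (m * (z - c)))) z := by
  have hp : HasDerivAt (fun z => m * (z + c)) (m * 1) z :=
    ((hasDerivAt_id z).add_const c).const_mul m
  have hq : HasDerivAt (fun z => m * (z - c)) (m * 1) z :=
    ((hasDerivAt_id z).sub_const c).const_mul m
  refine ((((hf _).comp z hp).mul ((hg _).comp z hq)).sub
    (((hf _).comp z hq).mul ((hg _).comp z hp))).congr_deriv ?_
  simp only [Function.comp_apply, crossDet]
  ring

namespace SolvesAiry

variable {u v : ℂ → ℂ} {p q : ℂ}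

lemma iteratedDeriv_two_crossDet (hu : SolvesAiry u) (hv : SolvesAiry v) (m c z : ℂ) :
    iteratedDeriv 2 (fun z => crossDet u v (m * (z + c)) (m * (z - c))) z =
      m ^ 2 * (2 * m * z * crossDet u v (m * (z + c)) (m * (z - c))
        + 2 * crossDet (deriv u) (deriv v) (m * (z + c)) (m * (z - c))) := by
  rw [iteratedDeriv_succ, iteratedDeriv_one,
    funext fun w => (hasDerivAt_crossDet hu.hasDerivAt hv.hasDerivAt m c w).deriv]
  have h := ((hasDerivAt_crossDet hu.hasDerivAt_deriv hv.hasDerivAt m c z).add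
    (hasDerivAt_crossDet hu.hasDerivAt hv.hasDerivAt_deriv m c z)).const_mul m
  refine h.deriv.trans ?_
  simp only [crossDet]
  ring

lemma exists_sq_eq_one_of_crossDet_eq_zero (hu : SolvesAiry u) (hv : SolvesAiry v)
    (hw : wronskian u v p ≠ 0) (h : crossDet u v p q = 0)
    (h' : crossDet (deriv u) v p q + crossDet u (deriv v) p q = 0) :
    ∃ k : ℝ, k ^ 2 = 1 ∧ u q = k * u p ∧ v q = k * v p := by
  have hpq := hu.wronskian_eq hv q p
  obtain ⟨k, hk⟩ : ∃ k, k * wronskian u v p = u q * deriv v p - v q * deriv u p :=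
    ⟨_, div_mul_cancel₀ _ hw⟩
  simp only [crossDet, wronskian] at h h' hw hpq hk
  have huq : u q = k * u p := mul_right_cancel₀ hw (by
    linear_combination (-u p) * hk + deriv u p * h)
  have hvq : v q = k * v p := mul_right_cancel₀ hw (by
    linear_combination (-v p) * hk + deriv v p * h)
  have hk2 : k ^ 2 = 1 := mul_right_cancel₀ hw (by
    linear_combination k * hk - k * h' + hpq - deriv v q * huq + deriv u q * hvq)
  rcases sq_eq_one_iff.1 hk2 with rfl | rfl
  · exact ⟨1, one_pow 2, by simpa using huq, by simpa using hvq⟩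
  · exact ⟨-1, neg_one_sq, by simpa using huq, by simpa using hvq⟩

lemma crossDet_deriv_add_eq_zero (hu : SolvesAiry u) (hv : SolvesAiry v) (hup : u p = u q)
    (hvp : v p = v q) : crossDet (deriv u) v p q + crossDet u (deriv v) p q = 0 := by
  have hpq := hu.wronskian_eq hv p q
  simp only [crossDet, wronskian] at hpq ⊢
  rw [hup, hvp] at *
  linear_combination -hpq

lemma re_nonneg_of_crossDet_eq_zero (hu : SolvesAiry u) (hv : SolvesAiry v)
    (hw : wronskian u v q ≠ 0) (hre : p.re = q.re) (him : p.im ≠ q.im)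
    (h : crossDet u v p q = 0) : 0 ≤ p.re := by
  refine (hu.linComb hv (v q) (-u q)).re_nonneg_of_two_zeros (fun hzero => hw ?_) hre him ?_ ?_
  · have hd := hu.deriv_linComb hv (v q) (-u q) q
    rw [hzero, Pi.zero_def, deriv_const] at hd
    rw [wronskian]
    linear_combination hd
  · rw [← h, crossDet]
    ring
  · ring

end SolvesAiry

/-! ### Double zeros of the determinant -/

lemma IsAiry.sq_apply_of_apply_conj {u : ℂ → ℂ} {a b : ℝ} (hu : IsAiry u a b) {k : ℝ}
    (hk : k ^ 2 = 1) {z : ℂ} (h : u (conj z) = k * u z) : u z ^ 2 = (k * ‖u z‖ ^ 2 : ℝ) := by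
  have hk' : (k : ℂ) ^ 2 = 1 := mod_cast hk
  rw [hu.apply_conj] at h
  rw [Complex.ofReal_mul, Complex.ofReal_pow, ← Complex.mul_conj', h]
  linear_combination -u z ^ 2 * hk'

lemma arg_conj_neg_zetaSix_mul {z : ℂ} (hz : z ≠ 0) (h : -(π / 3) ≤ arg z) :
    arg (conj (-ζ * z)) = 2 * π / 3 - arg z := by
  have hexp : conj (-ζ * z) = ‖z‖ * Complex.exp ((2 * π / 3 - arg z : ℝ) * I) := by
    conv_lhs => rw [← Complex.norm_mul_exp_arg_mul_I z]
    have hneg : conj (-ζ) = Complex.exp ((2 * π / 3 : ℝ) * I) := by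
      have : (2 * π / 3 : ℝ) * I = π * I - (π / 3 : ℝ) * I := by push_cast; ring
      rw [this, Complex.exp_sub, Complex.exp_pi_mul_I, map_neg, zetaSix, ← Complex.exp_conj,
        map_mul, Complex.conj_I, Complex.conj_ofReal, mul_neg, Complex.exp_neg]
      ring
    rw [map_mul, hneg, map_mul, Complex.conj_ofReal, ← Complex.exp_conj, map_mul,
      Complex.conj_ofReal, Complex.conj_I, mul_left_comm, ← Complex.exp_add]
    congr 2
    push_cast
    ring
  rw [hexp, Complex.arg_real_mul _ (norm_pos_iff.2 hz), Complex.arg_exp_mul_I,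
    toIocMod_eq_self]
  constructor <;> linarith [Complex.arg_le_pi z, Real.pi_pos]

lemma neg_zetaSix_mul_ray (r : ℝ) : -ζ * (r * ζ) = conj (r * ζ) := by
  rw [map_mul, Complex.conj_ofReal, conj_zetaSix]
  linear_combination -(r : ℂ) * zetaSix_sq

lemma eq_norm_mul_zetaSix {z : ℂ} (hz : arg z = π / 3) : z = ‖z‖ * ζ := by
  conv_lhs => rw [← Complex.norm_mul_exp_arg_mul_I z, hz]
  rw [zetaSix]

namespace IsAiryAi

variable {Ai Bi : ℂ → ℂ}

lemma crossDet_deriv_ne_zero (hAi : IsAiryAi Ai) (hBi : IsAiryBi Bi) {p : ℂ} (hp : 0 < p.im)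
    (hA : Ai p = Ai (conj p)) (hB : Bi p = Bi (conj p)) :
    crossDet (deriv Ai) (deriv Bi) p (conj p) ≠ 0 := by
  intro h
  have hw := (IsAiry.solvesAiry hAi).wronskian_eq (IsAiry.solvesAiry hBi) p (conj p)
  have hA' : deriv Ai p = deriv Ai (conj p) := by
    refine mul_right_cancel₀ (hAi.wronskian_ne_zero hBi p) ?_
    simp only [wronskian, crossDet, ← hA, ← hB] at h hw ⊢
    linear_combination (-deriv Ai p) * hw.symm + Ai p * h
  rw [IsAiry.apply_conj hAi, eq_comm, Complex.conj_eq_iff_im] at hA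
  rw [IsAiry.deriv_apply_conj hAi, eq_comm, Complex.conj_eq_iff_im] at hA'
  have hflux := hAi.airyFlux_neg hp
  simp [airyFlux, hA, hA'] at hflux

/-- Let `b = U₋ z ^ 2`. Below the ray, `Im (Ai z * Bi z) < 0` although this product is real; above
it, the product at `conj (-ζ * z)` has imaginary part `b / 8 < 0`, so that the sign is `k = -1` and
its real part is negative. -/
lemma arg_eq_of_apply_conj (hAi : IsAiryAi Ai) (hBi : IsAiryBi Bi) {z : ℂ} (him : 0 < z.im)
    (hre : 0 ≤ z.re) {k : ℝ} (hk : k ^ 2 = 1) (hA : Ai (conj z) = k * Ai z)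
    (hB : Bi (conj z) = k * Bi z) : arg z = π / 3 := by
  have hz : z ≠ 0 := by rintro rfl; simp at him
  have hpos : 0 < arg z := (Complex.arg_nonneg_iff.2 him.le).lt_of_ne fun h =>
    him.ne' (Complex.arg_eq_zero_iff.1 h.symm).2
  have hle : arg z ≤ π / 2 := Complex.arg_le_pi_div_two_iff.2 (Or.inl hre)
  have ha := (hAi.isAiry_Uplus hBi).sq_apply_of_apply_conj hk (z := z)
    (by rw [Uplus, Uplus, hA, hB]; ring)
  have hb := (hAi.isAiry_Uminus hBi).sq_apply_of_apply_conj hk (z := z)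
    (by rw [Uminus, Uminus, hA, hB]; ring)
  rcases lt_trichotomy (arg z) (π / 3) with hlt | heq | hgt
  · have h := hAi.im_mul_apply_neg hBi ⟨hpos, hlt⟩
    rw [mul_eq_Uplus_sq_sub_Uminus_sq, ha, hb] at h
    norm_cast at h
  · exact heq
  · have harg : arg (conj (-ζ * z)) ∈ Set.Ioo 0 (π / 3) := by
      rw [arg_conj_neg_zetaSix_mul hz (by linarith [Real.pi_pos])]
      constructor <;> linarith [Real.pi_pos]
    have hmul : Ai (conj (-ζ * z)) * Bi (conj (-ζ * z)) = conj (Ai (-ζ * z) * Bi (-ζ * z)) := by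
      rw [IsAiry.apply_conj hAi, IsAiry.apply_conj hBi, map_mul]
    have hre' := hAi.re_mul_apply_nonneg hBi harg
    have him' := hAi.im_mul_apply_neg hBi harg
    rw [hmul, hAi.mul_apply_neg_zetaSix_mul hBi ha hb] at hre' him'
    rw [Complex.conj_re, le_div_iff₀ (by positivity), zero_mul] at hre'
    rw [Complex.conj_im] at him'
    have hk0 : k < 0 := by
      by_contra! hk0
      have : 0 ≤ k * ‖Uminus Ai Bi z‖ ^ 2 := by positivity
      linarith
    have : k * ‖Uplus Ai Bi z‖ ^ 2 ≤ 0 := mul_nonpos_of_nonpos_of_nonneg hk0.le (sq_nonneg _)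
    linarith

lemma Uminus_eq_zero_of_apply_conj (hAi : IsAiryAi Ai) (hBi : IsAiryBi Bi) {r k : ℝ}
    (hA : Ai (conj (r * ζ)) = k * Ai (r * ζ)) (hB : Bi (conj (r * ζ)) = k * Bi (r * ζ)) :
    Uminus Ai Bi (r * ζ) = 0 := by
  have hU := hAi.Uminus_mul hBi neg_zetaSix_cube (r * ζ)
  have hne : ζ + k ≠ 0 := fun h => by simpa [zetaSix_im] using congrArg Complex.im h
  refine (mul_eq_zero.1 ?_).resolve_left hne
  rw [neg_zetaSix_mul_ray] at hU
  simp only [Uminus] at hU ⊢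
  linear_combination hU + (Real.sqrt 3 : ℂ) * hA - hB

lemma apply_conj_of_Uminus_eq_zero (hAi : IsAiryAi Ai) (hBi : IsAiryBi Bi) {r : ℝ}
    (h : Uminus Ai Bi (r * ζ) = 0) :
    Ai (r * ζ) = Ai (conj (r * ζ)) ∧ Bi (r * ζ) = Bi (conj (r * ζ)) := by
  have hP := hAi.Uplus_mul hBi neg_zetaSix_cube (r * ζ)
  have hM := hAi.Uminus_mul hBi neg_zetaSix_cube (r * ζ)
  rw [neg_zetaSix_mul_ray] at hP hM
  rw [h, mul_zero] at hM
  rw [Uminus] at h hM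
  rw [Uplus, Uplus] at hP
  refine ⟨mul_left_cancel₀ sqrt_three_ne_zero ?_, ?_⟩
  · linear_combination (-hP - h + hM) / 2
  · linear_combination (-hP + h - hM) / 2

theorem crossDet_eq_zero_and_deriv_eq_zero_iff (hAi : IsAiryAi Ai) (hBi : IsAiryBi Bi) {p q : ℂ}
    (hre : p.re = q.re) (him : q.im < p.im) :
    (crossDet Ai Bi p q = 0 ∧ crossDet (deriv Ai) Bi p q + crossDet Ai (deriv Bi) p q = 0) ↔
      q = conj p ∧ ∃ r ∈ rayZeroModuli (Uminus Ai Bi), p = r * ζ := by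
  have hA := IsAiry.solvesAiry hAi
  have hB := IsAiry.solvesAiry hBi
  constructor
  · rintro ⟨h, h'⟩
    obtain ⟨k, hk, hAk, hBk⟩ :=
      hA.exists_sq_eq_one_of_crossDet_eq_zero hB (hAi.wronskian_ne_zero hBi p) h h'
    have hnorm : ‖Ai p‖ = ‖Ai q‖ := by
      rw [hAk, norm_mul, Complex.norm_real, Real.norm_eq_abs,
        (abs_eq zero_le_one).2 (sq_eq_one_iff.1 hk), one_mul]
    have hpq : q = conj p := by
      refine Complex.ext hre.symm ?_
      rcases abs_eq_abs.1 (hAi.abs_im_eq_of_norm_eq hre hnorm) with heq | heq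
      · exact absurd heq him.ne'
      · rw [Complex.conj_im, heq, neg_neg]
    subst hpq
    rw [Complex.conj_im] at him
    have hpim : 0 < p.im := by linarith
    have hpre : 0 ≤ p.re :=
      hA.re_nonneg_of_crossDet_eq_zero hB (hAi.wronskian_ne_zero hBi _) hre him.ne' h
    have hp := eq_norm_mul_zetaSix (hAi.arg_eq_of_apply_conj hBi hpim hpre hk hAk hBk)
    refine ⟨rfl, ‖p‖, ⟨?_, ?_⟩, hp⟩
    · exact norm_pos_iff.2 fun h0 => by simp [h0] at hpim
    · rw [hp] at hAk hBk
      exact hAi.Uminus_eq_zero_of_apply_conj hBi hAk hBk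
  · rintro ⟨rfl, r, hr, rfl⟩
    obtain ⟨hAr, hBr⟩ := hAi.apply_conj_of_Uminus_eq_zero hBi hr.2
    refine ⟨?_, hA.crossDet_deriv_add_eq_zero hB hAr hBr⟩
    rw [crossDet, ← hAr, ← hBr, sub_self]

end IsAiryAi

/-! ### The characteristic determinant -/

lemma mul_add_I_eq_iff {m r : ℝ} (hm : m ≠ 0) {lam : ℂ} :
    (m * (lam - I) = conj (m * (lam + I)) ∧ m * (lam + I) = r * ζ) ↔
      lam = 1 / (Real.sqrt 3 : ℂ) ∧ m = Real.sqrt 3 * r / 2 := by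
  have h3 := sqrt_three_ne_zero
  constructor
  · rintro ⟨hconj, h⟩
    rw [h, map_mul, Complex.conj_ofReal] at hconj
    have hdiff : (m : ℂ) = Real.sqrt 3 * r / 2 := mul_right_cancel₀ Complex.I_ne_zero (by
      linear_combination (h - hconj + r * zetaSix_sub_conj) / 2)
    rw [conj_zetaSix] at hconj
    refine ⟨mul_left_cancel₀ (Complex.ofReal_ne_zero.2 hm) ?_, by exact_mod_cast hdiff⟩
    rw [mul_one_div, eq_div_iff h3]
    linear_combination Real.sqrt 3 / 2 * (h + hconj) - hdiff
  · rintro ⟨rfl, rfl⟩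
    have h : (Real.sqrt 3 * r / 2 : ℝ) * (1 / Real.sqrt 3 + I) = r * ζ := by
      rw [zetaSix_eq]
      push_cast
      field_simp
    refine ⟨?_, h⟩
    rw [h, map_mul, Complex.conj_ofReal, conj_zetaSix, zetaSix_eq]
    push_cast
    field_simp
    ring

lemma airyW_eq_crossDet (Ai Bi : ℂ → ℂ) (ε : ℝ) :
    airyW Ai Bi ε = fun lam => crossDet Ai Bi ((ε ^ ((1 : ℝ) / 3) : ℝ) * (lam + I))
      ((ε ^ ((1 : ℝ) / 3) : ℝ) * (lam - I)) :=
  rfl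

lemma rpow_third_eq_iff {ε m : ℝ} (hε : 0 ≤ ε) (hm : 0 ≤ m) :
    ε ^ ((1 : ℝ) / 3) = m ↔ ε = m ^ 3 := by
  rw [one_div, Real.rpow_inv_eq hε hm three_ne_zero, ← Real.rpow_natCast, Nat.cast_ofNat]

namespace IsAiryAi

variable {Ai Bi : ℂ → ℂ}

theorem airyW_eq_zero_and_deriv_eq_zero_iff (hAi : IsAiryAi Ai) (hBi : IsAiryBi Bi) {ε : ℝ}
    (hε : 0 < ε) {lam : ℂ} :
    (airyW Ai Bi ε lam = 0 ∧ deriv (airyW Ai Bi ε) lam = 0) ↔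
      lam = 1 / (Real.sqrt 3 : ℂ) ∧
        ∃ r ∈ rayZeroModuli (Uminus Ai Bi), ε = (Real.sqrt 3 * r / 2) ^ 3 := by
  have hm : 0 < ε ^ ((1 : ℝ) / 3) := Real.rpow_pos_of_pos hε _
  rw [airyW_eq_crossDet, (hasDerivAt_crossDet (IsAiry.solvesAiry hAi).hasDerivAt
    (IsAiry.solvesAiry hBi).hasDerivAt _ _ _).deriv,
    mul_eq_zero_iff_left (Complex.ofReal_ne_zero.2 hm.ne'),
    hAi.crossDet_eq_zero_and_deriv_eq_zero_iff hBi (by simp) (by simp; linarith)]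
  simp only [← exists_and_left, and_left_comm (b := _ ∈ rayZeroModuli _), mul_add_I_eq_iff hm.ne']
  refine exists_congr fun r => and_congr_right fun hr => and_congr_right fun _ => ?_
  have := hr.1
  exact rpow_third_eq_iff hε.le (by positivity)

theorem iteratedDeriv_two_airyW_ne_zero (hAi : IsAiryAi Ai) (hBi : IsAiryBi Bi) {r : ℝ}
    (hr : r ∈ rayZeroModuli (Uminus Ai Bi)) :
    iteratedDeriv 2 (airyW Ai Bi ((Real.sqrt 3 * r / 2) ^ 3)) (1 / (Real.sqrt 3 : ℂ)) ≠ 0 := by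
  have hr0 : 0 < r := hr.1
  have hm : 0 < Real.sqrt 3 * r / 2 := by positivity
  obtain ⟨hq, hp⟩ := (mul_add_I_eq_iff (r := r) hm.ne').2 ⟨rfl, rfl⟩
  obtain ⟨hA, hB⟩ := hAi.apply_conj_of_Uminus_eq_zero hBi hr.2
  have him : 0 < (r * ζ).im := by
    rw [Complex.im_ofReal_mul, zetaSix_im]
    positivity
  rw [airyW_eq_crossDet, (rpow_third_eq_iff (by positivity) hm.le).2 rfl,
    (IsAiry.solvesAiry hAi).iteratedDeriv_two_crossDet (IsAiry.solvesAiry hBi), hq, hp,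
    show crossDet Ai Bi (r * ζ) (conj (r * ζ)) = 0 by rw [crossDet, ← hA, ← hB, sub_self],
    mul_zero, zero_add]
  exact mul_ne_zero (pow_ne_zero 2 (Complex.ofReal_ne_zero.2 hm.ne')) (mul_ne_zero two_ne_zero
    (hAi.crossDet_deriv_ne_zero hBi him hA hB))

end IsAiryAi

theorem critical_points_of_spectral_locus_general (Ai Bi : ℂ → ℂ)
    (hAi : IsAiryAi Ai) (hBi : IsAiryBi Bi) :
    (∀ ε : ℝ, 0 < ε → ∀ lam : ℂ,
      (airyW Ai Bi ε lam = 0 ∧ deriv (airyW Ai Bi ε) lam = 0) ↔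
      (lam = 1 / (Real.sqrt 3 : ℂ) ∧
        ∃ r ∈ rayZeroModuli (Uminus Ai Bi), ε = (Real.sqrt 3 * r / 2) ^ 3)) ∧
    (∀ r ∈ rayZeroModuli (Uminus Ai Bi),
      iteratedDeriv 2 (airyW Ai Bi ((Real.sqrt 3 * r / 2) ^ 3))
        (1 / (Real.sqrt 3 : ℂ)) ≠ 0) :=
  ⟨fun _ hε _ => hAi.airyW_eq_zero_and_deriv_eq_zero_iff hBi hε,
    fun _ hr => hAi.iteratedDeriv_two_airyW_ne_zero hBi hr⟩

/-- The multiple eigenvalues of the model family occur exactly at the critical parameter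
values `ε_k = (√3·α_k/2)³` (where `(α k)` enumerates, increasingly, the moduli of the zeros
of `U₋` on the ray `arg z = π/3`, indexed from `0`), always at the knot point `λ = 1/√3`,
and always with algebraic multiplicity exactly `2`. -/
theorem critical_points_of_spectral_locus (Ai Bi : ℂ → ℂ)
    (hAi : IsAiryAi Ai) (hBi : IsAiryBi Bi)
    (α : ℕ → ℝ) (hmono : StrictMono α)
    (hrange : Set.range α = rayZeroModuli (Uminus Ai Bi)) :
    (∀ ε : ℝ, 0 < ε → ∀ lam : ℂ,
      (airyW Ai Bi ε lam = 0 ∧ deriv (airyW Ai Bi ε) lam = 0) ↔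
      (lam = 1 / (Real.sqrt 3 : ℂ) ∧ ∃ k : ℕ, ε = (Real.sqrt 3 * α k / 2) ^ 3)) ∧
    (∀ k : ℕ,
      iteratedDeriv 2 (airyW Ai Bi ((Real.sqrt 3 * α k / 2) ^ 3))
        (1 / (Real.sqrt 3 : ℂ)) ≠ 0) := by
  simpa only [← hrange, Set.exists_range_iff, Set.forall_mem_range] using
    critical_points_of_spectral_locus_general Ai Bi hAi hBi
end
end

section
/- Let (β_k)_{k≥1} be the increasing enumeration of the moduli of the zeros of U₊ on the open ray arg z = π/3, and set δ_k = (√3·β_k/2)³. Then for every k ≥ 1 the function y(x) = U₊(δ_k^{1/3}·(1/√3 − i·x)) (with δ_k^{1/3} the real cube root) satisfies y(-1) = y(1) = 0, is not identically zero on [-1,1], and satisfies -δ_k^{-1}·y''(x) + i·x·y(x) = (1/√3)·y(x) for all x. In particular, 1/√3 is an eigenvalue of the model operator T(δ_k) with this explicit eigenfunction. -/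
open Complex MeasureTheory Real

noncomputable section

/-- `lam` is an eigenvalue of the model operator `T(ε) y = -ε⁻¹ y'' + i x y`
with Dirichlet boundary conditions on `[-1,1]`. -/
def IsModelEigenvalue (ε : ℝ) (lam : ℂ) : Prop :=
  ∃ y : ℝ → ℂ, ContDiff ℝ 2 y ∧
    (∃ x ∈ Set.Icc (-1 : ℝ) 1, y x ≠ 0) ∧
    (∀ x ∈ Set.Ioo (-1 : ℝ) 1,
      -(ε⁻¹ : ℂ) * deriv (deriv y) x + Complex.I * (x : ℂ) * y x = lam * y x) ∧
    y (-1) = 0 ∧ y 1 = 0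

/-!
A solution `w` of the Airy equation with real data at the origin commutes with conjugation, by
uniqueness for the initial value problem. So a zero `c (λ + i)` with `c`, `λ` real comes with the
zero `c (λ - i)`. Restricting `w` to the vertical segment joining the two zeros turns the Airy
equation into `-c⁻³ y'' + i x y = λ y` with Dirichlet conditions, and `y` cannot vanish identically
by the identity theorem. The zero `β e^{iπ/3}` of `U₊` has `λ = 1/√3` and `c = √3 β / 2 = δ^{1/3}`.
-/

open scoped ComplexConjugate

namespace IsAiry

variable {v w : ℂ → ℂ} {a a' b b' : ℝ}

theorem add (hv : IsAiry v a a') (hw : IsAiry w b b') :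
    IsAiry (fun z => v z + w z) (a + b) (a' + b') := by
  obtain ⟨hv₁, hv₂, hv, hv₀, hv₀'⟩ := hv
  obtain ⟨hw₁, hw₂, hw, hw₀, hw₀'⟩ := hw
  have hderiv : deriv (fun z => v z + w z) = fun z => deriv v z + deriv w z :=
    funext fun z => deriv_fun_add (hv₁ z) (hw₁ z)
  refine ⟨hv₁.fun_add hw₁, hderiv ▸ hv₂.fun_add hw₂, fun z => ?_, by simp [hv₀, hw₀], ?_⟩
  · rw [hderiv, deriv_fun_add (hv₂ z) (hw₂ z), hv, hw, mul_add]
  · simp [hderiv, hv₀', hw₀']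

theorem const_mul (hw : IsAiry w a a') (r : ℝ) :
    IsAiry (fun z => r * w z) (r * a) (r * a') := by
  obtain ⟨hw₁, hw₂, hw, hw₀, hw₀'⟩ := hw
  have hderiv : deriv (fun z => r * w z) = fun z => r * deriv w z :=
    funext fun z => deriv_const_mul _ (hw₁ z)
  refine ⟨hw₁.const_mul _, hderiv ▸ hw₂.const_mul _, fun z => ?_, by simp [hw₀], ?_⟩
  · rw [hderiv, deriv_const_mul _ (hw₂ z), hw, mul_left_comm]
  · simp [hderiv, hw₀']

theorem conj_conj (hw : IsAiry w a a') : IsAiry (conj ∘ w ∘ conj) a a' := by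
  obtain ⟨hw₁, hw₂, hw, hw₀, hw₀'⟩ := hw
  have hderiv : deriv (conj ∘ w ∘ conj) = conj ∘ deriv w ∘ conj := deriv_conj_conj
  refine ⟨fun z => ?_, fun z => ?_, fun z => ?_, by simp [hw₀], by simp [hderiv, hw₀']⟩
  · exact differentiableAt_conj_conj_iff.mpr (hw₁ _)
  · exact hderiv ▸ differentiableAt_conj_conj_iff.mpr (hw₂ _)
  · rw [hderiv, deriv_conj_conj]
    simp [hw]

theorem iteratedDeriv_add_two (hw : IsAiry w a a') (n : ℕ) (z : ℂ) :
    iteratedDeriv (n + 2) w z =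
      ∑ i ∈ Finset.range (n + 1),
        n.choose i * iteratedDeriv i (fun z => z) z * iteratedDeriv (n - i) w z := by
  rw [iteratedDeriv_succ', iteratedDeriv_succ', funext hw.2.2.1,
    iteratedDeriv_fun_mul contDiffAt_fun_id hw.1.contDiff.contDiffAt]

theorem unique (hv : IsAiry v a a') (hw : IsAiry w a a') : v = w := by
  have hjet (n : ℕ) : iteratedDeriv n v 0 = iteratedDeriv n w 0 := by
    induction n using Nat.strong_induction_on with
    | _ n ih =>
      match n with
      | 0 => simp [hv.2.2.2.1, hw.2.2.2.1]
      | 1 => simp [hv.2.2.2.2, hw.2.2.2.2]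
      | m + 2 =>
        rw [hv.iteratedDeriv_add_two, hw.iteratedDeriv_add_two]
        exact Finset.sum_congr rfl fun i _ => by rw [ih (m - i) (by omega)]
  funext z
  rw [← taylorSeries_eq_of_entire hv.1 0 z, ← taylorSeries_eq_of_entire hw.1 0 z]
  simp only [hjet]

theorem apply_conj_s9 (hw : IsAiry w a a') (z : ℂ) : w (conj z) = conj (w z) := by
  simpa using (congrFun (hw.conj_conj.unique hw) (conj z)).symm

end IsAiry

theorem exists_mem_Icc_ofReal_ne_zero {f : ℂ → ℂ} (hf : Differentiable ℂ f) (hf₀ : f ≠ 0)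
    {s t : ℝ} (hst : s < t) : ∃ x ∈ Set.Icc s t, f x ≠ 0 := by
  by_contra! hzero
  have hlim : Filter.Tendsto ofReal (nhdsWithin s (Set.Ioi s)) (nhdsWithin (s : ℂ) {(s : ℂ)}ᶜ) :=
    continuous_ofReal.continuousWithinAt.tendsto_nhdsWithin fun x hx => by
      simpa using (Set.mem_Ioi.mp hx).ne'
  have hright : ∀ᶠ x : ℝ in nhdsWithin s (Set.Ioi s), f x = 0 := by
    filter_upwards [Ioo_mem_nhdsGT hst] with x hx using hzero x (Set.Ioo_subset_Icc_self hx)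
  exact hf₀ (AnalyticOnNhd.eq_of_frequently_eq (fun z _ => hf.analyticAt z)
    analyticOnNhd_const (hlim.frequently hright.frequently))

/-- The restriction `x ↦ w (c (λ - i x))` of `w` to a line, vertical when `c` is real. It carries
solutions `w` of the Airy equation to solutions of `T(c³) y = λ y`; `c` is the cube root of the
parameter of the model operator, which keeps fractional powers out of the formulas. -/
def airyProfile (w : ℂ → ℂ) (c lam : ℂ) : ℝ → ℂ :=
  fun x => w (c * (lam - I * x))

section AiryProfile

variable {w : ℂ → ℂ} {c : ℂ} {a a' : ℝ}

theorem hasDerivAt_airyProfile (hw : Differentiable ℂ w) (c lam : ℂ) (x : ℝ) :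
    HasDerivAt (airyProfile w c lam) (-(c * I) * airyProfile (deriv w) c lam x) x := by
  have hline : HasDerivAt (fun z : ℂ => c * (lam - I * z)) (-(c * I)) x := by
    simpa using (((hasDerivAt_id' (x : ℂ)).const_mul I).const_sub lam).const_mul c
  rw [mul_comm]
  exact ((hw _).hasDerivAt.comp (x : ℂ) hline).comp_ofReal

theorem contDiff_airyProfile (hw : Differentiable ℂ w) (c lam : ℂ) {n : WithTop ℕ∞} :
    ContDiff ℝ n (airyProfile w c lam) :=
  (hw.contDiff.restrict_scalars ℝ).comp
    (contDiff_const.mul (contDiff_const.sub (contDiff_const.mul ofRealCLM.contDiff)))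

theorem exists_mem_Icc_airyProfile_ne_zero (hw : Differentiable ℂ w) (hw₀ : w ≠ 0) (hc : c ≠ 0)
    (lam : ℂ) {s t : ℝ} (hst : s < t) : ∃ x ∈ Set.Icc s t, airyProfile w c lam x ≠ 0 := by
  refine exists_mem_Icc_ofReal_ne_zero (f := fun z => w (c * (lam - I * z))) (by fun_prop) ?_ hst
  obtain ⟨z, hz⟩ := Function.ne_iff.mp hw₀
  have hpreimage : c * (lam - I * ((lam - z / c) / I)) = z := by
    rw [mul_div_cancel₀ _ I_ne_zero, sub_sub_cancel, mul_div_cancel₀ _ hc]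
  exact Function.ne_iff.mpr ⟨(lam - z / c) / I, by rwa [hpreimage]⟩

theorem IsAiry.deriv_deriv_airyProfile (hw : IsAiry w a a') (c lam : ℂ) (x : ℝ) :
    deriv (deriv (airyProfile w c lam)) x = -(c ^ 3 * (lam - I * x) * airyProfile w c lam x) := by
  obtain ⟨hw₁, hw₂, hw, -, -⟩ := hw
  rw [funext fun x => (hasDerivAt_airyProfile hw₁ c lam x).deriv,
    ((hasDerivAt_airyProfile hw₂ c lam x).const_mul _).deriv]
  simp only [airyProfile, hw]
  linear_combination c ^ 3 * (lam - I * x) * w (c * (lam - I * x)) * I_sq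

theorem IsAiry.airyProfile_eigenvalue_eq (hw : IsAiry w a a') (hc : c ≠ 0) (lam : ℂ) (x : ℝ) :
    -(c ^ 3)⁻¹ * deriv (deriv (airyProfile w c lam)) x + I * x * airyProfile w c lam x =
      lam * airyProfile w c lam x := by
  rw [hw.deriv_deriv_airyProfile]
  field_simp
  ring

theorem IsAiry.airyProfile_neg (hw : IsAiry w a a') (c lam x : ℝ) :
    airyProfile w c lam (-x) = conj (airyProfile w c lam x) := by
  rw [airyProfile, airyProfile, ← hw.apply_conj_s9]
  simp

end AiryProfile

theorem ofReal_mul_exp_pi_div_three_mul_I (r : ℝ) :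
    r * exp ((π / 3 : ℝ) * I) = (√3 * r / 2 : ℝ) * ((1 / √3 : ℝ) + I) := by
  rw [exp_mul_I, ← ofReal_cos, ← ofReal_sin, Real.cos_pi_div_three, Real.sin_pi_div_three]
  push_cast
  field_simp

theorem Uplus_ne_zero {Ai Bi : ℂ → ℂ} (hAi : IsAiryAi Ai) (hBi : IsAiryBi Bi) :
    Uplus Ai Bi ≠ 0 := by
  refine Function.ne_iff.mpr ⟨0, ?_⟩
  rw [Uplus, hAi.2.2.2.1, hBi.2.2.2.1, Pi.zero_apply, ← ofReal_mul, ← ofReal_add, ofReal_ne_zero]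
  have := Real.Gamma_pos_of_pos (by norm_num : (0 : ℝ) < 2 / 3)
  positivity

theorem explicit_eigenfunction_at_delta_general {w : ℂ → ℂ} {a a' : ℝ} (hw : IsAiry w a a')
    (hw₀ : w ≠ 0) {c lam : ℝ} (hc : c ≠ 0) (hzero : w (c * (lam + I)) = 0) :
    airyProfile w c lam (-1) = 0 ∧ airyProfile w c lam 1 = 0 ∧
      (∃ x ∈ Set.Icc (-1 : ℝ) 1, airyProfile w c lam x ≠ 0) ∧
      (∀ x : ℝ, -(((c ^ 3 : ℝ) : ℂ)⁻¹) * deriv (deriv (airyProfile w c lam)) x +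
        I * x * airyProfile w c lam x = lam * airyProfile w c lam x) ∧
      IsModelEigenvalue (c ^ 3) lam := by
  have hleft : airyProfile w c lam (-1) = 0 := by simpa [airyProfile] using hzero
  have hright : airyProfile w c lam 1 = 0 := by
    simpa [hleft] using (hw.airyProfile_neg c lam 1).symm
  have hc' : (c : ℂ) ≠ 0 := ofReal_ne_zero.mpr hc
  have hne := exists_mem_Icc_airyProfile_ne_zero hw.1 hw₀ hc' lam (by norm_num : (-1 : ℝ) < 1)
  have hode := hw.airyProfile_eigenvalue_eq hc' lam
  rw [← ofReal_pow] at hode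
  exact ⟨hleft, hright, hne, hode, airyProfile w c lam, contDiff_airyProfile hw.1 c lam, hne,
    fun x _ => hode x, hleft, hright⟩

/-- For `δ_k = (√3·β_k/2)³` (where `(β k)` enumerates, increasingly, the moduli of the zeros
of `U₊` on the ray `arg z = π/3`, indexed from `0`), the function
`y(x) = U₊(δ_k^{1/3}(1/√3 − i x))` is an explicit eigenfunction of the model operator
`T(δ_k)` with eigenvalue `1/√3`. -/
theorem explicit_eigenfunction_at_delta (Ai Bi : ℂ → ℂ)
    (hAi : IsAiryAi Ai) (hBi : IsAiryBi Bi)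
    (β : ℕ → ℝ) (hmono : StrictMono β)
    (hrange : Set.range β = rayZeroModuli (Uplus Ai Bi)) (k : ℕ) :
    ∀ δ : ℝ, δ = (Real.sqrt 3 * β k / 2) ^ 3 →
    ∀ y : ℝ → ℂ, y = (fun x : ℝ =>
        Uplus Ai Bi (((δ ^ ((1:ℝ)/3) : ℝ) : ℂ) *
          (1 / (Real.sqrt 3 : ℂ) - Complex.I * (x : ℂ)))) →
      y (-1) = 0 ∧ y 1 = 0 ∧ (∃ x ∈ Set.Icc (-1 : ℝ) 1, y x ≠ 0) ∧
      (∀ x : ℝ, -(δ⁻¹ : ℂ) * deriv (deriv y) x + Complex.I * (x : ℂ) * y x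
        = (1 / (Real.sqrt 3 : ℂ)) * y x) ∧
      IsModelEigenvalue δ (1 / (Real.sqrt 3 : ℂ)) := by
  rintro δ rfl y rfl
  obtain ⟨hβ, hzero⟩ : β k ∈ rayZeroModuli (Uplus Ai Bi) := hrange ▸ Set.mem_range_self k
  have hroot : ((√3 * β k / 2) ^ 3) ^ ((1 : ℝ) / 3) = √3 * β k / 2 := by
    simpa using Real.pow_rpow_inv_natCast (by positivity : 0 ≤ √3 * β k / 2) three_ne_zero
  have hlam : ((1 / √3 : ℝ) : ℂ) = 1 / (√3 : ℂ) := by push_cast; rfl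
  rw [ofReal_mul_exp_pi_div_three_mul_I] at hzero
  rw [hroot, ← hlam]
  exact explicit_eigenfunction_at_delta_general ((hAi.const_mul √3).add hBi)
    (Uplus_ne_zero hAi hBi) (by positivity) hzero
end
end

section
/- Let (α_k)_{k≥1} be the increasing enumeration of the moduli of the zeros of U₋ on the open ray arg z = π/3, and set ε_k = (√3·α_k/2)³. Then for every k ≥ 1 the function y(x) = U₋(ε_k^{1/3}·(1/√3 − i·x)) (with ε_k^{1/3} the real cube root) satisfies y(-1) = y(1) = 0, is not identically zero on [-1,1], and satisfies -ε_k^{-1}·y''(x) + i·x·y(x) = (1/√3)·y(x) for all x. In particular, 1/√3 is an eigenvalue of the model operator T(ε_k) with this explicit eigenfunction. -/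
/-!
The Airy equation is invariant under rotation by cube roots of unity, so by uniqueness a solution
`w` with `w 0 = 0` satisfies `w (ω * z) = ω * w z` whenever `ω ^ 3 = 1`, and its zero set is stable
under these rotations. Since `√3 / 2 * (1 / √3 ± I) = exp (±(π / 3) * I)`, the segment
`x ↦ √3 * r / 2 * (1 / √3 - I * x)`, `-1 ≤ x ≤ 1`, joins `r * exp ((π / 3) * I)` to
`r * exp (-(π / 3) * I)`: if the first point is a zero of `w`, so is the second, and `w` along the
segment meets both Dirichlet conditions. The substitution `z = c * (μ - I * x)` turns the Airy
equation into the eigenvalue equation of the model operator with `ε = c ^ 3` and eigenvalue `μ`.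
-/

open Complex MeasureTheory Real

noncomputable section

open Topology

lemma eventually_eq_zero_of_deriv_deriv_eq_smul {𝕜 E : Type*} [NontriviallyNormedField 𝕜]
    [CharZero 𝕜] [NormedAddCommGroup E] [NormedSpace 𝕜 E] [CompleteSpace E]
    {f : 𝕜 → E} {q : 𝕜 → 𝕜} {a : 𝕜} (hf : AnalyticAt 𝕜 f a) (hq : AnalyticAt 𝕜 q a)
    (hode : deriv (deriv f) =ᶠ[𝓝 a] fun z ↦ q z • f z) (h0 : f a = 0) (h1 : deriv f a = 0) :
    ∀ᶠ z in 𝓝 a, f z = 0 := by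
  have order_eq_add_two :
      analyticOrderAt f a = analyticOrderAt (deriv (deriv f)) a + 1 + 1 := by
    have hderiv := hf.deriv.analyticOrderAt_deriv_add_one
    have hself := hf.analyticOrderAt_deriv_add_one
    simp only [h0, h1, sub_zero] at hderiv hself
    rw [hderiv, hself]
  have order_le : analyticOrderAt f a ≤ analyticOrderAt (deriv (deriv f)) a := by
    rw [analyticOrderAt_congr hode]
    exact (analyticOrderAt_smul hq hf).symm ▸ le_add_self
  rw [← analyticOrderAt_eq_top]
  by_contra hfinite
  refine lt_irrefl _ ((ENat.add_one_le_iff hfinite).mp ?_)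
  calc analyticOrderAt f a + 1 ≤ analyticOrderAt (deriv (deriv f)) a + 1 := by gcongr
    _ ≤ analyticOrderAt (deriv (deriv f)) a + 1 + 1 := le_self_add
    _ = analyticOrderAt f a := order_eq_add_two.symm

lemma eq_zero_of_eventually_ofReal_eq_zero {E : Type*} [NormedAddCommGroup E] [NormedSpace ℂ E]
    [CompleteSpace E] {f : ℂ → E} (hf : Differentiable ℂ f) {a : ℝ}
    (h : ∀ᶠ x : ℝ in 𝓝 a, f x = 0) : f = 0 := by
  have tendsto_ofReal : Filter.Tendsto ((↑) : ℝ → ℂ) (𝓝[≠] a) (𝓝[≠] (a : ℂ)) :=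
    continuous_ofReal.continuousAt.continuousWithinAt.tendsto_nhdsWithin
      fun _ hx ↦ ofReal_injective.ne hx
  refine AnalyticOnNhd.eq_of_frequently_eq (fun z _ ↦ hf.analyticAt z)
    (fun _ _ ↦ analyticAt_const) (z₀ := a) (tendsto_ofReal.frequently ?_)
  exact (h.filter_mono nhdsWithin_le_nhds).frequently

/-- Entire solutions of the Airy equation, without initial conditions. -/
structure IsAirySolution (w : ℂ → ℂ) : Prop where
  differentiable : Differentiable ℂ w
  deriv_deriv : ∀ z, deriv (deriv w) z = z * w z

lemma IsAiry.isAirySolution {w : ℂ → ℂ} {w0 w0' : ℝ} (h : IsAiry w w0 w0') : IsAirySolution w :=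
  ⟨h.1, h.2.2.1⟩

namespace IsAirySolution

variable {w w₁ w₂ : ℂ → ℂ}

lemma add (h₁ : IsAirySolution w₁) (h₂ : IsAirySolution w₂) : IsAirySolution (w₁ + w₂) where
  differentiable := h₁.differentiable.add h₂.differentiable
  deriv_deriv z := by
    have hderiv : deriv (w₁ + w₂) = deriv w₁ + deriv w₂ :=
      funext fun z ↦ deriv_add (h₁.differentiable z) (h₂.differentiable z)
    rw [hderiv, deriv_add (h₁.differentiable.deriv z) (h₂.differentiable.deriv z),
      h₁.deriv_deriv, h₂.deriv_deriv, Pi.add_apply, mul_add]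

lemma const_smul (h : IsAirySolution w) (a : ℂ) : IsAirySolution (a • w) where
  differentiable := h.differentiable.const_smul a
  deriv_deriv z := by
    have hderiv : deriv (a • w) = a • deriv w := funext fun z ↦ deriv_const_smul_field a w
    rw [hderiv, deriv_const_smul_field, h.deriv_deriv, Pi.smul_apply, smul_eq_mul, smul_eq_mul,
      mul_left_comm]

lemma comp_mul_left (h : IsAirySolution w) {ω : ℂ} (hω : ω ^ 3 = 1) :
    IsAirySolution fun z ↦ w (ω * z) where
  differentiable := h.differentiable.comp (differentiable_id.const_mul ω)
  deriv_deriv z := by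
    have hderiv : deriv (fun z ↦ w (ω * z)) = ω • fun z ↦ deriv w (ω * z) :=
      funext fun z ↦ deriv_comp_mul_left ω w z
    rw [hderiv, deriv_const_smul_field, deriv_comp_mul_left, h.deriv_deriv]
    simp only [smul_eq_mul]
    linear_combination (z * w (ω * z)) * hω

lemma eq_zero (h : IsAirySolution w) {a : ℂ} (h0 : w a = 0) (h1 : deriv w a = 0) : w = 0 := by
  have hzero : ∀ᶠ z in 𝓝 a, w z = 0 :=
    eventually_eq_zero_of_deriv_deriv_eq_smul (h.differentiable.analyticAt a) analyticAt_id
      (.of_forall h.deriv_deriv) h0 h1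
  exact AnalyticOnNhd.eq_of_eventuallyEq (fun z _ ↦ h.differentiable.analyticAt z)
    (fun _ _ ↦ analyticAt_const) hzero

lemma map_mul_of_pow_three_eq_one (h : IsAirySolution w) (h0 : w 0 = 0) {ω : ℂ} (hω : ω ^ 3 = 1)
    (z : ℂ) : w (ω * z) = ω * w z := by
  have hrot := h.comp_mul_left hω
  have hdiff : IsAirySolution ((fun z ↦ w (ω * z)) + (-ω) • w) := hrot.add (h.const_smul (-ω))
  have hderiv : deriv ((fun z ↦ w (ω * z)) + (-ω) • w) 0 = 0 := by
    rw [deriv_add (hrot.differentiable 0) ((h.const_smul (-ω)).differentiable 0),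
      deriv_comp_mul_left, deriv_const_smul_field, mul_zero, neg_smul, add_neg_cancel]
  have hzero := congrFun (hdiff.eq_zero (by simp [h0]) hderiv) z
  simpa [← sub_eq_add_neg, sub_eq_zero] using hzero

lemma map_mul_exp_neg_pi_div_three_eq_zero (h : IsAirySolution w) (h0 : w 0 = 0) {r : ℂ}
    (hr : w (r * Complex.exp ((π / 3 : ℝ) * I)) = 0) :
    w (r * Complex.exp (-(π / 3 : ℝ) * I)) = 0 := by
  have hω : Complex.exp (-(2 * π / 3 : ℝ) * I) ^ 3 = 1 := by
    rw [← Complex.exp_nat_mul, Complex.exp_eq_one_iff]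
    exact ⟨-1, by push_cast; ring⟩
  have hrotate : r * Complex.exp (-(π / 3 : ℝ) * I) =
      Complex.exp (-(2 * π / 3 : ℝ) * I) * (r * Complex.exp ((π / 3 : ℝ) * I)) := by
    rw [mul_left_comm, ← Complex.exp_add]
    congr 2
    push_cast
    ring
  rw [hrotate, h.map_mul_of_pow_three_eq_one h0 hω, hr, mul_zero]

end IsAirySolution

/-- The restriction of `w` to the line `x ↦ c * (μ - I * x)`. When `w` solves the Airy equation, it
is the candidate eigenfunction of the model operator for `ε = c ^ 3` and the eigenvalue `μ`. The
scale `c` is allowed to be complex. -/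
def airyMode (w : ℂ → ℂ) (c μ : ℂ) (x : ℝ) : ℂ := w (c * (μ - I * x))

section airyMode

variable {w : ℂ → ℂ} {c μ : ℂ}

lemma contDiff_airyMode (hw : Differentiable ℂ w) {n : WithTop ℕ∞} :
    ContDiff ℝ n (airyMode w c μ) :=
  (hw.contDiff.restrict_scalars ℝ).comp <|
    contDiff_const.mul <| contDiff_const.sub <| contDiff_const.mul ofRealCLM.contDiff

lemma deriv_airyMode (hw : Differentiable ℂ w) :
    deriv (airyMode w c μ) = (-(c * I)) • airyMode (deriv w) c μ := by
  funext x
  have hline : HasDerivAt (fun z : ℂ ↦ c * (μ - I * z)) (-(c * I)) x := by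
    simpa using (((hasDerivAt_id (x : ℂ)).const_mul I).const_sub μ).const_mul c
  exact (((hw _).hasDerivAt.comp (x : ℂ) hline).comp_ofReal).deriv.trans (mul_comm _ _)

lemma deriv_deriv_airyMode (hw : Differentiable ℂ w) :
    deriv (deriv (airyMode w c μ)) = (-c ^ 2) • airyMode (deriv (deriv w)) c μ := by
  funext x
  rw [deriv_airyMode hw, deriv_const_smul_field, deriv_airyMode hw.deriv]
  simp only [Pi.smul_apply, smul_eq_mul]
  linear_combination c ^ 2 * airyMode (deriv (deriv w)) c μ x * I_sq

lemma exists_mem_airyMode_ne_zero (hw : Differentiable ℂ w) (hne : w ≠ 0) (hc : c ≠ 0) {s : Set ℝ}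
    {a : ℝ} (hs : s ∈ 𝓝 a) : ∃ x ∈ s, airyMode w c μ x ≠ 0 := by
  by_contra! hvanish
  have hline : (fun z : ℂ ↦ w (c * (μ - I * z))) = 0 :=
    eq_zero_of_eventually_ofReal_eq_zero (by fun_prop) (Filter.mem_of_superset hs hvanish)
  refine hne (funext fun z ↦ ?_)
  have hpreimage : c * (μ - I * (I * (z / c - μ))) = z := by
    field_simp
    linear_combination (c * μ - z) * I_sq
  simpa only [hpreimage, Pi.zero_apply] using congrFun hline (I * (z / c - μ))

lemma IsAirySolution.airyMode_eigenvalue_equation (hw : IsAirySolution w) (hc : c ≠ 0) (x : ℝ) :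
    -(c ^ 3)⁻¹ * deriv (deriv (airyMode w c μ)) x + I * x * airyMode w c μ x =
      μ * airyMode w c μ x := by
  have hderiv : deriv (deriv (airyMode w c μ)) x =
      -c ^ 2 * (c * (μ - I * x) * airyMode w c μ x) := by
    rw [deriv_deriv_airyMode hw.differentiable, Pi.smul_apply, smul_eq_mul, airyMode,
      hw.deriv_deriv, airyMode]
  rw [hderiv]
  field_simp
  ring

lemma IsAirySolution.isModelEigenvalue (hw : IsAirySolution w) (hne : w ≠ 0) (hc : c ≠ 0) {ε : ℝ}
    (hε : ε = c ^ 3) (hleft : airyMode w c μ (-1) = 0) (hright : airyMode w c μ 1 = 0) :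
    IsModelEigenvalue ε μ :=
  ⟨airyMode w c μ, contDiff_airyMode hw.differentiable,
    exists_mem_airyMode_ne_zero hw.differentiable hne hc (Icc_mem_nhds neg_one_lt_zero one_pos),
    fun x _ ↦ hε ▸ hw.airyMode_eigenvalue_equation hc x, hleft, hright⟩

end airyMode

section Endpoints

lemma sqrt_three_div_two_mul_add_I :
    (√3 / 2 : ℂ) * (1 / √3 + I) = Complex.exp ((π / 3 : ℝ) * I) := by
  rw [Complex.exp_mul_I, ← ofReal_cos, ← ofReal_sin, Real.cos_pi_div_three,
    Real.sin_pi_div_three]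
  push_cast
  field_simp

lemma sqrt_three_div_two_mul_sub_I :
    (√3 / 2 : ℂ) * (1 / √3 - I) = Complex.exp (-(π / 3 : ℝ) * I) := by
  simpa [← Complex.exp_conj, sub_eq_add_neg, conj_ofNat] using
    congrArg (starRingEnd ℂ) sqrt_three_div_two_mul_add_I

variable (w : ℂ → ℂ) (r : ℝ)

lemma airyMode_neg_one :
    airyMode w (√3 * r / 2 : ℝ) (1 / √3) (-1) = w (r * Complex.exp ((π / 3 : ℝ) * I)) := by
  rw [airyMode, ← sqrt_three_div_two_mul_add_I]
  push_cast
  ring_nf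

lemma airyMode_one :
    airyMode w (√3 * r / 2 : ℝ) (1 / √3) 1 = w (r * Complex.exp (-(π / 3 : ℝ) * I)) := by
  rw [airyMode, ← sqrt_three_div_two_mul_sub_I]
  push_cast
  ring_nf

end Endpoints

section Uminus

variable {Ai Bi : ℂ → ℂ}

lemma isAirySolution_Uminus (hAi : IsAiryAi Ai) (hBi : IsAiryBi Bi) :
    IsAirySolution (Uminus Ai Bi) :=
  (hAi.isAirySolution.const_smul (-(√3 : ℂ))).add hBi.isAirySolution

lemma Uminus_zero (hAi : IsAiryAi Ai) (hBi : IsAiryBi Bi) : Uminus Ai Bi 0 = 0 := by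
  obtain ⟨-, -, -, hAi0, -⟩ := hAi
  obtain ⟨-, -, -, hBi0, -⟩ := hBi
  have hpow : √3 * (3 : ℝ) ^ (-(2 : ℝ) / 3) = (3 : ℝ) ^ (-(1 : ℝ) / 6) := by
    rw [Real.sqrt_eq_rpow, ← Real.rpow_add three_pos]
    norm_num
  rw [Uminus, hAi0, hBi0, ← hpow]
  push_cast
  ring

lemma deriv_Uminus_zero_ne_zero (hAi : IsAiryAi Ai) (hBi : IsAiryBi Bi) :
    deriv (Uminus Ai Bi) 0 ≠ 0 := by
  obtain ⟨hAi, -, -, -, hAi0'⟩ := hAi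
  obtain ⟨hBi, -, -, -, hBi0'⟩ := hBi
  have hderiv : deriv (Uminus Ai Bi) 0 = -(√3 : ℂ) * deriv Ai 0 + deriv Bi 0 :=
    (((hAi 0).hasDerivAt.const_mul _).add (hBi 0).hasDerivAt).deriv
  have hpos : 0 < -√3 * (-(3 : ℝ) ^ (-(1 : ℝ) / 3) / Real.Gamma (1 / 3)) +
      (3 : ℝ) ^ ((1 : ℝ) / 6) / Real.Gamma (1 / 3) := by
    rw [neg_div, neg_mul_neg]
    positivity
  rw [hderiv, hAi0', hBi0']
  exact_mod_cast hpos.ne'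

lemma Uminus_ne_zero (hAi : IsAiryAi Ai) (hBi : IsAiryBi Bi) : Uminus Ai Bi ≠ 0 := by
  intro hzero
  refine deriv_Uminus_zero_ne_zero hAi hBi ?_
  rw [hzero, deriv_zero, Pi.zero_apply]

end Uminus

theorem explicit_eigenfunction_at_epsilon_general {w : ℂ → ℂ} (hw : IsAirySolution w)
    (h0 : w 0 = 0) (hne : w ≠ 0) {r : ℝ} (hr : r ∈ rayZeroModuli w) {ε : ℝ}
    (hε : ε = (√3 * r / 2) ^ 3) {y : ℝ → ℂ}
    (hy : y = fun x : ℝ ↦ w ((ε ^ ((1 : ℝ) / 3) : ℝ) * (1 / (√3 : ℂ) - I * x))) :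
    y (-1) = 0 ∧ y 1 = 0 ∧ (∃ x ∈ Set.Icc (-1 : ℝ) 1, y x ≠ 0) ∧
      (∀ x : ℝ, -(ε⁻¹ : ℂ) * deriv (deriv y) x + I * x * y x = (1 / (√3 : ℂ)) * y x) ∧
      IsModelEigenvalue ε (1 / (√3 : ℂ)) := by
  obtain ⟨hr_pos, hr_zero⟩ := hr
  have hc_pos : 0 < √3 * r / 2 := by positivity
  have hc : ((√3 * r / 2 : ℝ) : ℂ) ≠ 0 := ofReal_ne_zero.mpr hc_pos.ne'
  have hroot : ε ^ ((1 : ℝ) / 3) = √3 * r / 2 := by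
    simpa [hε] using Real.pow_rpow_inv_natCast hc_pos.le three_ne_zero
  have hcube : (ε : ℂ) = (√3 * r / 2 : ℝ) ^ 3 := by rw [hε, ofReal_pow]
  obtain rfl : y = airyMode w (√3 * r / 2 : ℝ) (1 / √3) := by rw [hy, hroot]; rfl
  have hleft := (airyMode_neg_one w r).trans hr_zero
  have hright := (airyMode_one w r).trans (hw.map_mul_exp_neg_pi_div_three_eq_zero h0 hr_zero)
  exact ⟨hleft, hright,
    exists_mem_airyMode_ne_zero hw.differentiable hne hc (Icc_mem_nhds neg_one_lt_zero one_pos),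
    fun x ↦ hcube ▸ hw.airyMode_eigenvalue_equation hc x,
    hw.isModelEigenvalue hne hc hcube hleft hright⟩

/-- For `ε_k = (√3·α_k/2)³` (where `(α k)` enumerates, increasingly, the moduli of the zeros
of `U₋` on the ray `arg z = π/3`, indexed from `0`), the function
`y(x) = U₋(ε_k^{1/3}(1/√3 − i x))` is an explicit eigenfunction of the model operator
`T(ε_k)` with eigenvalue `1/√3`. -/
theorem explicit_eigenfunction_at_epsilon (Ai Bi : ℂ → ℂ)
    (hAi : IsAiryAi Ai) (hBi : IsAiryBi Bi)
    (α : ℕ → ℝ) (hmono : StrictMono α)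
    (hrange : Set.range α = rayZeroModuli (Uminus Ai Bi)) (k : ℕ) :
    ∀ ε : ℝ, ε = (Real.sqrt 3 * α k / 2) ^ 3 →
    ∀ y : ℝ → ℂ, y = (fun x : ℝ =>
        Uminus Ai Bi (((ε ^ ((1:ℝ)/3) : ℝ) : ℂ) *
          (1 / (Real.sqrt 3 : ℂ) - Complex.I * (x : ℂ)))) →
      y (-1) = 0 ∧ y 1 = 0 ∧ (∃ x ∈ Set.Icc (-1 : ℝ) 1, y x ≠ 0) ∧
      (∀ x : ℝ, -(ε⁻¹ : ℂ) * deriv (deriv y) x + Complex.I * (x : ℂ) * y x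
        = (1 / (Real.sqrt 3 : ℂ)) * y x) ∧
      IsModelEigenvalue ε (1 / (Real.sqrt 3 : ℂ)) := by
  intro ε hε y hy
  exact explicit_eigenfunction_at_epsilon_general (isAirySolution_Uminus hAi hBi)
    (Uminus_zero hAi hBi) (Uminus_ne_zero hAi hBi) (hrange ▸ Set.mem_range_self k) hε hy
end
end

section
/- Let (α_k)_{k≥1} be the increasing enumeration of the moduli of the zeros of U₋ on the open ray arg z = π/3, and set ε_k = (√3·α_k/2)³. Then ε_k = (√3/4)·(3/2)³·(πk − π/12 + O(1/k))² as k → ∞; equivalently, there is a constant C > 0 such that |√(ε_k/((√3/4)·(3/2)³)) − (πk − π/12)| ≤ C/k for all k ≥ 1. -/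
open Complex MeasureTheory Real

noncomputable section

/-!
On the ray `arg z = π / 3` the function `U₋` solves `u'' = -r u` and vanishes at the origin, so in
the Liouville variable `x = (2 / 3) r ^ (3 / 2)` it is a multiple of `x ^ (1 / 3) J_{1 / 3}(x)`,
which is the real part of a Hankel function. More generally let `ν = 1 / 2 - μ` with `0 < μ < 1`.
The Hankel integral `H(x) = ∫₀^∞ e^{-s} s ^ (-μ) (x + i s / 2) ^ (-μ) ds` gives
`x ^ ν J_ν(x) = C Re (H(x) e^{i(x - (1 - μ) π / 2)})`, whose zeros are the points where the phase
`x - (1 - μ) π / 2 + arg H(x)` is an odd multiple of `π / 2`. The ratio of `H(x)` to its leading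
term `Γ(1 - μ) x ^ (-μ)` is `1 + O(1 / x)`, so `arg H(x) = O(1 / x)`. The phase is strictly
increasing for `x ≥ 1`, and all the zeros lie there, so the `k`-th zero has phase exactly
`(k - 1 / 2) π`; it is therefore `k π - μ π / 2 + O(1 / k)`, and `μ = 1 / 6` for `U₋`.
-/

open Set Filter Topology

theorem setIntegral_pos_of_forall_mem_pos {X : Type*} [MeasurableSpace X] {m : Measure X}
    {s : Set X} {f : X → ℝ} (hs : MeasurableSet s) (hm : m s ≠ 0) (hf : IntegrableOn f s m)
    (hpos : ∀ x ∈ s, 0 < f x) : 0 < ∫ x in s, f x ∂m := by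
  have hnonneg : 0 ≤ᵐ[m.restrict s] f := by
    filter_upwards [ae_restrict_mem hs] with x hx using (hpos x hx).le
  rw [setIntegral_pos_iff_support_of_nonneg_ae hnonneg hf,
    inter_eq_right.2 fun x hx => Function.mem_support.2 (hpos x hx).ne']
  exact pos_iff_ne_zero.2 hm

/-- The integrand `e^{-s} s ^ p` of `Γ(p + 1)`. -/
def gammaWeight (p s : ℝ) : ℝ := rexp (-s) * s ^ p

/-- The point `x + i s / 2` of the half-line `x + i [0, ∞)`. -/
def verticalRay (x s : ℝ) : ℂ := ⟨x, s / 2⟩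

/-- The Hankel-type integral `∫₀^∞ e^{-s} s ^ p (x + i s / 2) ^ c ds`. For `p = c = ν - 1 / 2` it is
`x ^ ν e^{-i x}` times the Hankel function `H_ν⁽¹⁾(x)`, up to a constant factor. -/
def hankelIntegral (p c x : ℝ) : ℂ :=
  ∫ s in Ioi (0 : ℝ), (gammaWeight p s : ℂ) * verticalRay x s ^ (c : ℂ)

section GammaWeight

variable {p s : ℝ}

lemma gammaWeight_pos (hs : 0 < s) : 0 < gammaWeight p s := by
  unfold gammaWeight; positivity

lemma gammaWeight_add_one (hs : 0 < s) : gammaWeight (p + 1) s = gammaWeight p s * s := by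
  rw [gammaWeight, gammaWeight, Real.rpow_add_one hs.ne', mul_assoc]

lemma integrableOn_gammaWeight (hp : -1 < p) : IntegrableOn (gammaWeight p) (Ioi 0) := by
  have h := Real.GammaIntegral_convergent (s := p + 1) (by linarith)
  rwa [add_sub_cancel_right] at h

lemma integral_gammaWeight (hp : -1 < p) :
    ∫ s in Ioi (0 : ℝ), gammaWeight p s = Real.Gamma (p + 1) := by
  simp [Real.Gamma_eq_integral (s := p + 1) (by linarith), gammaWeight]

lemma hasDerivAt_gammaWeight_add_one (hs : 0 < s) :
    HasDerivAt (gammaWeight (p + 1)) ((p + 1 - s) * gammaWeight p s) s := by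
  have hexp : HasDerivAt (fun s : ℝ => rexp (-s)) (-rexp (-s)) s := by
    simpa using (hasDerivAt_neg s).exp
  refine (hexp.mul (Real.hasDerivAt_rpow_const (Or.inl hs.ne'))).congr_deriv ?_
  rw [Real.rpow_add_one hs.ne', add_sub_cancel_right, gammaWeight]
  ring

lemma continuous_gammaWeight (hp : 0 ≤ p) : Continuous (gammaWeight p) :=
  (Real.continuous_exp.comp continuous_neg).mul (Real.continuous_rpow_const hp)

lemma tendsto_gammaWeight_atTop (p : ℝ) : Tendsto (gammaWeight p) atTop (𝓝 0) := by
  refine (tendsto_rpow_mul_exp_neg_mul_atTop_nhds_zero p 1 one_pos).congr fun s => ?_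
  rw [gammaWeight, neg_one_mul, mul_comm]

end GammaWeight

section VerticalRay

variable {x y s c : ℝ}

lemma verticalRay_eq (x s : ℝ) : verticalRay x s = x + (s / 2 : ℝ) * I :=
  Complex.mk_eq_add_mul_I _ _

lemma verticalRay_mem_slitPlane (hx : 0 < x) (s : ℝ) : verticalRay x s ∈ slitPlane := Or.inl hx

lemma verticalRay_ne_zero (x : ℝ) (hs : 0 < s) : verticalRay x s ≠ 0 := fun h =>
  hs.ne' (by simpa [verticalRay] using congrArg Complex.im h)

lemma continuous_verticalRay (x : ℝ) : Continuous (verticalRay x) := by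
  simp only [funext (verticalRay_eq x)]; fun_prop

lemma hasDerivAt_verticalRay_left (x s : ℝ) : HasDerivAt (fun x => verticalRay x s) 1 x := by
  simp only [verticalRay_eq]
  exact (Complex.ofRealCLM.hasDerivAt (x := x)).add_const _

lemma hasDerivAt_verticalRay_right (x s : ℝ) : HasDerivAt (verticalRay x) (I / 2) s := by
  have h := (((hasDerivAt_id s).div_const 2).ofReal_comp.mul_const I).const_add (x : ℂ)
  simp only [id, ← verticalRay_eq] at h
  refine h.congr_deriv ?_
  push_cast; ring

lemma arg_verticalRay_mem_Ioo (hx : 0 < x) (hs : 0 < s) :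
    (verticalRay x s).arg ∈ Ioo 0 (π / 2) := by
  have him : 0 < (verticalRay x s).im := half_pos hs
  refine ⟨lt_of_le_of_ne (Complex.arg_nonneg_iff.2 him.le) fun h => ?_,
    Complex.arg_lt_pi_div_two_iff.2 (Or.inl hx)⟩
  exact him.ne' (Complex.arg_eq_zero_iff.1 h.symm).2

lemma norm_verticalRay_cpow_le_re (hx : 0 < x) (hxy : x ≤ y) (hc : c ≤ 0) (s : ℝ) :
    ‖verticalRay y s ^ (c : ℂ)‖ ≤ x ^ c := by
  rw [Complex.norm_cpow_real]
  exact Real.rpow_le_rpow_of_nonpos hx (hxy.trans (Complex.re_le_norm (verticalRay y s))) hc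

lemma norm_verticalRay_cpow_le_im (x : ℝ) (hs : 0 < s) (hc : c ≤ 0) :
    ‖verticalRay x s ^ (c : ℂ)‖ ≤ (s / 2) ^ c := by
  rw [Complex.norm_cpow_real]
  exact Real.rpow_le_rpow_of_nonpos (half_pos hs)
    ((le_abs_self _).trans (Complex.abs_im_le_norm (verticalRay x s))) hc

lemma continuous_verticalRay_cpow (hx : 0 < x) (c : ℝ) :
    Continuous fun s => verticalRay x s ^ (c : ℂ) :=
  (continuous_verticalRay x).cpow continuous_const fun s => verticalRay_mem_slitPlane hx s

lemma hasDerivAt_cpow_sub_one {z : ℂ} (hz : z ∈ slitPlane) (c : ℝ) :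
    HasDerivAt (fun z => z ^ (c : ℂ)) (c * z ^ ((c - 1 : ℝ) : ℂ)) z := by
  simpa using (hasDerivAt_id z).cpow_const (c := (c : ℂ)) hz

lemma hasDerivAt_verticalRay_cpow_left (hx : 0 < x) (c s : ℝ) :
    HasDerivAt (fun x => verticalRay x s ^ (c : ℂ))
      (c * verticalRay x s ^ ((c - 1 : ℝ) : ℂ)) x := by
  simpa [Function.comp_def] using
    (hasDerivAt_cpow_sub_one (verticalRay_mem_slitPlane hx s) c).comp x
      (hasDerivAt_verticalRay_left x s)

lemma hasDerivAt_verticalRay_cpow_right (hx : 0 < x) (c s : ℝ) :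
    HasDerivAt (fun s => verticalRay x s ^ (c : ℂ))
      (c * verticalRay x s ^ ((c - 1 : ℝ) : ℂ) * (I / 2)) s :=
  (hasDerivAt_cpow_sub_one (verticalRay_mem_slitPlane hx s) c).comp s
    (hasDerivAt_verticalRay_right x s)

lemma verticalRay_cpow_eq_mul (hx : 0 < x) (c s : ℝ) :
    verticalRay x s ^ (c : ℂ) = verticalRay x s * verticalRay x s ^ ((c - 1 : ℝ) : ℂ) := by
  have hne := Complex.slitPlane_ne_zero (verticalRay_mem_slitPlane hx s)
  rw [Complex.ofReal_sub, Complex.ofReal_one, Complex.cpow_sub _ _ hne, Complex.cpow_one,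
    mul_div_cancel₀ _ hne]

lemma verticalRay_cpow_mul_exp (x c θ : ℝ) (hs : 0 < s) :
    verticalRay x s ^ (c : ℂ) * cexp (θ * I) =
      (‖verticalRay x s‖ ^ c : ℝ) * cexp ((θ + c * (verticalRay x s).arg : ℝ) * I) := by
  have hne := verticalRay_ne_zero x hs
  rw [Complex.cpow_def_of_ne_zero hne, Complex.log, Real.rpow_def_of_pos (norm_pos_iff.2 hne)]
  push_cast
  rw [← Complex.exp_add, ← Complex.exp_add]
  congr 1
  ring

lemma norm_verticalRay_cpow_sub_le (hx : 0 < x) (hs : 0 ≤ s) (hc : c ≤ 0) :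
    ‖verticalRay x s ^ (c : ℂ) - (x ^ c : ℝ)‖ ≤ |c| / 2 * x ^ (c - 1) * s := by
  have hbound : ∀ t ∈ Ico 0 s,
      ‖(c : ℂ) * verticalRay x t ^ ((c - 1 : ℝ) : ℂ) * (I / 2)‖ ≤ |c| / 2 * x ^ (c - 1) := by
    intro t _
    have h := norm_verticalRay_cpow_le_re hx le_rfl (by linarith : c - 1 ≤ 0) t
    calc _ = |c| / 2 * ‖verticalRay x t ^ ((c - 1 : ℝ) : ℂ)‖ := by
          simp only [norm_mul, Complex.norm_real, Real.norm_eq_abs, norm_div, Complex.norm_I,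
            RCLike.norm_ofNat]
          ring
      _ ≤ _ := by gcongr
  have h := norm_image_sub_le_of_norm_deriv_le_segment'
    (fun t _ => (hasDerivAt_verticalRay_cpow_right hx c t).hasDerivWithinAt) hbound s ⟨hs, le_rfl⟩
  have hzero : verticalRay x 0 = x := by simp [verticalRay, Complex.ext_iff]
  rwa [hzero, ← Complex.ofReal_cpow hx.le, sub_zero] at h

end VerticalRay

section HankelIntegral

variable {p c x : ℝ}

lemma aestronglyMeasurable_hankelIntegrand (hx : 0 < x) (hp : -1 < p) (c : ℝ) :
    AEStronglyMeasurable (fun s => (gammaWeight p s : ℂ) * verticalRay x s ^ (c : ℂ))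
      (volume.restrict (Ioi 0)) :=
  (integrableOn_gammaWeight hp).ofReal.aestronglyMeasurable.mul
    (continuous_verticalRay_cpow hx c).aestronglyMeasurable

lemma norm_gammaWeight_mul_le {s B : ℝ} {z : ℂ} (hs : 0 < s) (hz : ‖z‖ ≤ B) :
    ‖(gammaWeight p s : ℂ) * z‖ ≤ gammaWeight p s * B := by
  have hw := gammaWeight_pos (p := p) hs
  rw [norm_mul, Complex.norm_real, Real.norm_of_nonneg hw.le]
  gcongr

lemma integrableOn_hankelIntegrand (hx : 0 < x) (hp : -1 < p) (hc : c ≤ 0) :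
    IntegrableOn (fun s => (gammaWeight p s : ℂ) * verticalRay x s ^ (c : ℂ)) (Ioi 0) := by
  refine Integrable.mono' ((integrableOn_gammaWeight hp).mul_const (x ^ c))
    (aestronglyMeasurable_hankelIntegrand hx hp c) ?_
  filter_upwards [ae_restrict_mem measurableSet_Ioi] with s hs
  exact norm_gammaWeight_mul_le hs (norm_verticalRay_cpow_le_re hx le_rfl hc s)

lemma norm_hankelIntegral_le (hx : 0 < x) (hp : -1 < p) (hc : c ≤ 0) :
    ‖hankelIntegral p c x‖ ≤ Real.Gamma (p + 1) * x ^ c := by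
  rw [← integral_gammaWeight hp, ← integral_mul_const]
  refine norm_integral_le_of_norm_le ((integrableOn_gammaWeight hp).mul_const _) ?_
  filter_upwards [ae_restrict_mem measurableSet_Ioi] with s hs
  exact norm_gammaWeight_mul_le hs (norm_verticalRay_cpow_le_re hx le_rfl hc s)

lemma norm_hankelIntegral_sub_le (hx : 0 < x) (hp : -1 < p) (hc : c ≤ 0) :
    ‖hankelIntegral p c x - (Real.Gamma (p + 1) * x ^ c : ℝ)‖ ≤
      |c| / 2 * x ^ (c - 1) * Real.Gamma (p + 2) := by
  have hlead : IntegrableOn (fun s => (gammaWeight p s : ℂ) * (x ^ c : ℝ)) (Ioi 0) :=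
    (integrableOn_gammaWeight hp).ofReal.mul_const _
  have hmain : ((Real.Gamma (p + 1) * x ^ c : ℝ) : ℂ) =
      ∫ s in Ioi (0 : ℝ), (gammaWeight p s : ℂ) * (x ^ c : ℝ) := by
    rw [integral_mul_const, integral_complex_ofReal, integral_gammaWeight hp, Complex.ofReal_mul]
  have hGamma : |c| / 2 * x ^ (c - 1) * Real.Gamma (p + 2) =
      ∫ s in Ioi (0 : ℝ), |c| / 2 * x ^ (c - 1) * gammaWeight (p + 1) s := by
    rw [integral_const_mul, integral_gammaWeight (by linarith), add_assoc, one_add_one_eq_two]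
  rw [hmain, hGamma, hankelIntegral, ← integral_sub (integrableOn_hankelIntegrand hx hp hc) hlead]
  refine norm_integral_le_of_norm_le
    ((integrableOn_gammaWeight (by linarith)).const_mul _) ?_
  filter_upwards [ae_restrict_mem measurableSet_Ioi] with s hs
  rw [← mul_sub, gammaWeight_add_one hs, ← mul_assoc, mul_comm _ (gammaWeight p s), mul_assoc]
  refine (norm_gammaWeight_mul_le hs (norm_verticalRay_cpow_sub_le hx (le_of_lt hs) hc)).trans_eq ?_
  ring

lemma norm_hankelIntegral_div_sub_one_le (hx : 0 < x) (hp : -1 < p) (hc : c ≤ 0) :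
    ‖hankelIntegral p c x / (Real.Gamma (p + 1) * x ^ c : ℝ) - 1‖ ≤ |c| * (p + 1) / (2 * x) := by
  have hGamma : 0 < Real.Gamma (p + 1) := Real.Gamma_pos_of_pos (by linarith)
  have hpos : 0 < Real.Gamma (p + 1) * x ^ c := by positivity
  have hne : ((Real.Gamma (p + 1) * x ^ c : ℝ) : ℂ) ≠ 0 := by exact_mod_cast hpos.ne'
  have hrec : Real.Gamma (p + 2) = (p + 1) * Real.Gamma (p + 1) := by
    rw [← Real.Gamma_add_one (by linarith)]; ring_nf
  rw [div_sub_one hne, norm_div, Complex.norm_real, Real.norm_of_nonneg hpos.le, div_le_iff₀ hpos]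
  refine (norm_hankelIntegral_sub_le hx hp hc).trans_eq ?_
  rw [hrec, Real.rpow_sub_one hx.ne']
  field_simp

lemma hasDerivAt_hankelIntegral (hx : 0 < x) (hp : -1 < p) (hc : c ≤ 0) :
    HasDerivAt (hankelIntegral p c) (c * hankelIntegral p (c - 1) x) x := by
  have h := hasDerivAt_integral_of_dominated_loc_of_deriv_le (𝕜 := ℝ)
    (μ := volume.restrict (Ioi (0 : ℝ))) (s := Ioi (x / 2))
    (F := fun y s => (gammaWeight p s : ℂ) * verticalRay y s ^ (c : ℂ))
    (F' := fun y s => c * ((gammaWeight p s : ℂ) * verticalRay y s ^ ((c - 1 : ℝ) : ℂ)))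
    (bound := fun s => |c| * (gammaWeight p s * (x / 2) ^ (c - 1)))
    (Ioi_mem_nhds (half_lt_self hx)) ?_ (integrableOn_hankelIntegrand hx hp hc)
    ((aestronglyMeasurable_hankelIntegrand hx hp (c - 1)).const_mul _) ?_
    (((integrableOn_gammaWeight hp).mul_const _).const_mul _) ?_
  · exact h.2.congr_deriv (integral_const_mul _ _)
  · filter_upwards [Ioi_mem_nhds hx] with y hy
    exact aestronglyMeasurable_hankelIntegrand hy hp c
  · filter_upwards [ae_restrict_mem measurableSet_Ioi] with s hs y hy
    rw [norm_mul, Complex.norm_real, Real.norm_eq_abs]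
    gcongr
    exact norm_gammaWeight_mul_le hs
      (norm_verticalRay_cpow_le_re (half_pos hx) (le_of_lt hy) (by linarith) s)
  · refine Eventually.of_forall fun s y hy => ?_
    refine ((hasDerivAt_verticalRay_cpow_left ((half_pos hx).trans hy) c s).const_mul
      (gammaWeight p s : ℂ)).congr_deriv ?_
    ring

lemma hasDerivAt_gammaWeight_mul_verticalRay_cpow {s : ℝ} (hx : 0 < x) (p c : ℝ) (hs : 0 < s) :
    HasDerivAt (fun s => (gammaWeight (p + 1) s : ℂ) * verticalRay x s ^ ((c - 1 : ℝ) : ℂ))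
      (2 * I * ((gammaWeight p s : ℂ) * verticalRay x s ^ (c : ℂ)) +
        (p + c - 2 * I * x) * ((gammaWeight p s : ℂ) * verticalRay x s ^ ((c - 1 : ℝ) : ℂ)) -
        (c - 1) * x * ((gammaWeight p s : ℂ) * verticalRay x s ^ ((c - 1 - 1 : ℝ) : ℂ))) s := by
  refine ((hasDerivAt_gammaWeight_add_one hs).ofReal_comp.mul
    (hasDerivAt_verticalRay_cpow_right hx (c - 1) s)).congr_deriv ?_
  rw [gammaWeight_add_one hs, verticalRay_cpow_eq_mul hx c, verticalRay_cpow_eq_mul hx (c - 1)]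
  generalize verticalRay x s ^ ((c - 1 - 1 : ℝ) : ℂ) = q
  rw [verticalRay_eq]
  push_cast
  linear_combination (-(gammaWeight p s * q * (I * s ^ 2 / 2 + x * s) : ℂ)) * Complex.I_sq

lemma hankelIntegral_recurrence (hx : 0 < x) (hp : -1 < p) (hc : c ≤ 0) :
    2 * I * hankelIntegral p c x + (p + c - 2 * I * x) * hankelIntegral p (c - 1) x -
      (c - 1) * x * hankelIntegral p (c - 1 - 1) x = 0 := by
  have h₀ := (integrableOn_hankelIntegrand hx hp hc).const_mul (2 * I)
  have h₁ := (integrableOn_hankelIntegrand hx hp (by linarith : c - 1 ≤ 0)).const_mul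
    (p + c - 2 * I * x)
  have h₂ := (integrableOn_hankelIntegrand hx hp (by linarith : c - 1 - 1 ≤ 0)).const_mul
    ((c - 1) * x : ℂ)
  have hcont : Continuous fun s =>
      (gammaWeight (p + 1) s : ℂ) * verticalRay x s ^ ((c - 1 : ℝ) : ℂ) :=
    (Complex.continuous_ofReal.comp (continuous_gammaWeight (by linarith))).mul
      (continuous_verticalRay_cpow hx _)
  have hlim : Tendsto (fun s =>
      (gammaWeight (p + 1) s : ℂ) * verticalRay x s ^ ((c - 1 : ℝ) : ℂ)) atTop (𝓝 0) := by
    refine squeeze_zero_norm' ?_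
      (by simpa using (tendsto_gammaWeight_atTop (p + 1)).mul_const (x ^ (c - 1)))
    filter_upwards [eventually_gt_atTop 0] with s hs
    exact norm_gammaWeight_mul_le hs (norm_verticalRay_cpow_le_re hx le_rfl (by linarith) s)
  have hFTC := integral_Ioi_of_hasDerivAt_of_tendsto hcont.continuousWithinAt
    (fun s hs => hasDerivAt_gammaWeight_mul_verticalRay_cpow hx p c hs) ((h₀.add h₁).sub h₂) hlim
  rw [integral_sub (by exact h₀.add h₁) h₂, integral_add h₀ h₁, integral_const_mul,
    integral_const_mul, integral_const_mul] at hFTC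
  simpa [hankelIntegral, gammaWeight, Real.zero_rpow (by linarith : p + 1 ≠ 0)] using hFTC

lemma hankelIntegral_mul_exp_re_pos {θ : ℝ} (hx : 0 < x) (hp : -1 < p) (hc : c < 0)
    (hθ₁ : -(π / 2) - c * (π / 2) ≤ θ) (hθ₂ : θ ≤ π / 2) :
    0 < (hankelIntegral p c x * cexp (θ * I)).re := by
  -- Already the integrand lies in the open right half-plane.
  have hint := (integrableOn_hankelIntegrand hx hp hc.le).mul_const (cexp (θ * I))
  rw [hankelIntegral, ← integral_mul_const, ← Complex.reCLM_apply,
    ← Complex.reCLM.integral_comp_comm hint]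
  refine setIntegral_pos_of_forall_mem_pos measurableSet_Ioi (by simp)
    (Complex.reCLM.integrable_comp hint) fun s hs => ?_
  have harg := arg_verticalRay_mem_Ioo hx hs
  have hcos : 0 < Real.cos (θ + c * (verticalRay x s).arg) :=
    Real.cos_pos_of_mem_Ioo ⟨by nlinarith [harg.2], by nlinarith [harg.1]⟩
  have hnorm : 0 < ‖verticalRay x s‖ ^ c :=
    Real.rpow_pos_of_pos (norm_pos_iff.2 (verticalRay_ne_zero x hs)) c
  rw [mul_assoc, verticalRay_cpow_mul_exp x c θ hs, Complex.reCLM_apply, Complex.re_ofReal_mul,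
    Complex.re_ofReal_mul, Complex.exp_ofReal_mul_I_re]
  exact mul_pos (gammaWeight_pos hs) (mul_pos hnorm hcos)

lemma hankelIntegral_zero_mul_exp_re (p c : ℝ) :
    (hankelIntegral p c 0 * cexp ((-(π / 2) - c * (π / 2) : ℝ) * I)).re = 0 := by
  -- For `x = 0` the integrand has constant argument, and the exponential rotates it onto `-i ℝ⁺`.
  have hintegrand : ∀ s ∈ Ioi (0 : ℝ), (gammaWeight p s : ℂ) * verticalRay 0 s ^ (c : ℂ) *
      cexp ((-(π / 2) - c * (π / 2) : ℝ) * I) =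
      (gammaWeight p s * ‖verticalRay 0 s‖ ^ c : ℝ) * (-I) := fun s hs => by
    have harg : (verticalRay 0 s).arg = π / 2 :=
      Complex.arg_eq_pi_div_two_iff.2 ⟨rfl, half_pos hs⟩
    rw [mul_assoc, verticalRay_cpow_mul_exp 0 c _ hs, harg, sub_add_cancel]
    push_cast
    rw [← Complex.exp_neg_pi_div_two_mul_I]
    ring_nf
  rw [hankelIntegral, ← integral_mul_const, setIntegral_congr_fun measurableSet_Ioi hintegrand,
    integral_mul_const, integral_complex_ofReal]
  simp

lemma tendsto_hankelIntegral_zero (hpc : -1 < p + c) (hc : c ≤ 0) :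
    Tendsto (hankelIntegral p c) (𝓝[>] 0) (𝓝 (hankelIntegral p c 0)) := by
  have hdom : IntegrableOn (fun s => gammaWeight p s * (s / 2) ^ c) (Ioi 0) := by
    refine IntegrableOn.congr_fun ((integrableOn_gammaWeight hpc).div_const (2 ^ c))
      (fun s hs => ?_) measurableSet_Ioi
    rw [gammaWeight, gammaWeight, Real.rpow_add hs, Real.div_rpow (le_of_lt hs) zero_le_two]
    ring
  refine tendsto_integral_filter_of_dominated_convergence _ ?_ ?_ hdom ?_
  · filter_upwards [self_mem_nhdsWithin] with x hx
    exact aestronglyMeasurable_hankelIntegrand hx (by linarith) c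
  · refine Eventually.of_forall fun x => ?_
    filter_upwards [ae_restrict_mem measurableSet_Ioi] with s hs
    exact norm_gammaWeight_mul_le hs (norm_verticalRay_cpow_le_im x hs hc)
  · filter_upwards [ae_restrict_mem measurableSet_Ioi] with s hs
    have hmem : verticalRay 0 s ∈ slitPlane := Or.inr (half_pos hs).ne'
    refine ((hasDerivAt_verticalRay_left 0 s).continuousAt.tendsto.mono_left
      nhdsWithin_le_nhds |>.cpow tendsto_const_nhds hmem).const_mul _

end HankelIntegral

/-- The solution `H(x) e^{i(x - (1 - μ) π / 2)}` of `S'' = -S - (2 μ / x) S'`, where `H` is the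
Hankel integral with `p = c = -μ`. Its real part is a positive multiple of `x ^ ν J_ν(x)`,
`ν = 1 / 2 - μ`. -/
def hankelSolution (μ x : ℝ) : ℂ :=
  hankelIntegral (-μ) (-μ) x * cexp ((x - (1 - μ) * (π / 2) : ℝ) * I)

/-- The derivative of `hankelSolution μ`. -/
def hankelSolutionDeriv (μ x : ℝ) : ℂ :=
  (-μ * hankelIntegral (-μ) (-μ - 1) x + I * hankelIntegral (-μ) (-μ) x) *
    cexp ((x - (1 - μ) * (π / 2) : ℝ) * I)

/-- The phase of `hankelSolution μ`, continuous in `x` as long as the Hankel integral stays in the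
slit plane. -/
def hankelPhase (μ x : ℝ) : ℝ := x - (1 - μ) * (π / 2) + (hankelIntegral (-μ) (-μ) x).arg

lemma abs_arg_le_of_norm_div_sub_one_le {z : ℂ} {r δ : ℝ} (hr : 0 < r) (hz : ‖z / r - 1‖ ≤ δ)
    (hδ : δ ≤ 1 / 2) : |z.arg| ≤ 3 / 2 * δ := by
  have harg : z.arg = (Complex.log (1 + (z / r - 1))).im := by
    rw [add_sub_cancel, Complex.log_im, ← Complex.arg_real_mul (z / r) hr,
      mul_div_cancel₀ z (Complex.ofReal_ne_zero.2 hr.ne')]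
  calc |z.arg| ≤ ‖Complex.log (1 + (z / r - 1))‖ := harg ▸ Complex.abs_im_le_norm _
    _ ≤ 3 / 2 * ‖z / r - 1‖ := Complex.norm_log_one_add_half_le_self (hz.trans hδ)
    _ ≤ 3 / 2 * δ := by gcongr

section HankelSolution

variable {μ x : ℝ}

lemma hasDerivAt_cexp_sub_mul_I (a x : ℝ) :
    HasDerivAt (fun x : ℝ => cexp ((x - a : ℝ) * I)) (I * cexp ((x - a : ℝ) * I)) x := by
  have h := (((hasDerivAt_id x).sub_const a).ofReal_comp.mul_const I).cexp
  exact h.congr_deriv (by push_cast; simp only [id]; ring)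

lemma hasDerivAt_hankelSolution (hx : 0 < x) (hμ₀ : 0 ≤ μ) (hμ₁ : μ < 1) :
    HasDerivAt (hankelSolution μ) (hankelSolutionDeriv μ x) x := by
  refine ((hasDerivAt_hankelIntegral hx (neg_lt_neg hμ₁) (neg_nonpos.2 hμ₀)).mul
    (hasDerivAt_cexp_sub_mul_I ((1 - μ) * (π / 2)) x)).congr_deriv ?_
  rw [hankelSolutionDeriv]
  push_cast
  ring

lemma hasDerivAt_hankelSolutionDeriv (hx : 0 < x) (hμ₀ : 0 ≤ μ) (hμ₁ : μ < 1) :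
    HasDerivAt (hankelSolutionDeriv μ)
      (-hankelSolution μ x - (2 * μ / x : ℝ) * hankelSolutionDeriv μ x) x := by
  have hp : -1 < -μ := neg_lt_neg hμ₁
  have hc : -μ ≤ 0 := neg_nonpos.2 hμ₀
  refine ((((hasDerivAt_hankelIntegral hx hp (by linarith : -μ - 1 ≤ 0)).const_mul (-μ : ℂ)).add
    ((hasDerivAt_hankelIntegral hx hp hc).const_mul I)).mul
    (hasDerivAt_cexp_sub_mul_I ((1 - μ) * (π / 2)) x)).congr_deriv ?_
  have hrec := hankelIntegral_recurrence hx hp hc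
  have hx' : (x : ℂ) ≠ 0 := by exact_mod_cast hx.ne'
  simp only [hankelSolution, hankelSolutionDeriv, Pi.add_apply]
  generalize cexp ((x - (1 - μ) * (π / 2) : ℝ) * I) = E
  push_cast at hrec ⊢
  field_simp
  linear_combination (μ * E : ℂ) * hrec + (x * E * hankelIntegral (-μ) (-μ) x) * Complex.I_sq

lemma hankelSolution_re (μ x : ℝ) :
    (hankelSolution μ x).re = ‖hankelIntegral (-μ) (-μ) x‖ * Real.cos (hankelPhase μ x) := by
  have hpolar : hankelSolution μ x =
      ‖hankelIntegral (-μ) (-μ) x‖ * cexp ((hankelPhase μ x : ℝ) * I) := by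
    rw [hankelPhase, add_comm, Complex.ofReal_add, add_mul, Complex.exp_add, ← mul_assoc,
      Complex.norm_mul_exp_arg_mul_I, hankelSolution]
  rw [hpolar, Complex.re_ofReal_mul, Complex.exp_ofReal_mul_I_re]

lemma tendsto_hankelSolution_re_zero (hμ₀ : 0 ≤ μ) (hμ₁ : μ < 1 / 2) :
    Tendsto (fun x => (hankelSolution μ x).re) (𝓝[>] 0) (𝓝 0) := by
  have hexp := (hasDerivAt_cexp_sub_mul_I ((1 - μ) * (π / 2)) 0).continuousAt.tendsto.mono_left
    (nhdsWithin_le_nhds (s := Ioi 0))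
  have hlim := (Complex.continuous_re.tendsto _).comp ((tendsto_hankelIntegral_zero
    (by linarith : -1 < -μ + -μ) (neg_nonpos.2 hμ₀)).mul hexp)
  have hval := hankelIntegral_zero_mul_exp_re (-μ) (-μ)
  rw [show -(π / 2) - -μ * (π / 2) = 0 - (1 - μ) * (π / 2) by ring] at hval
  rwa [hval] at hlim

lemma lt_of_hankelSolution_re_eq_zero (hx : 0 < x) (hμ₀ : 0 < μ) (hμ₁ : μ < 1)
    (h : (hankelSolution μ x).re = 0) : π / 2 < x - (1 - μ) * (π / 2) := by
  by_contra! hle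
  exact (hankelIntegral_mul_exp_re_pos hx (neg_lt_neg hμ₁) (neg_lt_zero.2 hμ₀) (by linarith)
    hle).ne' h

lemma one_lt_of_hankelSolution_re_eq_zero (hx : 0 < x) (hμ₀ : 0 < μ) (hμ₁ : μ < 1)
    (h : (hankelSolution μ x).re = 0) : 1 < x := by
  have := lt_of_hankelSolution_re_eq_zero hx hμ₀ hμ₁ h
  nlinarith [Real.pi_gt_three]

lemma abs_arg_hankelIntegral_le (hx : 1 ≤ x) (hμ₀ : 0 ≤ μ) (hμ₁ : μ < 1) :
    |(hankelIntegral (-μ) (-μ) x).arg| ≤ 1 / (4 * x) := by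
  have hx₀ : 0 < x := one_pos.trans_le hx
  have hR : 0 < Real.Gamma (-μ + 1) * x ^ (-μ) :=
    mul_pos (Real.Gamma_pos_of_pos (by linarith)) (Real.rpow_pos_of_pos hx₀ _)
  have hδ : |-μ| * (-μ + 1) / (2 * x) ≤ 1 / (8 * x) := by
    rw [abs_neg, abs_of_nonneg hμ₀, div_le_div_iff₀ (by positivity) (by positivity)]
    nlinarith [mul_nonneg hx₀.le (sq_nonneg (2 * μ - 1))]
  have hsmall : 1 / (8 * x) ≤ 1 / 2 := by
    rw [div_le_div_iff₀ (by positivity) two_pos]; linarith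
  calc |(hankelIntegral (-μ) (-μ) x).arg| ≤ 3 / 2 * (1 / (8 * x)) :=
        abs_arg_le_of_norm_div_sub_one_le hR ((norm_hankelIntegral_div_sub_one_le hx₀
          (neg_lt_neg hμ₁) (neg_nonpos.2 hμ₀)).trans hδ) hsmall
    _ = 3 / 4 * (1 / (4 * x)) := by field_simp; norm_num
    _ ≤ 1 / (4 * x) := mul_le_of_le_one_left (by positivity) (by norm_num)

lemma abs_arg_hankelIntegral_le_quarter (hx : 1 ≤ x) (hμ₀ : 0 ≤ μ) (hμ₁ : μ < 1) :
    |(hankelIntegral (-μ) (-μ) x).arg| ≤ 1 / 4 :=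
  (abs_arg_hankelIntegral_le hx hμ₀ hμ₁).trans
    (one_div_le_one_div_of_le (by norm_num) (by linarith))

lemma mul_norm_hankelIntegral_sub_one_lt (hx : 1 ≤ x) (hμ₀ : 0 ≤ μ) (hμ₁ : μ < 1) :
    μ * ‖hankelIntegral (-μ) (-μ - 1) x‖ < ‖hankelIntegral (-μ) (-μ) x‖ := by
  have hx₀ : 0 < x := one_pos.trans_le hx
  have hp : -1 < -μ := neg_lt_neg hμ₁
  have hc : -μ ≤ 0 := neg_nonpos.2 hμ₀
  set R : ℝ := Real.Gamma (-μ + 1) * x ^ (-μ) with hRdef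
  have hR : 0 < R :=
    mul_pos (Real.Gamma_pos_of_pos (by linarith)) (Real.rpow_pos_of_pos hx₀ _)
  have hupper : ‖hankelIntegral (-μ) (-μ - 1) x‖ ≤ R / x := by
    rw [hRdef, mul_div_assoc, ← Real.rpow_sub_one hx₀.ne']
    exact norm_hankelIntegral_le hx₀ hp (by linarith)
  have hlower : 1 - μ * (1 - μ) / (2 * x) ≤ ‖hankelIntegral (-μ) (-μ) x‖ / R := by
    have hdiv := norm_hankelIntegral_div_sub_one_le hx₀ hp hc
    rw [← hRdef, abs_neg, abs_of_nonneg hμ₀] at hdiv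
    have htri := norm_sub_norm_le (1 : ℂ) (hankelIntegral (-μ) (-μ) x / R)
    rw [norm_sub_rev, norm_one, norm_div, Complex.norm_real, Real.norm_of_nonneg hR.le] at htri
    rw [show 1 - μ = -μ + 1 by ring]
    linarith
  have hgap : μ / x < 1 - μ * (1 - μ) / (2 * x) := by
    rw [lt_sub_iff_add_lt, div_add_div _ _ hx₀.ne' (by positivity), div_lt_one (by positivity)]
    nlinarith [mul_pos hx₀ (mul_pos (sub_pos.2 hμ₁) (by linarith : 0 < 2 - μ)),
      mul_nonneg hx₀.le (sub_nonneg.2 hx)]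
  calc μ * ‖hankelIntegral (-μ) (-μ - 1) x‖ ≤ μ * (R / x) := by gcongr
    _ = μ / x * R := by ring
    _ < ‖hankelIntegral (-μ) (-μ) x‖ := (lt_div_iff₀ hR).1 (hgap.trans_le hlower)

lemma norm_hankelIntegral_pos (hx : 1 ≤ x) (hμ₀ : 0 ≤ μ) (hμ₁ : μ < 1) :
    0 < ‖hankelIntegral (-μ) (-μ) x‖ :=
  (mul_nonneg hμ₀ (norm_nonneg _)).trans_lt (mul_norm_hankelIntegral_sub_one_lt hx hμ₀ hμ₁)

lemma hankelIntegral_mem_slitPlane (hx : 1 ≤ x) (hμ₀ : 0 ≤ μ) (hμ₁ : μ < 1) :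
    hankelIntegral (-μ) (-μ) x ∈ slitPlane := by
  refine Complex.mem_slitPlane_iff_arg.2 ⟨fun h => ?_,
    norm_pos_iff.1 (norm_hankelIntegral_pos hx hμ₀ hμ₁)⟩
  have := (le_abs_self _).trans (abs_arg_hankelIntegral_le_quarter hx hμ₀ hμ₁)
  linarith [Real.pi_gt_three]

lemma hasDerivAt_hankelPhase (hx : 1 ≤ x) (hμ₀ : 0 ≤ μ) (hμ₁ : μ < 1) :
    HasDerivAt (hankelPhase μ)
      (1 + (-μ * hankelIntegral (-μ) (-μ - 1) x / hankelIntegral (-μ) (-μ) x).im) x := by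
  have hlog := (hasDerivAt_hankelIntegral (one_pos.trans_le hx) (neg_lt_neg hμ₁)
    (neg_nonpos.2 hμ₀)).clog_real (hankelIntegral_mem_slitPlane hx hμ₀ hμ₁)
  have harg : HasDerivAt (fun x => (hankelIntegral (-μ) (-μ) x).arg)
      (-μ * hankelIntegral (-μ) (-μ - 1) x / hankelIntegral (-μ) (-μ) x).im x := by
    simpa only [Function.comp_def, Complex.imCLM_apply, Complex.log_im, Complex.ofReal_neg] using
      Complex.imCLM.hasFDerivAt.comp_hasDerivAt x hlog
  exact ((hasDerivAt_id x).sub_const _).add harg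

lemma strictMonoOn_hankelPhase (hμ₀ : 0 ≤ μ) (hμ₁ : μ < 1) :
    StrictMonoOn (hankelPhase μ) (Ici 1) := by
  refine strictMonoOn_of_deriv_pos (convex_Ici 1) (fun x hx =>
    (hasDerivAt_hankelPhase hx hμ₀ hμ₁).continuousAt.continuousWithinAt) fun x hx => ?_
  have hx' : 1 ≤ x := interior_subset hx
  rw [(hasDerivAt_hankelPhase hx' hμ₀ hμ₁).deriv]
  set q : ℂ := -μ * hankelIntegral (-μ) (-μ - 1) x / hankelIntegral (-μ) (-μ) x with hq
  have hlt : ‖q‖ < 1 := by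
    rw [hq, norm_div, norm_mul, norm_neg, Complex.norm_real, Real.norm_of_nonneg hμ₀,
      div_lt_one (norm_hankelIntegral_pos hx' hμ₀ hμ₁)]
    exact mul_norm_hankelIntegral_sub_one_lt hx' hμ₀ hμ₁
  linarith [neg_abs_le q.im, Complex.abs_im_le_norm q]

lemma image_hankelPhase_zeros (hμ₀ : 0 < μ) (hμ₁ : μ < 1) :
    hankelPhase μ '' {x | 0 < x ∧ (hankelSolution μ x).re = 0} =
      range fun k : ℕ => k * π + π / 2 := by
  have hπ := Real.pi_gt_three
  have harg : ∀ x, 1 ≤ x → |(hankelIntegral (-μ) (-μ) x).arg| ≤ 1 / 4 := fun x hx =>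
    abs_arg_hankelIntegral_le_quarter hx hμ₀.le hμ₁
  apply subset_antisymm
  · rintro _ ⟨x, ⟨hx, hzero⟩, rfl⟩
    have hlt := lt_of_hankelSolution_re_eq_zero hx hμ₀ hμ₁ hzero
    have hone := (one_lt_of_hankelSolution_re_eq_zero hx hμ₀ hμ₁ hzero).le
    rw [hankelSolution_re, mul_eq_zero,
      or_iff_right (norm_hankelIntegral_pos hone hμ₀.le hμ₁).ne', Real.cos_eq_zero_iff] at hzero
    obtain ⟨k, hk⟩ := hzero
    have hphase : 0 < hankelPhase μ x := by
      rw [hankelPhase]; linarith [(abs_le.1 (harg x hone)).1]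
    have hk₀ : 0 ≤ k := by
      by_contra! hneg
      have : (k : ℝ) ≤ -1 := by exact_mod_cast Int.le_sub_one_of_lt hneg
      nlinarith
    lift k to ℕ using hk₀
    exact ⟨k, by rw [hk]; push_cast; ring⟩
  · rintro _ ⟨k, rfl⟩
    have hkπ : 0 ≤ k * π := by positivity
    have hμπ : 0 < (1 - μ) * (π / 2) := by nlinarith
    have hμπ' : (1 - μ) * (π / 2) < π / 2 := by nlinarith
    have hone : 1 ≤ (k + 2) * π := by linarith
    have hleft : hankelPhase μ 1 ≤ k * π + π / 2 := by
      rw [hankelPhase]; linarith [(abs_le.1 (harg 1 le_rfl)).2]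
    have hright : k * π + π / 2 ≤ hankelPhase μ ((k + 2) * π) := by
      rw [hankelPhase]; linarith [(abs_le.1 (harg _ hone)).1]
    obtain ⟨x, hx, hphase⟩ := intermediate_value_Icc hone (fun y hy =>
      (hasDerivAt_hankelPhase hy.1 hμ₀.le hμ₁).continuousAt.continuousWithinAt) ⟨hleft, hright⟩
    refine ⟨x, ⟨one_pos.trans_le hx.1, ?_⟩, hphase⟩
    rw [hankelSolution_re, hphase, add_comm, Real.cos_add_nat_mul_pi, Real.cos_pi_div_two,
      mul_zero, mul_zero]

theorem abs_zero_hankelSolution_sub_le (hμ₀ : 0 < μ) (hμ₁ : μ < 1) {x : ℕ → ℝ} (hx : StrictMono x)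
    (hrange : range x = {x | 0 < x ∧ (hankelSolution μ x).re = 0}) (k : ℕ) :
    |x k - (π * (k + 1) - μ * (π / 2))| ≤ 1 / (k + 1) := by
  have hone : ∀ k, 1 ≤ x k := fun k => by
    obtain ⟨hpos, hzero⟩ := hrange.subset (mem_range_self k)
    exact (one_lt_of_hankelSolution_re_eq_zero hpos hμ₀ hμ₁ hzero).le
  have hphase : hankelPhase μ ∘ x = fun k : ℕ => k * π + π / 2 := by
    have hmono : StrictMono (hankelPhase μ ∘ x) := fun _ _ h =>
      strictMonoOn_hankelPhase hμ₀.le hμ₁ (hone _) (hone _) (hx h)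
    refine (hmono.range_inj fun m n h => by gcongr).1 ?_
    rw [range_comp, hrange, image_hankelPhase_zeros hμ₀ hμ₁]
  have hxk : x k - (π * (k + 1) - μ * (π / 2)) = -(hankelIntegral (-μ) (-μ) (x k)).arg := by
    have hk := congrFun hphase k
    simp only [Function.comp_apply, hankelPhase] at hk
    linarith
  have hlower : (k + 1 : ℝ) ≤ 4 * x k := by
    have harg := (abs_le.1 (abs_arg_hankelIntegral_le_quarter (hone k) hμ₀.le hμ₁)).2
    nlinarith [Real.pi_gt_three, mul_nonneg k.cast_nonneg (sub_nonneg.2 Real.pi_gt_three.le)]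
  rw [hxk, abs_neg]
  exact (abs_arg_hankelIntegral_le (hone k) hμ₀.le hμ₁).trans
    (one_div_le_one_div_of_le (by positivity) hlower)

end HankelSolution

/-- `u` solves `u'' = q u` on `S`, with derivative `u'` there. -/
structure SolvesLinearODEOn (q : ℝ → ℂ) (S : Set ℝ) (u u' : ℝ → ℂ) : Prop where
  hasDerivAt : ∀ t ∈ S, HasDerivAt u (u' t) t
  hasDerivAt_deriv : ∀ t ∈ S, HasDerivAt u' (q t * u t) t

namespace SolvesLinearODEOn

variable {q u u' v v' f f' : ℝ → ℂ} {S T : Set ℝ} {a : ℝ}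

lemma mono (hu : SolvesLinearODEOn q T u u') (hST : S ⊆ T) : SolvesLinearODEOn q S u u' :=
  ⟨fun t ht => hu.1 t (hST ht), fun t ht => hu.2 t (hST ht)⟩

lemma exists_wronskian_eq (hu : SolvesLinearODEOn q S u u') (hv : SolvesLinearODEOn q S v v')
    (hS : IsOpen S) (hS' : IsPreconnected S) :
    ∃ w : ℂ, ∀ t ∈ S, u t * v' t - u' t * v t = w := by
  have hderiv : ∀ t ∈ S, HasDerivAt (fun t => u t * v' t - u' t * v t) 0 t := fun t ht =>
    (((hu.1 t ht).mul (hv.2 t ht)).sub ((hu.2 t ht).mul (hv.1 t ht))).congr_deriv (by ring)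
  exact hS.exists_is_const_of_deriv_eq_zero hS'
    (fun t ht => (hderiv t ht).differentiableAt.differentiableWithinAt)
    fun t ht => (hderiv t ht).deriv

theorem exists_eq_const_mul (hf : SolvesLinearODEOn q (Ioi a) f f')
    (hu : SolvesLinearODEOn q univ u u') (hv : SolvesLinearODEOn q univ v v')
    (hf₀ : Tendsto f (𝓝[>] a) (𝓝 0)) (hu₀ : u a = 0) (hu₁ : u' a ≠ 0) (hv₀ : v a ≠ 0) :
    ∃ c : ℂ, ∀ t ∈ Ioi a, f t = c * u t := by
  obtain ⟨W, hW⟩ := hu.exists_wronskian_eq hv isOpen_univ isPreconnected_univ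
  obtain ⟨A, hA⟩ := hf.exists_wronskian_eq (hv.mono (subset_univ _)) isOpen_Ioi isPreconnected_Ioi
  obtain ⟨B, hB⟩ := hf.exists_wronskian_eq (hu.mono (subset_univ _)) isOpen_Ioi isPreconnected_Ioi
  have hW₀ : W ≠ 0 := by
    rw [← hW a trivial, hu₀, zero_mul, zero_sub]
    exact neg_ne_zero.2 (mul_ne_zero hu₁ hv₀)
  have hrel : ∀ t ∈ Ioi a, f t * W = u t * A - v t * B := fun t ht => by
    rw [← hW t trivial, ← hA t ht, ← hB t ht]; ring
  have hB₀ : B = 0 := by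
    have hright : Tendsto (fun t => u t * A - v t * B) (𝓝[>] a) (𝓝 (u a * A - v a * B)) :=
      (((hu.1 a trivial).continuousAt.mul_const A).sub
        ((hv.1 a trivial).continuousAt.mul_const B)).tendsto.mono_left nhdsWithin_le_nhds
    have heq := tendsto_nhds_unique_of_eventuallyEq (hf₀.mul_const W) hright
      (by filter_upwards [self_mem_nhdsWithin] with t ht using hrel t ht)
    simpa [hu₀, hv₀] using heq
  refine ⟨A / W, fun t ht => ?_⟩
  have h := hrel t ht
  rw [hB₀, mul_zero, sub_zero] at h
  rw [div_mul_eq_mul_div, eq_div_iff hW₀, h, mul_comm]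

end SolvesLinearODEOn

/-- The Liouville variable `(2 / 3) r ^ (3 / 2)` of the equation `u'' = -r u`. -/
def liouville (r : ℝ) : ℝ := 2 / 3 * r ^ (3 / 2 : ℝ)

/-- The real solution of `u'' = -r u` on `(0, ∞)` vanishing at the origin. -/
def airyRaySolution (r : ℝ) : ℝ := (hankelSolution (1 / 6) (liouville r)).re

/-- The derivative of `airyRaySolution`. -/
def airyRaySolutionDeriv (r : ℝ) : ℝ :=
  (hankelSolutionDeriv (1 / 6) (liouville r)).re * r ^ (1 / 2 : ℝ)

section Liouville

variable {r : ℝ}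

lemma liouville_pos (hr : 0 < r) : 0 < liouville r := by
  unfold liouville; positivity

lemma strictMonoOn_liouville : StrictMonoOn liouville (Ici 0) := fun _ hr _ _ h =>
  mul_lt_mul_of_pos_left (Real.rpow_lt_rpow hr h (by norm_num)) (by norm_num)

lemma exists_liouville_eq {x : ℝ} (hx : 0 < x) : ∃ r, 0 < r ∧ liouville r = x := by
  refine ⟨(3 / 2 * x) ^ (2 / 3 : ℝ), by positivity, ?_⟩
  rw [liouville, ← Real.rpow_mul (by positivity), show (2 / 3 * (3 / 2) : ℝ) = 1 by norm_num,
    Real.rpow_one]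
  ring

lemma hasDerivAt_liouville (hr : 0 < r) : HasDerivAt liouville (r ^ (1 / 2 : ℝ)) r := by
  refine ((Real.hasDerivAt_rpow_const (Or.inl hr.ne')).const_mul (2 / 3)).congr_deriv ?_
  norm_num; ring

lemma tendsto_liouville_zero : Tendsto liouville (𝓝[>] 0) (𝓝[>] 0) := by
  refine tendsto_nhdsWithin_iff.2 ⟨?_, ?_⟩
  · have hcont : ContinuousAt liouville 0 :=
      (Real.continuousAt_rpow_const _ _ (Or.inr (by norm_num))).const_mul _
    simpa [liouville] using hcont.tendsto.mono_left (nhdsWithin_le_nhds (s := Ioi 0))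
  · filter_upwards [self_mem_nhdsWithin] with r hr using liouville_pos hr

lemma tendsto_airyRaySolution_zero : Tendsto airyRaySolution (𝓝[>] 0) (𝓝 0) :=
  (tendsto_hankelSolution_re_zero (by norm_num) (by norm_num)).comp tendsto_liouville_zero

lemma exists_airyRaySolution_ne_zero : ∃ r, 0 < r ∧ airyRaySolution r ≠ 0 := by
  obtain ⟨r, hr, h⟩ := exists_liouville_eq one_pos
  refine ⟨r, hr, fun hzero => ?_⟩
  rw [airyRaySolution, h] at hzero
  exact (one_lt_of_hankelSolution_re_eq_zero one_pos (by norm_num) (by norm_num) hzero).false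

lemma hasDerivAt_airyRaySolution (hr : 0 < r) :
    HasDerivAt airyRaySolution (airyRaySolutionDeriv r) r := by
  have h := hasDerivAt_hankelSolution (liouville_pos hr) (by norm_num : (0 : ℝ) ≤ 1 / 6)
    (by norm_num)
  exact HasDerivAt.comp r (Complex.reCLM.hasFDerivAt.comp_hasDerivAt _ h) (hasDerivAt_liouville hr)

lemma hasDerivAt_airyRaySolutionDeriv (hr : 0 < r) :
    HasDerivAt airyRaySolutionDeriv (-r * airyRaySolution r) r := by
  have h := hasDerivAt_hankelSolutionDeriv (liouville_pos hr) (by norm_num : (0 : ℝ) ≤ 1 / 6)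
    (by norm_num)
  have hcomp := HasDerivAt.comp r (Complex.reCLM.hasFDerivAt.comp_hasDerivAt _ h)
    (hasDerivAt_liouville hr)
  refine (hcomp.mul (Real.hasDerivAt_rpow_const (p := 1 / 2) (Or.inl hr.ne'))).congr_deriv ?_
  have hsq : r ^ (1 / 2 : ℝ) * r ^ (1 / 2 : ℝ) = r := by
    rw [← Real.rpow_add hr, add_halves, Real.rpow_one]
  have hliouville : liouville r = 2 / 3 * (r * r ^ (1 / 2 : ℝ)) := by
    rw [liouville, ← Real.rpow_one_add' hr.le (by norm_num)]; norm_num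
  have hpos : 0 < r ^ (1 / 2 : ℝ) := by positivity
  simp only [Function.comp_apply, Complex.reCLM_apply, Complex.sub_re, Complex.neg_re,
    Complex.re_ofReal_mul, airyRaySolution, Real.rpow_sub_one hr.ne']
  generalize (hankelSolution (1 / 6) (liouville r)).re = a
  generalize (hankelSolutionDeriv (1 / 6) (liouville r)).re = b
  rw [hliouville]
  generalize r ^ (1 / 2 : ℝ) = q at *
  field_simp
  rw [← hsq]
  ring

lemma solvesLinearODEOn_airyRaySolution :
    SolvesLinearODEOn (fun t => -t) (Ioi 0) (fun t => (airyRaySolution t : ℂ))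
      fun t => (airyRaySolutionDeriv t : ℂ) where
  hasDerivAt _ ht := (hasDerivAt_airyRaySolution ht).ofReal_comp
  hasDerivAt_deriv _ ht :=
    (hasDerivAt_airyRaySolutionDeriv ht).ofReal_comp.congr_deriv (by push_cast; ring)

lemma sqrt_epsilon_eq_liouville (hr : 0 < r) :
    √((√3 * r / 2) ^ 3 / (√3 / 4 * (3 / 2) ^ 3)) = liouville r := by
  rw [Real.sqrt_eq_iff_mul_self_eq_of_pos (liouville_pos hr)]
  have hpow : r ^ (3 / 2 : ℝ) * r ^ (3 / 2 : ℝ) = r ^ 3 := by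
    rw [← Real.rpow_add hr, ← Real.rpow_natCast]; norm_num
  have hsqrt : √3 * √3 = 3 := Real.mul_self_sqrt (by norm_num)
  calc liouville r * liouville r = 4 / 9 * (r ^ (3 / 2 : ℝ) * r ^ (3 / 2 : ℝ)) := by
        rw [liouville]; ring
    _ = (√3 * r / 2) ^ 3 / (√3 / 4 * (3 / 2) ^ 3) := by
      rw [hpow, eq_div_iff (by positivity)]
      linear_combination (-(√3 * r ^ 3 / 8)) * hsqrt

end Liouville

section Airy

lemma IsAiry.solvesLinearODEOn_ray {w : ℂ → ℂ} {a b : ℝ} (h : IsAiry w a b) (ω : ℂ) :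
    SolvesLinearODEOn (fun t => ω ^ 3 * t) univ (fun t => w (t * ω))
      fun t => ω * deriv w (t * ω) := by
  obtain ⟨hw, hw', hode, -, -⟩ := h
  have hray : ∀ t : ℝ, HasDerivAt (fun t : ℝ => (t : ℂ) * ω) ω t := fun t => by
    simpa using (hasDerivAt_id t).ofReal_comp.mul_const ω
  refine ⟨fun t _ => ?_, fun t _ => ?_⟩
  · exact ((hw _).hasDerivAt.comp t (hray t)).congr_deriv (mul_comm _ _)
  · refine (((hw' _).hasDerivAt.comp t (hray t)).const_mul ω).congr_deriv ?_
    rw [hode]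
    ring

lemma IsAiry.ofReal_mul_add {w₁ w₂ : ℂ → ℂ} {a₁ b₁ a₂ b₂ : ℝ} (h₁ : IsAiry w₁ a₁ b₁)
    (h₂ : IsAiry w₂ a₂ b₂) (c : ℝ) :
    IsAiry (fun z => c * w₁ z + w₂ z) (c * a₁ + a₂) (c * b₁ + b₂) := by
  obtain ⟨hw₁, hw₁', hode₁, ha₁, hb₁⟩ := h₁
  obtain ⟨hw₂, hw₂', hode₂, ha₂, hb₂⟩ := h₂
  have hderiv : deriv (fun z => c * w₁ z + w₂ z) = fun z => c * deriv w₁ z + deriv w₂ z :=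
    funext fun z => (((hw₁ z).hasDerivAt.const_mul _).add (hw₂ z).hasDerivAt).deriv
  refine ⟨(hw₁.const_mul _).add hw₂, ?_, fun z => ?_, ?_, ?_⟩
  · rw [hderiv]; exact (hw₁'.const_mul _).add hw₂'
  · rw [hderiv]
    refine (((hw₁' z).hasDerivAt.const_mul _).add (hw₂' z).hasDerivAt).deriv.trans ?_
    rw [hode₁, hode₂]
    ring
  · simp only [ha₁, ha₂]; push_cast; rfl
  · simp only [hderiv, hb₁, hb₂]; push_cast; rfl

variable {Ai Bi : ℂ → ℂ}

lemma IsAiryAi.apply_zero_ne_zero (hAi : IsAiryAi Ai) : Ai 0 ≠ 0 := by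
  rw [hAi.2.2.2.1, Complex.ofReal_ne_zero]
  positivity

lemma isAiry_Uminus (hAi : IsAiryAi Ai) (hBi : IsAiryBi Bi) :
    IsAiry (Uminus Ai Bi) 0 (2 * 3 ^ (1 / 6 : ℝ) / Real.Gamma (1 / 3)) := by
  have h₀ : √3 * (3 : ℝ) ^ (-(2 : ℝ) / 3) = 3 ^ (-(1 : ℝ) / 6) := by
    rw [Real.sqrt_eq_rpow, ← Real.rpow_add three_pos]; norm_num
  have h₁ : √3 * (3 : ℝ) ^ (-(1 : ℝ) / 3) = 3 ^ ((1 : ℝ) / 6) := by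
    rw [Real.sqrt_eq_rpow, ← Real.rpow_add three_pos]; norm_num
  convert IsAiry.ofReal_mul_add hAi hBi (-√3) using 1
  · funext z; rw [Uminus, Complex.ofReal_neg]
  · rw [← h₀]; ring
  · rw [← h₁]; ring

lemma Uminus_ray_eq_zero_iff (hAi : IsAiryAi Ai) (hBi : IsAiryBi Bi) {r : ℝ} (hr : 0 < r) :
    Uminus Ai Bi (r * cexp ((π / 3 : ℝ) * I)) = 0 ↔ airyRaySolution r = 0 := by
  have hU := isAiry_Uminus hAi hBi
  have hω : cexp ((π / 3 : ℝ) * I) ≠ 0 := Complex.exp_ne_zero _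
  have hω₃ : cexp ((π / 3 : ℝ) * I) ^ 3 = -1 := by
    rw [← Complex.exp_nat_mul, ← Complex.exp_pi_mul_I]
    push_cast
    ring_nf
  generalize cexp ((π / 3 : ℝ) * I) = ω at *
  have hUray := hU.solvesLinearODEOn_ray ω
  have hAray := IsAiry.solvesLinearODEOn_ray hAi ω
  simp only [hω₃, neg_one_mul] at hUray hAray
  have hU₁ : deriv (Uminus Ai Bi) 0 ≠ 0 := by
    rw [hU.2.2.2.2, Complex.ofReal_ne_zero]
    positivity
  have hlim : Tendsto (fun t => (airyRaySolution t : ℂ)) (𝓝[>] 0) (𝓝 0) := by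
    simpa using tendsto_airyRaySolution_zero.ofReal
  obtain ⟨c, hc⟩ := solvesLinearODEOn_airyRaySolution.exists_eq_const_mul hUray hAray hlim
    (by simp [hU.2.2.2.1]) (by simpa using ⟨hω, hU₁⟩) (by simpa using hAi.apply_zero_ne_zero)
  have hc₀ : c ≠ 0 := by
    rintro rfl
    obtain ⟨t, ht, hne⟩ := exists_airyRaySolution_ne_zero
    exact hne (by simpa using hc t ht)
  rw [← Complex.ofReal_eq_zero, hc r hr, mul_eq_zero, or_iff_right hc₀]

lemma image_liouville_rayZeroModuli (hAi : IsAiryAi Ai) (hBi : IsAiryBi Bi) :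
    liouville '' rayZeroModuli (Uminus Ai Bi) =
      {x | 0 < x ∧ (hankelSolution (1 / 6) x).re = 0} := by
  ext x
  constructor
  · rintro ⟨r, ⟨hr, hzero⟩, rfl⟩
    exact ⟨liouville_pos hr, (Uminus_ray_eq_zero_iff hAi hBi hr).1 hzero⟩
  · rintro ⟨hx, hzero⟩
    obtain ⟨r, hr, rfl⟩ := exists_liouville_eq hx
    exact ⟨r, ⟨hr, (Uminus_ray_eq_zero_iff hAi hBi hr).2 hzero⟩, rfl⟩

end Airy

/-- Asymptotics of the critical values `ε_k = (√3·α_k/2)³`: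
`ε_k = (√3/4)(3/2)³(πk − π/12 + O(1/k))²` as `k → ∞` (here `α` enumerates the moduli
of the zeros of `U₋` on the ray `arg z = π/3` increasingly, indexed from `0`,
so `α (k-1)` is the paper's `α_k`). -/
theorem epsilon_asymptotics (Ai Bi : ℂ → ℂ)
    (hAi : IsAiryAi Ai) (hBi : IsAiryBi Bi)
    (α : ℕ → ℝ) (hmono : StrictMono α)
    (hrange : Set.range α = rayZeroModuli (Uminus Ai Bi)) :
    ∃ C : ℝ, 0 < C ∧ ∀ k : ℕ,
      |Real.sqrt ((Real.sqrt 3 * α k / 2) ^ 3 / (Real.sqrt 3 / 4 * (3 / 2) ^ 3))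
        - (π * (k + 1) - π / 12)| ≤ C / (k + 1) := by
  have hpos : ∀ k, 0 < α k := fun k => (hrange.subset (mem_range_self k)).1
  have hmono' : StrictMono (liouville ∘ α) := fun j k h =>
    strictMonoOn_liouville (hpos j).le (hpos k).le (hmono h)
  have hzeros : range (liouville ∘ α) = {x | 0 < x ∧ (hankelSolution (1 / 6) x).re = 0} := by
    rw [range_comp, hrange, image_liouville_rayZeroModuli hAi hBi]
  refine ⟨1, one_pos, fun k => ?_⟩
  have h := abs_zero_hankelSolution_sub_le (by norm_num) (by norm_num) hmono' hzeros k
  rwa [Function.comp_apply, show (1 / 6 : ℝ) * (π / 2) = π / 12 by ring,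
    ← sqrt_epsilon_eq_liouville (hpos k)] at h
end
end
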